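/- arXiv:1106.4714 — 2 statements merged into one kernel-verified Lean document; each statement's English description precedes it below -/
import Mathlib

section
/- For every β ≥ 0, c ≥ 0, N ∈ ℕ, and every discrete random spin structure 𝓛 ∈ 𝒮, the quenched pressure satisfies the replica symmetry breaking bound p_N(β,c) ≤ G_N^(1)(β,c,𝓛) − G_N^(2)(β,c,𝓛). -/
open MeasureTheory Filter

/-- Poisson probability mass function with parameter `lam`. -/
noncomputable def poissonPMF (lam : ℝ) (k : ℕ) : ℝ :=
  Real.exp (-lam) * lam ^ k / (Nat.factorial k)

/-- Potts Hamiltonian `H_N(σ, J) = Σ_{i,j} J_{ij} δ(σ_i, σ_j)`. -/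
noncomputable def potts.H (q N : ℕ) (σ : Fin N → Fin q) (J : Fin N → Fin N → ℝ) : ℝ :=
  ∑ i, ∑ j, J i j * (if σ i = σ j then (1 : ℝ) else 0)

/-- Partition function `Z_N(J)`. -/
noncomputable def potts.Z (q N : ℕ) (J : Fin N → Fin N → ℝ) : ℝ :=
  ∑ σ : Fin N → Fin q, Real.exp (- potts.H q N σ J)

/-- Expectation over the Poissonian disorder: the entries `J_{ij}` are independent
Poisson random variables with means `c_{ij} / (2N)`. -/
noncomputable def potts.E (N : ℕ) (c : Fin N → Fin N → ℝ)
    (g : (Fin N → Fin N → ℕ) → ℝ) : ℝ :=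
  ∑' J : Fin N → Fin N → ℕ,
    (∏ i, ∏ j, poissonPMF (c i j / (2 * N)) (J i j)) * g J

/-- Quenched pressure for a general nonnegative connectivity matrix `c`. -/
noncomputable def potts.pmat (q N : ℕ) (β : ℝ) (c : Fin N → Fin N → ℝ) : ℝ :=
  potts.E N c (fun J => (1 / N) * Real.log (potts.Z q N (fun i j => β * (J i j : ℝ))))

/-- Quenched pressure for the constant connectivity matrix `c_{ij} ≡ c`. -/
noncomputable def potts.p (q N : ℕ) (β c : ℝ) : ℝ :=
  potts.pmat q N β (fun _ _ => c)

/-- Annealed pressure `𝒫(β, c) = ln q + (c/2) ln(1 - (1 - e^{-β})/q)`. -/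
noncomputable def potts.annealed (q : ℕ) (β c : ℝ) : ℝ :=
  Real.log q + (c / 2) * Real.log (1 - (1 - Real.exp (-β)) / q)

/-- The space `Δ × [q]^{ℕ×ℕ}` of (weights, replicas); `Δ`-membership is imposed
via the measure below. -/
abbrev SpinStruct (q : ℕ) := (ℕ → ℝ) × (ℕ → ℕ → Fin q)

/-- A discrete random spin structure: a Borel probability measure on
`Δ × [q]^{ℕ×ℕ}` concentrated on `Δ₁` (nonnegative, nonincreasing weights summing
to one), invariant under the simultaneous action on all replicas of every
finitely supported bijection of the spin index. -/
def IsRSS (q : ℕ) (L : Measure (SpinStruct q)) : Prop :=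
  IsProbabilityMeasure L ∧
  L {p : SpinStruct q | (∀ n, 0 ≤ p.1 n) ∧ Antitone p.1 ∧ HasSum p.1 1} = 1 ∧
  ∀ π : Equiv.Perm ℕ, {n | π n ≠ n}.Finite →
    Measure.map (fun p : SpinStruct q => (p.1, fun α k => p.2 α (π k))) L = L

/-- The interaction term `G_N^{(1)}(β, c, 𝓛)` of the cavity field functional. -/
noncomputable def G1 (q N : ℕ) (β c : ℝ) (L : Measure (SpinStruct q)) : ℝ :=
  ∫ p, (∑' k : ℕ, (poissonPMF (c * N) k / (N : ℝ) ^ k) *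
    ∑ I : Fin k → Fin N, (1 / (N : ℝ)) *
      Real.log (∑' α : ℕ, p.1 α *
        ∑ σ : Fin N → Fin q, Real.exp (-β *
          ∑ i : Fin k, (if p.2 α i.1 = σ (I i) then (1 : ℝ) else 0)))) ∂L

/-- The self-energy term `G_N^{(2)}(β, c, 𝓛)` of the cavity field functional. -/
noncomputable def G2 (q N : ℕ) (β c : ℝ) (L : Measure (SpinStruct q)) : ℝ :=
  ∫ p, (∑' K : ℕ, (poissonPMF (c * N / 2) K / (N : ℝ)) *
    Real.log (∑' α : ℕ, p.1 α *
      Real.exp (-β * ∑ k : Fin K,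
        (if p.2 α (2 * k.1) = p.2 α (2 * k.1 + 1) then (1 : ℝ) else 0)))) ∂L

/-!
Adding an edge `(u, v)` to a graph multiplies its partition function by
`1 - (1 - e^{-β}) ⟨δ(u, v)⟩`, and the Gibbs average `⟨δ⟩` of the spin overlap is a positive
semidefinite kernel in the sites. Since `-log (1 - x)` has nonnegative Taylor coefficients, the
Schur product theorem shows that the new log-partition function is a conditionally negative definite
kernel in `(u, v)`. Testing it against the difference of the uniform measures on the `N` system
sites and on `M` fresh cavity sites, with `M → ∞` and exchangeability of the cavity spins, gives
`system edge + cavity pair ≤ 2 · (system–cavity edge)` for the mean pressures, whatever edges are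
already present. Iterating `n` times replaces `n` system–cavity edges by system edges and cavity
pairs with binomial weights; averaging over a Poisson variable `n` turns these weights into
independent Poisson numbers of system edges and of cavity pairs, each of mean `cN/2`, against a
Poisson number of system–cavity edges of mean `cN`. This is `p_N + G_N^{(2)} ≤ G_N^{(1)}`.
-/

open scoped BigOperators

namespace RSB

section Kernels

variable {ι X S : Type*}

lemma posSemidef_of_hasSum {K : X → Matrix ι ι ℝ} {A : Matrix ι ι ℝ}
    (hK : ∀ x, (K x).PosSemidef) (hA : ∀ i j, HasSum (fun x => K x i j) (A i j)) :
    A.PosSemidef := by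
  refine ⟨Matrix.IsHermitian.ext fun i j => (hA j i).unique ?_, fun c => ?_⟩
  · exact (hA i j).congr_fun fun x => (hK x).isHermitian.apply i j
  · exact (hasSum_sum fun i _ => hasSum_sum fun j _ =>
      ((hA i j).mul_left (star (c i))).mul_right (c j)).nonneg fun x => (hK x).2 c

lemma posSemidef_map_pow {A : Matrix ι ι ℝ} (hA : A.PosSemidef) (n : ℕ) :
    (A.map (· ^ (n + 1))).PosSemidef := by
  induction n with
  | zero => simpa using hA
  | succ n ih => exact (funext₂ fun i j => pow_succ (A i j) (n + 1) :
      A.map (· ^ (n + 1 + 1)) = (A.map (· ^ (n + 1))).hadamard A) ▸ ih.hadamard hA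

lemma posSemidef_neg_log_one_sub {A : Matrix ι ι ℝ} (hA : A.PosSemidef)
    (hA_lt : ∀ i j, |A i j| < 1) :
    (Matrix.of fun i j => -Real.log (1 - A i j)).PosSemidef := by
  refine posSemidef_of_hasSum (K := fun n : ℕ => ((n : ℝ) + 1)⁻¹ • A.map (· ^ (n + 1)))
    (fun n => (posSemidef_map_pow hA n).smul (by positivity)) fun i j => ?_
  refine (Real.hasSum_pow_div_log_of_abs_lt_one (hA_lt i j)).congr_fun fun n => ?_
  simp [div_eq_inv_mul]

variable [DecidableEq S]

/-- The overlap of the `S`-valued functions `f u` and `f v`: the total `w`-weight of the points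
at which they agree. -/
noncomputable def overlap (w : X → ℝ) (f : ι → X → S) : Matrix ι ι ℝ :=
  Matrix.of fun u v => ∑' x, w x * if f u x = f v x then 1 else 0

variable {w : X → ℝ}

lemma summable_overlap (hw : ∀ x, 0 ≤ w x) (hsum : Summable w) (f : ι → X → S) (u v : ι) :
    Summable fun x => w x * if f u x = f v x then (1 : ℝ) else 0 :=
  hsum.of_nonneg_of_le (fun x => mul_nonneg (hw x) (by split_ifs <;> norm_num))
    fun x => mul_le_of_le_one_right (hw x) (by split_ifs <;> norm_num)

lemma overlap_nonneg (hw : ∀ x, 0 ≤ w x) (f : ι → X → S) (u v : ι) : 0 ≤ overlap w f u v :=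
  tsum_nonneg fun x => mul_nonneg (hw x) (by split_ifs <;> norm_num)

lemma overlap_le_tsum (hw : ∀ x, 0 ≤ w x) (hsum : Summable w) (f : ι → X → S) (u v : ι) :
    overlap w f u v ≤ ∑' x, w x :=
  (summable_overlap hw hsum f u v).tsum_le_tsum
    (fun x => mul_le_of_le_one_right (hw x) (by split_ifs <;> norm_num)) hsum

lemma posSemidef_overlap (hw : ∀ x, 0 ≤ w x) (hsum : Summable w) (f : ι → X → S) :
    (overlap w f).PosSemidef :=
  posSemidef_of_hasSum
    (K := fun x => w x • (1 : Matrix S S ℝ).submatrix (fun u => f u x) fun u => f u x)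
    (fun x => (Matrix.PosSemidef.one.submatrix _).smul (hw x))
    fun u v => (summable_overlap hw hsum f u v).hasSum.congr_fun fun x => by
      simp [Matrix.one_apply]

lemma tsum_mul_exp_agreement (hw : ∀ x, 0 ≤ w x) (hsum : Summable w) (β : ℝ) (f : ι → X → S)
    (u v : ι) : ∑' x, w x * Real.exp (-β * if f u x = f v x then 1 else 0)
      = ∑' x, w x - (1 - Real.exp (-β)) * overlap w f u v := by
  have hsplit (x : X) : w x * Real.exp (-β * if f u x = f v x then 1 else 0)
      = w x - (1 - Real.exp (-β)) * (w x * if f u x = f v x then 1 else 0) := by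
    split_ifs <;> simp only [mul_one, mul_zero, Real.exp_zero] <;> ring
  rw [tsum_congr hsplit, hsum.tsum_sub ((summable_overlap hw hsum f u v).mul_left _),
    tsum_mul_left, overlap, Matrix.of_apply]

end Kernels

section CondNegDef

variable {ι κ X S : Type*} [Fintype ι] [Fintype κ]

/-- Conditionally negative definite kernels: symmetric, and nonpositive as a quadratic form on
the vectors of total mass zero. -/
structure CondNegDef (K : Matrix ι ι ℝ) : Prop where
  isSymm : K.IsSymm
  sum_nonpos : ∀ c : ι → ℝ, ∑ i, c i = 0 → ∑ i, ∑ j, c i * c j * K i j ≤ 0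

lemma condNegDef_const_sub {A : Matrix ι ι ℝ} (hA : A.PosSemidef) (r : ℝ) :
    CondNegDef (Matrix.of fun i j => r - A i j) := by
  refine ⟨Matrix.IsSymm.ext fun i j => ?_, fun c hc => ?_⟩
  · simpa using (hA.isHermitian.apply j i).symm
  have hquad : 0 ≤ ∑ i, ∑ j, c i * c j * A i j := by
    refine (hA.dotProduct_mulVec_nonneg c).trans_eq ?_
    simp only [dotProduct, Matrix.mulVec, Finset.mul_sum, Pi.star_apply, star_trivial]
    exact Finset.sum_congr rfl fun i _ => Finset.sum_congr rfl fun j _ => by ring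
  have hconst : ∑ i, ∑ j, c i * c j * r = 0 := by
    simp only [← Finset.sum_mul, ← Finset.mul_sum, hc, mul_zero, zero_mul, Finset.sum_const_zero]
  simp only [Matrix.of_apply, mul_sub, Finset.sum_sub_distrib, hconst]
  linarith

lemma condNegDef_log_tsum_exp [DecidableEq S] {w : X → ℝ} {T β : ℝ} (hw : ∀ x, 0 ≤ w x)
    (hsum : HasSum w T) (hT : 0 < T) (hβ : 0 ≤ β) (f : ι → X → S) :
    CondNegDef (Matrix.of fun u v =>
      Real.log (∑' x, w x * Real.exp (-β * if f u x = f v x then 1 else 0))) := by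
  set r := (1 - Real.exp (-β)) / T
  have hr_nonneg : 0 ≤ r := div_nonneg (by simpa using hβ) hT.le
  have hrT : r * T = 1 - Real.exp (-β) := div_mul_cancel₀ _ hT.ne'
  have hr_lt (u v : ι) : r * overlap w f u v < 1 := by
    have hle := (overlap_le_tsum hw hsum.summable f u v).trans_eq hsum.tsum_eq
    linarith [mul_le_mul_of_nonneg_left hle hr_nonneg, Real.exp_pos (-β)]
  have htsum (u v : ι) : ∑' x, w x * Real.exp (-β * if f u x = f v x then 1 else 0)
      = T * (1 - r * overlap w f u v) := by
    rw [tsum_mul_exp_agreement hw hsum.summable, hsum.tsum_eq, ← hrT]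
    ring
  convert condNegDef_const_sub (posSemidef_neg_log_one_sub
    ((posSemidef_overlap hw hsum.summable f).smul hr_nonneg) fun u v => ?_) (Real.log T) using 1
  · ext u v
    simp only [Matrix.of_apply, Matrix.smul_apply, smul_eq_mul, htsum, sub_neg_eq_add]
    exact Real.log_mul hT.ne' (sub_pos.2 (hr_lt u v)).ne'
  · rw [Matrix.smul_apply, smul_eq_mul,
      abs_of_nonneg (mul_nonneg hr_nonneg (overlap_nonneg hw f u v))]
    exact hr_lt u v

lemma condNegDef_integral {Ω : Type*} [MeasurableSpace Ω] {μ : Measure Ω}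
    {K : Ω → Matrix ι ι ℝ} (hK : ∀ᵐ ω ∂μ, CondNegDef (K ω))
    (hint : ∀ i j, Integrable (fun ω => K ω i j) μ) :
    CondNegDef (Matrix.of fun i j => ∫ ω, K ω i j ∂μ) := by
  refine ⟨Matrix.IsSymm.ext fun i j => integral_congr_ae ?_, fun c hc => ?_⟩
  · filter_upwards [hK] with ω hω using hω.isSymm.apply i j
  have hswap : ∑ i, ∑ j, c i * c j * ∫ ω, K ω i j ∂μ
      = ∫ ω, ∑ i, ∑ j, c i * c j * K ω i j ∂μ := by
    simp only [← integral_const_mul]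
    rw [integral_finsetSum _ fun i _ => integrable_finsetSum _ fun j _ => (hint i j).const_mul _]
    exact Finset.sum_congr rfl fun i _ =>
      (integral_finsetSum _ fun j _ => (hint i j).const_mul _).symm
  simp only [Matrix.of_apply, hswap]
  refine integral_nonpos_of_ae ?_
  filter_upwards [hK] with ω hω using hω.sum_nonpos c hc

/-- Nonnegativity of the energy distance between two empirical measures. -/
lemma CondNegDef.expect_add_expect_le [Nonempty ι] [Nonempty κ] {K : Matrix (ι ⊕ κ) (ι ⊕ κ) ℝ}
    (hK : CondNegDef K) :
    𝔼 i, 𝔼 j, K (.inl i) (.inl j) + 𝔼 i, 𝔼 j, K (.inr i) (.inr j)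
      ≤ 2 * 𝔼 i, 𝔼 j, K (.inl i) (.inr j) := by
  set a : ℝ := (Fintype.card ι : ℝ)⁻¹
  set b : ℝ := (Fintype.card κ : ℝ)⁻¹
  have hmass : ∑ i, (Sum.elim (fun _ => a) (fun _ => -b) : ι ⊕ κ → ℝ) i = 0 := by
    simp [a, b, Fintype.sum_sum_type]
  have hquad := hK.sum_nonpos _ hmass
  simp only [Fintype.sum_sum_type, Sum.elim_inl, Sum.elim_inr, Finset.sum_add_distrib,
    mul_neg, neg_mul, Finset.sum_neg_distrib] at hquad
  have hsymm : ∑ i, ∑ j, b * a * K (.inr i) (.inl j) = ∑ i, ∑ j, a * b * K (.inl i) (.inr j) := by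
    rw [Finset.sum_comm]
    exact Finset.sum_congr rfl fun i _ => Finset.sum_congr rfl fun j _ => by
      rw [mul_comm b, hK.isSymm.apply]
  rw [hsymm] at hquad
  simp only [Fintype.expect_eq_sum_div_card, div_eq_inv_mul, Finset.mul_sum, ← mul_assoc] at hquad ⊢
  simp only [← Finset.mul_sum] at hquad ⊢
  linarith

end CondNegDef

section WeightedExponentials

variable {X : Type*} {w E : X → ℝ} {β B T : ℝ}

lemma mul_exp_neg_mul_le (hw : ∀ x, 0 ≤ w x) (hβ : 0 ≤ β) (hE : ∀ x, 0 ≤ E x) (x : X) :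
    w x * Real.exp (-β * E x) ≤ w x :=
  mul_le_of_le_one_right (hw x) (Real.exp_le_one_iff.2 (by
    rw [neg_mul, neg_nonpos]
    exact mul_nonneg hβ (hE x)))

lemma summable_mul_exp_neg_mul (hw : ∀ x, 0 ≤ w x) (hsum : Summable w) (hβ : 0 ≤ β)
    (hE : ∀ x, 0 ≤ E x) : Summable fun x => w x * Real.exp (-β * E x) :=
  hsum.of_nonneg_of_le (fun x => mul_nonneg (hw x) (Real.exp_pos _).le)
    (mul_exp_neg_mul_le hw hβ hE)

lemma mul_exp_le_tsum_mul_exp (hw : ∀ x, 0 ≤ w x) (hsum : HasSum w T) (hβ : 0 ≤ β)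
    (hE : ∀ x, 0 ≤ E x) (hEB : ∀ x, E x ≤ B) :
    T * Real.exp (-β * B) ≤ ∑' x, w x * Real.exp (-β * E x) := by
  have hterm (x : X) : w x * Real.exp (-β * B) ≤ w x * Real.exp (-β * E x) :=
    mul_le_mul_of_nonneg_left
      (Real.exp_le_exp.2 (mul_le_mul_of_nonpos_left (hEB x) (neg_nonpos.2 hβ))) (hw x)
  exact hasSum_le hterm (hsum.mul_right _)
    (summable_mul_exp_neg_mul hw hsum.summable hβ hE).hasSum

lemma tsum_mul_exp_pos (hw : ∀ x, 0 ≤ w x) (hsum : HasSum w T) (hT : 0 < T) (hβ : 0 ≤ β)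
    (hE : ∀ x, 0 ≤ E x) (hEB : ∀ x, E x ≤ B) : 0 < ∑' x, w x * Real.exp (-β * E x) :=
  (mul_pos hT (Real.exp_pos _)).trans_le (mul_exp_le_tsum_mul_exp hw hsum hβ hE hEB)

lemma abs_log_tsum_mul_exp_le (hw : ∀ x, 0 ≤ w x) (hsum : HasSum w T) (hT : 0 < T) (hβ : 0 ≤ β)
    (hB : 0 ≤ B) (hE : ∀ x, 0 ≤ E x) (hEB : ∀ x, E x ≤ B) :
    |Real.log (∑' x, w x * Real.exp (-β * E x))| ≤ |Real.log T| + β * B := by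
  have hβB : 0 ≤ β * B := mul_nonneg hβ hB
  have hupper := Real.log_le_log (tsum_mul_exp_pos hw hsum hT hβ hE hEB)
    (hasSum_le (mul_exp_neg_mul_le hw hβ hE)
      (summable_mul_exp_neg_mul hw hsum.summable hβ hE).hasSum hsum)
  have hlower := Real.log_le_log (mul_pos hT (Real.exp_pos _))
    (mul_exp_le_tsum_mul_exp hw hsum hβ hE hEB)
  rw [Real.log_mul hT.ne' (Real.exp_pos _).ne', Real.log_exp] at hlower
  exact abs_le.2 ⟨by linarith [neg_abs_le (Real.log T)], by linarith [le_abs_self (Real.log T)]⟩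

end WeightedExponentials

section Model

/-- Sites of the interpolating system: the `N` sites of the Potts model proper, and the
countably many cavity sites carrying the spins of the random spin structure. -/
abbrev Site (N : ℕ) := Fin N ⊕ ℕ

/-- Interaction graphs: finite lists of edges, with multiplicity and without order. -/
abbrev Graph (N : ℕ) := Multiset (Site N × Site N)

/-- Configurations: the replica index `α` of the cavity spins, and the Potts spins `σ`. -/
abbrev Config (q N : ℕ) := ℕ × (Fin N → Fin q)

variable {q N : ℕ} {β : ℝ} {p : SpinStruct q} {L : Measure (SpinStruct q)}

/-- The event that the weights `ξ` form a probability distribution on the replicas. -/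
def HasProbWeights (p : SpinStruct q) : Prop := (∀ α, 0 ≤ p.1 α) ∧ HasSum p.1 1

lemma measurableSet_hasProbWeights : MeasurableSet {p : SpinStruct q | HasProbWeights p} := by
  have hset : {p : SpinStruct q | HasProbWeights p} = (⋂ α, {p : SpinStruct q | 0 ≤ p.1 α}) ∩
      {p | Tendsto (fun n => ∑ α ∈ Finset.range n, p.1 α) atTop (nhds 1)} := by
    ext p
    simp only [HasProbWeights, Set.mem_ofPred_eq, Set.mem_inter_iff, Set.mem_iInter]
    exact and_congr_right fun hp => hasSum_iff_tendsto_nat_of_nonneg hp 1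
  rw [hset]
  exact (MeasurableSet.iInter fun α => measurableSet_le measurable_const (by fun_prop)).inter
    (measurableSet_tendsto _ fun n => by fun_prop)

lemma ae_hasProbWeights (hL : IsRSS q L) : ∀ᵐ p ∂L, HasProbWeights p := by
  obtain ⟨_, hΔ, -⟩ := hL
  refine (prob_compl_eq_zero_iff measurableSet_hasProbWeights).2 (le_antisymm prob_le_one ?_)
  exact hΔ.symm.le.trans (measure_mono fun p hp => ⟨hp.1, hp.2.2⟩)

lemma HasProbWeights.hasSum_config (hp : HasProbWeights p) :
    HasSum (fun x : Config q N => p.1 x.1) ((q : ℝ) ^ N) := by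
  have hone := hasSum_fintype fun _ : Fin N → Fin q => (1 : ℝ)
  have hprod := hp.2.mul hone (hp.2.summable.mul_of_nonneg hone.summable hp.1 fun _ => zero_le_one)
  simpa using hprod

/-- The spin at a site, given a realization of the spin structure and a configuration. -/
def spinAt (p : SpinStruct q) (x : Config q N) : Site N → Fin q := Sum.elim x.2 (p.2 x.1)

/-- The number of monochromatic edges. -/
def energy (G : Graph N) (p : SpinStruct q) (x : Config q N) : ℕ :=
  G.countP fun e => spinAt p x e.1 = spinAt p x e.2

/-- The partition function of `G`, with the replicas weighted by `ξ`. -/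
noncomputable def partitionFn (β : ℝ) (G : Graph N) (p : SpinStruct q) : ℝ :=
  ∑' x : Config q N, p.1 x.1 * Real.exp (-β * energy G p x)

/-- The (extensive) pressure of `G`: the log-partition function averaged over the spin
structure. -/
noncomputable def pressure (β : ℝ) (L : Measure (SpinStruct q)) (G : Graph N) : ℝ :=
  ∫ p, Real.log (partitionFn β G p) ∂L

variable {G : Graph N}

lemma energy_cons (e : Site N × Site N) (G : Graph N) (p : SpinStruct q) (x : Config q N) :
    energy (e ::ₘ G) p x = energy G p x + if spinAt p x e.1 = spinAt p x e.2 then 1 else 0 :=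
  Multiset.countP_cons _ _ _

lemma energy_add (G G' : Graph N) (p : SpinStruct q) (x : Config q N) :
    energy (G + G') p x = energy G p x + energy G' p x :=
  Multiset.countP_add _ _ _

lemma energy_le_card (G : Graph N) (p : SpinStruct q) (x : Config q N) :
    energy G p x ≤ G.card :=
  Multiset.countP_le_card _ _

lemma measurable_spinAt (x : Config q N) (s : Site N) :
    Measurable fun p : SpinStruct q => spinAt p x s := by
  cases s with
  | inl i => exact measurable_const
  | inr n => simp only [spinAt, Sum.elim_inr]; fun_prop

lemma measurable_energy (G : Graph N) (x : Config q N) :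
    Measurable fun p : SpinStruct q => energy G p x := by
  induction G using Multiset.induction with
  | empty => exact measurable_const
  | cons e G ih =>
    simp only [energy_cons]
    exact ih.add (.ite (measurableSet_eq_fun (measurable_spinAt x e.1) (measurable_spinAt x e.2))
      measurable_const measurable_const)

lemma measurable_partitionFn (β : ℝ) (G : Graph N) :
    Measurable (partitionFn β G : SpinStruct q → ℝ) := by
  have hterm (x : Config q N) :
      Measurable fun p : SpinStruct q => p.1 x.1 * Real.exp (-β * energy G p x) := by
    have := measurable_energy (q := q) G x
    fun_prop
  exact Measurable.tsum hterm

lemma hasSum_partitionFn (hβ : 0 ≤ β) (hp : HasProbWeights p) :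
    HasSum (fun x : Config q N => p.1 x.1 * Real.exp (-β * energy G p x)) (partitionFn β G p) :=
  (summable_mul_exp_neg_mul (w := fun x : Config q N => p.1 x.1) (fun x => hp.1 x.1)
    hp.hasSum_config.summable hβ fun x => Nat.cast_nonneg (energy G p x)).hasSum

lemma partitionFn_pos [NeZero q] (hβ : 0 ≤ β) (hp : HasProbWeights p) :
    0 < partitionFn β G p :=
  tsum_mul_exp_pos (w := fun x : Config q N => p.1 x.1) (fun x => hp.1 x.1) hp.hasSum_config
    (pow_pos (Nat.cast_pos.2 (NeZero.pos q)) N) hβ (fun x => Nat.cast_nonneg (energy G p x))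
    fun x => Nat.cast_le.2 (energy_le_card G p x)

lemma abs_log_partitionFn_le [NeZero q] (hβ : 0 ≤ β) (hp : HasProbWeights p) :
    |Real.log (partitionFn β G p)| ≤ N * Real.log q + β * G.card := by
  have hbound := abs_log_tsum_mul_exp_le (w := fun x : Config q N => p.1 x.1) (fun x => hp.1 x.1)
    hp.hasSum_config (pow_pos (Nat.cast_pos.2 (NeZero.pos q)) N) hβ (Nat.cast_nonneg _)
    (fun x => Nat.cast_nonneg (energy G p x)) fun x => Nat.cast_le.2 (energy_le_card G p x)
  rwa [Real.log_pow, abs_of_nonneg (a := N * Real.log q)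
    (mul_nonneg (Nat.cast_nonneg _) (Real.log_natCast_nonneg q))] at hbound

lemma ae_norm_log_partitionFn_le [NeZero q] (hL : IsRSS q L) (hβ : 0 ≤ β) (G : Graph N) :
    ∀ᵐ p ∂L, ‖Real.log (partitionFn β G p)‖ ≤ N * Real.log q + β * G.card :=
  (ae_hasProbWeights hL).mono fun _ hp =>
    (Real.norm_eq_abs _).trans_le (abs_log_partitionFn_le hβ hp)

lemma integrable_log_partitionFn [NeZero q] (hL : IsRSS q L) (hβ : 0 ≤ β) (G : Graph N) :
    Integrable (fun p => Real.log (partitionFn β G p)) L :=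
  have := hL.1
  .of_bound (measurable_partitionFn β G).log.aestronglyMeasurable _
    (ae_norm_log_partitionFn_le hL hβ G)

lemma abs_pressure_le [NeZero q] (hL : IsRSS q L) (hβ : 0 ≤ β) (G : Graph N) :
    |pressure β L G| ≤ N * Real.log q + β * G.card := by
  have := hL.1
  simpa [pressure] using norm_integral_le_of_norm_le_const (ae_norm_log_partitionFn_le hL hβ G)

end Model

section Reindexing

lemma exists_perm_finite_support_eqOn {α : Type*} (s : Finset α) {φ : α → α}
    (hφ : Set.InjOn φ s) :
    ∃ π : Equiv.Perm α, {a | π a ≠ a}.Finite ∧ Set.EqOn π φ s := by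
  classical
  set t := s ∪ s.image φ
  obtain ⟨g, hg⟩ := Finset.exists_equiv_extend_of_card_eq (α := t) (t := t) (Fintype.card_coe t)
    (s := s.subtype (· ∈ t)) (f := fun a => φ a)
    (fun b hb => by
      obtain ⟨a, ha, rfl⟩ := Finset.mem_image.1 hb
      exact Finset.mem_union_right _ (Finset.mem_image_of_mem φ (Finset.mem_subtype.1 ha)))
    (fun a ha b hb hab => Subtype.ext (hφ (Finset.mem_subtype.1 ha) (Finset.mem_subtype.1 hb) hab))
  refine ⟨Equiv.Perm.ofSubtype g, t.finite_toSet.subset fun a ha => ?_, fun a ha => ?_⟩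
  · by_contra hat
    exact ha (Equiv.Perm.ofSubtype_apply_of_not_mem g hat)
  · have hat : a ∈ t := Finset.mem_union_left _ ha
    rw [Equiv.Perm.ofSubtype_apply_of_mem g hat]
    exact hg ⟨a, hat⟩ (Finset.mem_subtype.2 ha)

variable {q N : ℕ} {β : ℝ} {L : Measure (SpinStruct q)} {φ ψ : ℕ → ℕ} {G : Graph N}

/-- Reindexing of the cavity sites of an edge. -/
def reindex (φ : ℕ → ℕ) : Site N × Site N → Site N × Site N :=
  Prod.map (Sum.map id φ) (Sum.map id φ)

/-- The cavity sites incident to an edge of `G`. -/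
def cavitySites (G : Graph N) : Finset ℕ :=
  ((G.map Prod.fst + G.map Prod.snd).filterMap Sum.getRight?).toFinset

lemma mem_cavitySites {n : ℕ} :
    n ∈ cavitySites G ↔ ∃ e ∈ G, e.1 = .inr n ∨ e.2 = .inr n := by
  simp only [cavitySites, Multiset.mem_toFinset, Multiset.mem_filterMap, Multiset.mem_add,
    Multiset.mem_map, Sum.getRight?_eq_some_iff]
  aesop

lemma map_reindex_congr (h : Set.EqOn φ ψ (cavitySites G)) :
    G.map (reindex φ) = G.map (reindex ψ) := by
  have hsite (s : Site N) (hs : ∀ n, s = .inr n → n ∈ cavitySites G) :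
      Sum.map id φ s = Sum.map id ψ s := by
    cases s with
    | inl i => rfl
    | inr n => exact congrArg Sum.inr (h (hs n rfl))
  exact Multiset.map_congr rfl fun e he => Prod.ext
    (hsite e.1 fun n hn => mem_cavitySites.2 ⟨e, he, .inl hn⟩)
    (hsite e.2 fun n hn => mem_cavitySites.2 ⟨e, he, .inr hn⟩)

lemma map_reindex_eq_self (h : Set.EqOn φ id (cavitySites G)) : G.map (reindex φ) = G := by
  rw [map_reindex_congr h, reindex, Sum.map_id_id, Prod.map_id, Multiset.map_id]

lemma partitionFn_map_reindex (β : ℝ) (φ : ℕ → ℕ) (G : Graph N) (p : SpinStruct q) :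
    partitionFn β (G.map (reindex φ)) p = partitionFn β G (p.1, fun α k => p.2 α (φ k)) := by
  have hspin (x : Config q N) (s : Site N) :
      spinAt p x (Sum.map id φ s) = spinAt (p.1, fun α k => p.2 α (φ k)) x s := by
    cases s <;> rfl
  have henergy (x : Config q N) :
      energy (G.map (reindex φ)) p x = energy G (p.1, fun α k => p.2 α (φ k)) x := by
    rw [energy, energy, Multiset.countP_map, Multiset.countP_eq_card_filter]
    simp only [reindex, Prod.map_fst, Prod.map_snd, hspin]
  simp only [partitionFn, henergy]

lemma pressure_map_reindex_perm (hL : IsRSS q L) {π : Equiv.Perm ℕ} (hπ : {n | π n ≠ n}.Finite)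
    (G : Graph N) : pressure β L (G.map (reindex π)) = pressure β L G := by
  conv_rhs => rw [pressure, ← hL.2.2 π hπ]
  rw [integral_map (by fun_prop) (measurable_partitionFn β G).log.aestronglyMeasurable]
  simp only [pressure, partitionFn_map_reindex]

lemma pressure_map_reindex (hL : IsRSS q L) (hφ : Set.InjOn φ (cavitySites G)) :
    pressure β L (G.map (reindex φ)) = pressure β L G := by
  obtain ⟨π, hfin, hπ⟩ := exists_perm_finite_support_eqOn (cavitySites G) hφ
  rw [← map_reindex_congr hπ, pressure_map_reindex_perm hL hfin]

end Reindexing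

section InterpolationStep

variable {q N : ℕ} {β : ℝ} {L : Measure (SpinStruct q)} {G : Graph N} {φ : ℕ → ℕ}
  {a a' b b' c c' : ℕ}

lemma partitionFn_cons (β : ℝ) (e : Site N × Site N) (G : Graph N) (p : SpinStruct q) :
    partitionFn β (e ::ₘ G) p = ∑' x : Config q N, p.1 x.1 * Real.exp (-β * energy G p x)
      * Real.exp (-β * if spinAt p x e.1 = spinAt p x e.2 then 1 else 0) := by
  refine tsum_congr fun x => ?_
  rw [energy_cons, mul_assoc, ← Real.exp_add, ← mul_add]
  push_cast
  rfl

lemma condNegDef_pressure_cons {ι : Type*} [Fintype ι] [NeZero q] (hL : IsRSS q L) (hβ : 0 ≤ β)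
    (G : Graph N) (s : ι → Site N) :
    CondNegDef (Matrix.of fun u v => pressure β L ((s u, s v) ::ₘ G)) := by
  refine condNegDef_integral (K := fun p => Matrix.of fun u v =>
    Real.log (partitionFn β ((s u, s v) ::ₘ G) p)) ?_
    fun u v => integrable_log_partitionFn hL hβ ((s u, s v) ::ₘ G)
  filter_upwards [ae_hasProbWeights hL] with p hp
  simp only [partitionFn_cons]
  exact condNegDef_log_tsum_exp
    (w := fun x : Config q N => p.1 x.1 * Real.exp (-β * energy G p x))
    (fun x => mul_nonneg (hp.1 x.1) (Real.exp_pos _).le)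
    (hasSum_partitionFn hβ hp) (partitionFn_pos hβ hp) hβ fun u x => spinAt p x (s u)

lemma pressure_cons_self [NeZero q] (hL : IsRSS q L) (hβ : 0 ≤ β) (G : Graph N) (s : Site N) :
    pressure β L ((s, s) ::ₘ G) = pressure β L G - β := by
  have := hL.1
  have hlog : ∀ᵐ p ∂L, Real.log (partitionFn β ((s, s) ::ₘ G) p)
      = Real.log (partitionFn β G p) - β := by
    filter_upwards [ae_hasProbWeights hL] with p hp
    have hfactor : partitionFn β ((s, s) ::ₘ G) p = partitionFn β G p * Real.exp (-β) := by
      simp only [partitionFn_cons, if_true, mul_one]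
      exact tsum_mul_right
    rw [hfactor, Real.log_mul (partitionFn_pos hβ hp).ne' (Real.exp_pos _).ne', Real.log_exp,
      sub_eq_add_neg]
  rw [pressure, integral_congr_ae hlog, integral_sub (integrable_log_partitionFn hL hβ G)
    (integrable_const β)]
  simp [pressure]

lemma pressure_reindex_cons (hL : IsRSS q L) {e : Site N × Site N}
    (hinj : Set.InjOn φ (cavitySites (e ::ₘ G))) (hfix : Set.EqOn φ id (cavitySites G)) :
    pressure β L (reindex φ e ::ₘ G) = pressure β L (e ::ₘ G) := by
  rw [← pressure_map_reindex hL hinj, Multiset.map_cons, map_reindex_eq_self hfix]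

lemma pressure_cons_cavity_congr (hL : IsRSS q L) (ha : a ∉ cavitySites G)
    (ha' : a' ∉ cavitySites G) (i : Fin N) :
    pressure β L ((.inl i, .inr a) ::ₘ G) = pressure β L ((.inl i, .inr a') ::ₘ G) := by
  have hfix : Set.EqOn (Equiv.swap a' a) id (cavitySites G) := fun n hn =>
    Equiv.swap_apply_of_ne_of_ne (ne_of_mem_of_not_mem hn ha') (ne_of_mem_of_not_mem hn ha)
  simpa [reindex] using pressure_reindex_cons (β := β) (e := (.inl i, .inr a')) hL
    (Equiv.injective _).injOn hfix

lemma pressure_cons_cavity_pair_congr (hL : IsRSS q L) (hbb' : b ≠ b') (hcc' : c ≠ c')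
    (hb : b ∉ cavitySites G) (hb' : b' ∉ cavitySites G) (hc : c ∉ cavitySites G)
    (hc' : c' ∉ cavitySites G) :
    pressure β L ((.inr b, .inr b') ::ₘ G) = pressure β L ((.inr c, .inr c') ::ₘ G) := by
  set φ : ℕ → ℕ := fun n => if n = c then b else if n = c' then b' else n
  have hfix : Set.EqOn φ id (cavitySites G) := fun n hn => by
    simp only [φ, if_neg (ne_of_mem_of_not_mem hn hc), if_neg (ne_of_mem_of_not_mem hn hc'), id]
  have hinj : Set.InjOn φ (cavitySites ((.inr c, .inr c') ::ₘ G)) := by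
    have hsites : (cavitySites ((.inr c, .inr c') ::ₘ G) : Set ℕ) ⊆
        {c, c'} ∪ cavitySites G := by
      intro n hn
      simp only [Finset.mem_coe, mem_cavitySites, Multiset.mem_cons] at hn
      simp only [Set.mem_union, Finset.mem_coe, mem_cavitySites]
      aesop
    refine Set.InjOn.mono hsites fun m hm n hn hmn => ?_
    simp only [Set.mem_union, Finset.mem_coe, Set.mem_insert_iff, Set.mem_singleton_iff] at hm hn
    grind
  simpa [reindex, φ, hcc'.symm] using pressure_reindex_cons (β := β) hL hinj hfix

lemma expect_expect_eq_of_offDiag {ι : Type*} [Fintype ι] [Nonempty ι]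
    {K : ι → ι → ℝ} {x y : ℝ} (hdiag : ∀ i, K i i = x) (hoff : ∀ i j, i ≠ j → K i j = y) :
    𝔼 i, 𝔼 j, K i j = y + (x - y) / Fintype.card ι := by
  classical
  have hK (i j : ι) : K i j = y + if i = j then x - y else 0 := by
    split_ifs with hij
    · rw [← hij, hdiag, add_sub_cancel]
    · rw [hoff i j hij, add_zero]
  simp only [hK, Finset.expect_add_distrib, Fintype.expect_const, Fintype.expect_ite_eq,
    NNRat.smul_def]
  simp [div_eq_inv_mul]

theorem expect_system_add_pair_le_two_mul_cavity [NeZero q] [NeZero N] (hL : IsRSS q L)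
    (hβ : 0 ≤ β) (ha : a ∉ cavitySites G) (hb : b ∉ cavitySites G) (hb' : b' ∉ cavitySites G)
    (hbb' : b ≠ b') :
    𝔼 i, 𝔼 j, pressure β L ((.inl i, .inl j) ::ₘ G) + pressure β L ((.inr b, .inr b') ::ₘ G)
      ≤ 2 * 𝔼 i, pressure β L ((.inl i, .inr a) ::ₘ G) := by
  obtain ⟨R, hR⟩ : ∃ R, ∀ n, R ≤ n → n ∉ cavitySites G :=
    ⟨(cavitySites G).sup id + 1, fun n hn hmem =>
      absurd (Finset.le_sup (f := id) hmem) (by simp only [id]; omega)⟩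
  set P := pressure β L ((.inr b, .inr b') ::ₘ G)
  set D := pressure β L G - β
  -- The energy distance between the `N` system sites and `M` fresh cavity sites.
  have hsample (M : ℕ) [NeZero M] :
      𝔼 i, 𝔼 j, pressure β L ((.inl i, .inl j) ::ₘ G) + (P + (D - P) / M)
        ≤ 2 * 𝔼 i, pressure β L ((.inl i, .inr a) ::ₘ G) := by
    have hpair := expect_expect_eq_of_offDiag
      (K := fun u v : Fin M => pressure β L ((.inr (R + u), .inr (R + v)) ::ₘ G))
      (fun u => pressure_cons_self hL hβ G _) fun u v huv =>
        pressure_cons_cavity_pair_congr hL (by simpa [Fin.val_inj] using huv) hbb'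
          (hR _ (R.le_add_right u)) (hR _ (R.le_add_right v)) hb hb'
    have hcross (i : Fin N) (u : Fin M) :=
      pressure_cons_cavity_congr (β := β) hL (hR _ (R.le_add_right u)) ha i
    have hdist := (condNegDef_pressure_cons hL hβ G
      (Sum.elim .inl fun u : Fin M => .inr (R + u))).expect_add_expect_le
    simpa [hpair, hcross, Matrix.of_apply] using hdist
  have hlim : Tendsto (fun M : ℕ => 𝔼 i, 𝔼 j, pressure β L ((.inl i, .inl j) ::ₘ G)
      + (P + (D - P) / M)) atTop (nhds (𝔼 i, 𝔼 j, pressure β L ((.inl i, .inl j) ::ₘ G) + P)) := by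
    simpa using ((tendsto_const_div_atTop_nhds_zero_nat (D - P)).const_add P).const_add _
  refine le_of_tendsto hlim ?_
  filter_upwards [eventually_ne_atTop 0] with M hM
  have : NeZero M := ⟨hM⟩
  exact hsample M

end InterpolationStep

section Edges

variable {q N m k l : ℕ}

/-- The graph on the system sites with edges `e t`. -/
def systemEdges (e : Fin m → Fin N × Fin N) : Graph N := ∑ t, {(.inl (e t).1, .inl (e t).2)}

/-- The graph joining the system sites `I t` to distinct cavity sites. -/
def cavityEdges (I : Fin k → Fin N) : Graph N := ∑ t : Fin k, {(.inl (I t), .inr t)}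

/-- A matching of `l` pairs of cavity sites. -/
def pairEdges (N l : ℕ) : Graph N := ∑ t : Fin l, {(.inr (2 * t), .inr (2 * t + 1))}

/-- The interpolating graph. The cavity sites are reindexed so that `cavityEdges` uses the even
ones and `pairEdges` the odd ones, which keeps the two graphs disjoint. -/
def mixedEdges (e : Fin m → Fin N × Fin N) (I : Fin k → Fin N) (l : ℕ) : Graph N :=
  systemEdges e + (cavityEdges I).map (reindex (2 * ·)) + (pairEdges N l).map (reindex (2 * · + 1))

lemma energy_sum_singleton (f : Fin k → Site N × Site N) (p : SpinStruct q) (x : Config q N) :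
    energy (∑ t, {f t}) p x = ∑ t, if spinAt p x (f t).1 = spinAt p x (f t).2 then 1 else 0 := by
  refine (map_sum (Multiset.countPAddMonoidHom
    fun e : Site N × Site N => spinAt p x e.1 = spinAt p x e.2) _ _).trans ?_
  simp only [Multiset.coe_countPAddMonoidHom, ← Multiset.cons_zero, Multiset.countP_cons,
    Multiset.countP_zero, zero_add]

lemma map_reindex_systemEdges (φ : ℕ → ℕ) (e : Fin m → Fin N × Fin N) :
    (systemEdges e).map (reindex φ) = systemEdges e := by
  refine (map_sum (Multiset.mapAddMonoidHom (reindex φ)) _ _).trans ?_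
  simp [systemEdges, reindex]

lemma mixedEdges_snoc_system (e : Fin m → Fin N × Fin N) (I : Fin k → Fin N) (l : ℕ)
    (a : Fin N × Fin N) :
    mixedEdges (Fin.snoc e a) I l = (.inl a.1, .inl a.2) ::ₘ mixedEdges e I l := by
  simp only [mixedEdges, systemEdges, Fin.sum_univ_castSucc, Fin.snoc_castSucc, Fin.snoc_last,
    ← Multiset.singleton_add]
  abel

lemma mixedEdges_snoc_cavity (e : Fin m → Fin N × Fin N) (I : Fin k → Fin N) (l : ℕ) (i : Fin N) :
    mixedEdges e (Fin.snoc I i) l = (.inl i, .inr (2 * k)) ::ₘ mixedEdges e I l := by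
  simp only [mixedEdges, cavityEdges, Fin.sum_univ_castSucc, Fin.snoc_castSucc, Fin.snoc_last,
    ← Multiset.singleton_add, Multiset.map_add, Multiset.map_singleton, Fin.val_castSucc,
    Fin.val_last, reindex, Prod.map_apply, Sum.map_inl, Sum.map_inr, id]
  abel

lemma mixedEdges_succ_pair (e : Fin m → Fin N × Fin N) (I : Fin k → Fin N) (l : ℕ) :
    mixedEdges e I (l + 1)
      = (.inr (2 * (2 * l) + 1), .inr (2 * (2 * l + 1) + 1)) ::ₘ mixedEdges e I l := by
  simp only [mixedEdges, pairEdges, Fin.sum_univ_castSucc,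
    ← Multiset.singleton_add, Multiset.map_add, Multiset.map_singleton, Fin.val_castSucc,
    Fin.val_last, reindex, Prod.map_apply, Sum.map_inr]
  abel

lemma mem_cavitySites_mixedEdges {e : Fin m → Fin N × Fin N} {I : Fin k → Fin N} {n : ℕ}
    (hn : n ∈ cavitySites (mixedEdges e I l)) :
    (∃ t < k, n = 2 * t) ∨ ∃ t < 2 * l, n = 2 * t + 1 := by
  simp only [mem_cavitySites, mixedEdges, systemEdges, cavityEdges, pairEdges, Multiset.mem_add,
    Multiset.mem_map, Multiset.mem_sum, Multiset.mem_singleton, Finset.mem_univ, true_and,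
    reindex] at hn
  obtain ⟨_, (⟨t, rfl⟩ | ⟨_, ⟨t, rfl⟩, rfl⟩) | ⟨_, ⟨t, rfl⟩, rfl⟩, h | h⟩ := hn <;>
    simp only [Prod.map_fst, Prod.map_snd, Sum.map_inl, Sum.map_inr, reduceCtorEq,
      Sum.inr.injEq] at h
  · exact .inl ⟨t, t.2, h.symm⟩
  · exact .inr ⟨2 * t, by omega, h.symm⟩
  · exact .inr ⟨2 * t + 1, by omega, h.symm⟩

end Edges

section Interpolation

variable {q N : ℕ} {β : ℝ} {L : Measure (SpinStruct q)}

lemma expect_fin_succ_arrow {A : Type*} [Fintype A] (m : ℕ) (g : (Fin (m + 1) → A) → ℝ) :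
    𝔼 e, g e = 𝔼 e : Fin m → A, 𝔼 a, g (Fin.snoc e a) := by
  rw [Finset.expect_comm, ← Finset.expect_product', Finset.univ_product_univ]
  exact (Fintype.expect_equiv (Fin.snocEquiv fun _ => A) _ _ fun _ => rfl).symm

/-- The pressure of the interpolating graph with `m` uniformly random system edges, `k` uniformly
random cavity edges and `l` cavity pairs. -/
noncomputable def mixedPressure (N : ℕ) (β : ℝ) (L : Measure (SpinStruct q)) (m k l : ℕ) : ℝ :=
  𝔼 e : Fin m → Fin N × Fin N, 𝔼 I : Fin k → Fin N, pressure β L (mixedEdges e I l)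

lemma mixedPressure_step [NeZero q] [NeZero N] (hL : IsRSS q L) (hβ : 0 ≤ β) (m k l : ℕ) :
    mixedPressure N β L (m + 1) k l + mixedPressure N β L m k (l + 1)
      ≤ 2 * mixedPressure N β L m (k + 1) l := by
  have hsystem : mixedPressure N β L (m + 1) k l = 𝔼 e : Fin m → Fin N × Fin N,
      𝔼 I : Fin k → Fin N, 𝔼 i, 𝔼 j, pressure β L ((.inl i, .inl j) ::ₘ mixedEdges e I l) := by
    simp only [mixedPressure, expect_fin_succ_arrow, mixedEdges_snoc_system]
    refine Finset.expect_congr rfl fun e _ => ?_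
    rw [Finset.expect_comm]
    refine Finset.expect_congr rfl fun I _ => ?_
    rw [← Finset.univ_product_univ]
    exact Finset.expect_product' Finset.univ Finset.univ fun i j =>
      pressure β L ((.inl i, .inl j) ::ₘ mixedEdges e I l)
  have hcavity : mixedPressure N β L m (k + 1) l = 𝔼 e : Fin m → Fin N × Fin N,
      𝔼 I : Fin k → Fin N, 𝔼 i, pressure β L ((.inl i, .inr (2 * k)) ::ₘ mixedEdges e I l) := by
    simp only [mixedPressure, expect_fin_succ_arrow, mixedEdges_snoc_cavity]
  rw [hsystem, hcavity, mixedPressure]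
  simp only [mixedEdges_succ_pair, ← Finset.expect_add_distrib, Finset.mul_expect]
  refine Finset.expect_le_expect fun e _ => Finset.expect_le_expect fun I _ => ?_
  rw [← Finset.mul_expect]
  refine expect_system_add_pair_le_two_mul_cavity hL hβ ?_ ?_ ?_ (by omega) <;>
    exact fun h => by obtain ⟨t, ht, h⟩ | ⟨t, ht, h⟩ := mem_cavitySites_mixedEdges h <;> omega

lemma sum_choose_mul_le_two_pow_mul {f : ℕ → ℕ → ℕ → ℝ}
    (hf : ∀ m k l, f (m + 1) k l + f m k (l + 1) ≤ 2 * f m (k + 1) l) (n m l : ℕ) :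
    ∑ ij ∈ Finset.HasAntidiagonal.antidiagonal n, (n.choose ij.1 : ℝ) * f (m + ij.1) 0 (l + ij.2)
      ≤ 2 ^ n * f m n l := by
  induction n generalizing m l with
  | zero => simp
  | succ n ih =>
    rw [Finset.sum_antidiagonal_choose_succ_mul (fun i j => f (m + i) 0 (l + j)) n]
    have hpair : ∑ ij ∈ Finset.HasAntidiagonal.antidiagonal n,
        (n.choose ij.1 : ℝ) * f (m + ij.1) 0 (l + (ij.2 + 1)) ≤ 2 ^ n * f m n (l + 1) := by
      simpa only [add_comm 1, add_assoc] using ih m (l + 1)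
    have hsystem : ∑ ij ∈ Finset.HasAntidiagonal.antidiagonal n,
        (n.choose ij.2 : ℝ) * f (m + (ij.1 + 1)) 0 (l + ij.2) ≤ 2 ^ n * f (m + 1) n l := by
      refine (Finset.sum_congr rfl fun ij hij => ?_).trans_le (ih (m + 1) l)
      rw [Nat.choose_symm_of_eq_add (Finset.HasAntidiagonal.mem_antidiagonal.1 hij).symm,
        add_comm ij.1 1, add_assoc]
    calc _ ≤ 2 ^ n * (f (m + 1) n l + f m n (l + 1)) := by linarith
      _ ≤ 2 ^ n * (2 * f m (n + 1) l) := by gcongr; exact hf m n l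
      _ = 2 ^ (n + 1) * f m (n + 1) l := by ring

end Interpolation

section Endpoints

variable {q N m k : ℕ} {β : ℝ} {L : Measure (SpinStruct q)}

/-- The number of times each value is taken. -/
def occurrences {A : Type*} [DecidableEq A] (e : Fin m → A) (a : A) : ℕ :=
  Finset.card {t | e t = a}

lemma sum_occurrences_mul {A : Type*} [Fintype A] [DecidableEq A] (e : Fin m → A) (h : A → ℝ) :
    ∑ a, (occurrences e a : ℝ) * h a = ∑ t, h (e t) := by
  simp only [occurrences, Finset.natCast_card_filter, Finset.sum_mul, ite_mul, one_mul, zero_mul]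
  rw [Finset.sum_comm]
  simp

/-- The Potts partition function with couplings `βJ`. -/
noncomputable def pottsZ (q : ℕ) (β : ℝ) (J : Fin N × Fin N → ℕ) : ℝ :=
  potts.Z q N fun i j => β * J (i, j)

lemma pottsZ_occurrences (q : ℕ) (β : ℝ) (e : Fin m → Fin N × Fin N) :
    pottsZ q β (occurrences e)
      = ∑ σ : Fin N → Fin q, Real.exp (-β * ∑ t, if σ (e t).1 = σ (e t).2 then 1 else 0) := by
  refine Finset.sum_congr rfl fun σ _ => congrArg Real.exp ?_
  rw [potts.H, neg_mul, neg_inj, ← sum_occurrences_mul e fun a => if σ a.1 = σ a.2 then 1 else 0,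
    Finset.mul_sum, Fintype.sum_prod_type]
  simp only [mul_assoc]

lemma partitionFn_eq_tsum_sum {p : SpinStruct q} (hβ : 0 ≤ β) (hp : HasProbWeights p)
    (G : Graph N) : partitionFn β G p
      = ∑' α, p.1 α * ∑ σ : Fin N → Fin q, Real.exp (-β * energy G p (α, σ)) := by
  rw [partitionFn, (hasSum_partitionFn hβ hp).summable.tsum_prod]
  simp only [tsum_fintype, Finset.mul_sum]

lemma energy_pairEdges (l : ℕ) (p : SpinStruct q) (x : Config q N) :
    energy (pairEdges N l) p x
      = ∑ t : Fin l, if p.2 x.1 (2 * t) = p.2 x.1 (2 * t + 1) then 1 else 0 :=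
  energy_sum_singleton _ p x

lemma energy_cavityEdges (I : Fin k → Fin N) (p : SpinStruct q) (x : Config q N) :
    energy (cavityEdges I) p x = ∑ t : Fin k, if x.2 (I t) = p.2 x.1 t then 1 else 0 :=
  energy_sum_singleton _ p x

lemma energy_systemEdges (e : Fin m → Fin N × Fin N) (p : SpinStruct q) (x : Config q N) :
    energy (systemEdges e) p x = ∑ t, if x.2 (e t).1 = x.2 (e t).2 then 1 else 0 :=
  energy_sum_singleton _ p x

lemma partitionFn_pairEdges {p : SpinStruct q} (hβ : 0 ≤ β) (hp : HasProbWeights p) (l : ℕ) :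
    partitionFn β (pairEdges 0 l) p = ∑' α, p.1 α *
      Real.exp (-β * ∑ t : Fin l, if p.2 α (2 * t) = p.2 α (2 * t + 1) then 1 else 0) := by
  simp only [partitionFn_eq_tsum_sum hβ hp, Fintype.sum_unique, energy_pairEdges, Nat.cast_sum,
    Nat.cast_ite, Nat.cast_one, Nat.cast_zero]

lemma partitionFn_systemEdges_add_pairEdges {p : SpinStruct q} (hβ : 0 ≤ β)
    (hp : HasProbWeights p) (e : Fin m → Fin N × Fin N) (l : ℕ) :
    partitionFn β (systemEdges e + pairEdges N l) p
      = pottsZ q β (occurrences e) * partitionFn β (pairEdges 0 l) p := by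
  rw [partitionFn_eq_tsum_sum hβ hp, partitionFn_pairEdges hβ hp, ← tsum_mul_left]
  refine tsum_congr fun α => ?_
  rw [mul_left_comm, pottsZ_occurrences, Finset.sum_mul]
  refine congrArg _ (Finset.sum_congr rfl fun σ _ => ?_)
  rw [energy_add, Nat.cast_add, mul_add, Real.exp_add, energy_systemEdges, energy_pairEdges]
  push_cast
  rfl

lemma pottsZ_pos [NeZero q] (β : ℝ) (J : Fin N × Fin N → ℕ) : 0 < pottsZ q β J :=
  Finset.sum_pos (fun _ _ => Real.exp_pos _) Finset.univ_nonempty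

lemma card_cavityEdges (I : Fin k → Fin N) : (cavityEdges I).card = k := by
  simp [cavityEdges]

lemma card_pairEdges (N l : ℕ) : (pairEdges N l).card = l := by
  simp [pairEdges]

lemma pressure_systemEdges_add_pairEdges [NeZero q] (hL : IsRSS q L) (hβ : 0 ≤ β)
    (e : Fin m → Fin N × Fin N) (l : ℕ) :
    pressure β L (systemEdges e + pairEdges N l)
      = Real.log (pottsZ q β (occurrences e)) + pressure β L (pairEdges 0 l) := by
  have := hL.1
  calc pressure β L (systemEdges e + pairEdges N l)
      = ∫ p, (Real.log (pottsZ q β (occurrences e))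
          + Real.log (partitionFn β (pairEdges 0 l) p)) ∂L := by
        refine integral_congr_ae ?_
        filter_upwards [ae_hasProbWeights hL] with p hp
        rw [partitionFn_systemEdges_add_pairEdges hβ hp,
          Real.log_mul (pottsZ_pos β _).ne' (partitionFn_pos hβ hp).ne']
    _ = _ := by
        rw [integral_add (integrable_const _) (integrable_log_partitionFn hL hβ _), integral_const,
          probReal_univ, one_smul, pressure]

/-- The mean log-partition function of the Potts model with `m` uniformly random edges. -/
noncomputable def systemPressure (q N : ℕ) (β : ℝ) (m : ℕ) : ℝ :=
  𝔼 e : Fin m → Fin N × Fin N, Real.log (pottsZ q β (occurrences e))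

/-- The mean pressure of `k` uniformly random system sites, each joined to its own cavity site. -/
noncomputable def cavityPressure (N : ℕ) (β : ℝ) (L : Measure (SpinStruct q)) (k : ℕ) : ℝ :=
  𝔼 I : Fin k → Fin N, pressure β L (cavityEdges I)

/-- The pressure of `l` disjoint pairs of cavity sites. -/
noncomputable def pairPressure (β : ℝ) (L : Measure (SpinStruct q)) (l : ℕ) : ℝ :=
  pressure β L (pairEdges 0 l)

lemma mixedPressure_zero_cavity [NeZero q] [NeZero N] (hL : IsRSS q L) (hβ : 0 ≤ β) (m l : ℕ) :
    mixedPressure N β L m 0 l = systemPressure q N β m + pairPressure β L l := by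
  have hmixed (e : Fin m → Fin N × Fin N) (I : Fin 0 → Fin N) :
      mixedEdges e I l = (systemEdges e + pairEdges N l).map (reindex (2 * · + 1)) := by
    rw [Multiset.map_add, map_reindex_systemEdges, mixedEdges, cavityEdges, Fin.sum_univ_zero,
      Multiset.map_zero, add_zero]
  have hinj : Function.Injective (2 * · + 1 : ℕ → ℕ) := fun a b h => by simpa using h
  simp only [mixedPressure, hmixed, pressure_map_reindex hL hinj.injOn, Fintype.expect_const,
    pressure_systemEdges_add_pairEdges hL hβ, Finset.expect_add_distrib]
  rfl

lemma mixedPressure_zero_system_pair (hL : IsRSS q L) (k : ℕ) :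
    mixedPressure N β L 0 k 0 = cavityPressure N β L k := by
  have hmixed (e : Fin 0 → Fin N × Fin N) (I : Fin k → Fin N) :
      mixedEdges e I 0 = (cavityEdges I).map (reindex (2 * ·)) := by
    simp [mixedEdges, systemEdges, pairEdges]
  have hinj : Function.Injective (2 * · : ℕ → ℕ) := fun a b h => by simpa using h
  simp only [mixedPressure, hmixed, pressure_map_reindex hL hinj.injOn, Fintype.expect_const]
  rfl

theorem sum_choose_mul_system_add_pair_le [NeZero q] [NeZero N] (hL : IsRSS q L) (hβ : 0 ≤ β)
    (n : ℕ) :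
    ∑ ij ∈ Finset.HasAntidiagonal.antidiagonal n,
        (n.choose ij.1 : ℝ) * (systemPressure q N β ij.1 + pairPressure β L ij.2)
      ≤ 2 ^ n * cavityPressure N β L n := by
  simpa only [zero_add, mixedPressure_zero_cavity hL hβ, mixedPressure_zero_system_pair hL] using
    sum_choose_mul_le_two_pow_mul (mixedPressure_step (N := N) hL hβ) n 0 0

lemma abs_log_pottsZ_le [NeZero q] (hβ : 0 ≤ β) (e : Fin m → Fin N × Fin N) :
    |Real.log (pottsZ q β (occurrences e))| ≤ N * Real.log q + β * m := by
  rw [pottsZ_occurrences, ← tsum_fintype (L := .unconditional _)]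
  have hsum : HasSum (fun _ : Fin N → Fin q => (1 : ℝ)) (q ^ N) := by
    simpa using hasSum_fintype fun _ : Fin N → Fin q => (1 : ℝ)
  have hq : (0 : ℝ) < q := Nat.cast_pos.2 (NeZero.pos q)
  have h := abs_log_tsum_mul_exp_le (w := fun _ : Fin N → Fin q => (1 : ℝ))
    (E := fun σ => ∑ t, if σ (e t).1 = σ (e t).2 then 1 else 0) (B := m)
    (fun _ => zero_le_one) hsum (by positivity) hβ (by positivity)
    (fun σ => Finset.sum_nonneg fun t _ => by split_ifs <;> norm_num)
    (fun σ => by simpa using Finset.card_filter_le Finset.univ fun t => σ (e t).1 = σ (e t).2)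
  simpa only [one_mul, Real.log_pow,
    abs_of_nonneg (mul_nonneg N.cast_nonneg (Real.log_natCast_nonneg q))] using h

lemma abs_systemPressure_le [NeZero q] [NeZero N] (hβ : 0 ≤ β) (m : ℕ) :
    |systemPressure q N β m| ≤ N * Real.log q + β * m :=
  (Finset.abs_expect_le _ _).trans
    (Finset.expect_le Finset.univ_nonempty fun e _ => abs_log_pottsZ_le hβ e)

lemma abs_cavityPressure_le [NeZero q] [NeZero N] (hL : IsRSS q L) (hβ : 0 ≤ β) (k : ℕ) :
    |cavityPressure N β L k| ≤ N * Real.log q + β * k :=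
  (Finset.abs_expect_le _ _).trans <| Finset.expect_le Finset.univ_nonempty fun I _ => by
    simpa only [card_cavityEdges] using abs_pressure_le hL hβ (cavityEdges I)

lemma abs_pairPressure_le [NeZero q] (hL : IsRSS q L) (hβ : 0 ≤ β) (l : ℕ) :
    |pairPressure β L l| ≤ β * l := by
  simpa only [pairPressure, card_pairEdges, zero_add, CharP.cast_eq_zero, zero_mul] using
    abs_pressure_le hL hβ (pairEdges 0 l)

end Endpoints

section Poisson

variable {lam B C : ℝ} {f : ℕ → ℝ}

lemma poissonPMF_nonneg (hlam : 0 ≤ lam) (k : ℕ) : 0 ≤ poissonPMF lam k := by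
  unfold poissonPMF
  positivity

lemma hasSum_poissonPMF (hlam : 0 ≤ lam) : HasSum (poissonPMF lam) 1 :=
  ProbabilityTheory.hasSum_one_poissonMeasure ⟨lam, hlam⟩

lemma summable_poissonPMF_mul_natCast (hlam : 0 ≤ lam) :
    Summable fun k => poissonPMF lam k * k := by
  refine (summable_nat_add_iff 1).1 (((hasSum_poissonPMF hlam).summable.mul_left lam).congr ?_)
  intro k
  unfold poissonPMF
  rw [Nat.factorial_succ]
  push_cast
  field_simp
  ring

lemma summable_poissonPMF_mul_affine (hlam : 0 ≤ lam) (C B : ℝ) :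
    Summable fun k : ℕ => poissonPMF lam k * (C + B * k) :=
  (((hasSum_poissonPMF hlam).summable.mul_right C).add
    ((summable_poissonPMF_mul_natCast hlam).mul_left B)).congr fun k => by ring

lemma norm_poissonPMF_mul_le (hlam : 0 ≤ lam) {k : ℕ} {a b : ℝ} (h : |a| ≤ b) :
    ‖poissonPMF lam k * a‖ ≤ poissonPMF lam k * b := by
  rw [norm_mul, Real.norm_of_nonneg (poissonPMF_nonneg hlam k)]
  exact mul_le_mul_of_nonneg_left h (poissonPMF_nonneg hlam k)

lemma summable_norm_poissonPMF_mul (hlam : 0 ≤ lam) (hf : ∀ k, |f k| ≤ C + B * k) :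
    Summable fun k => ‖poissonPMF lam k * f k‖ :=
  (summable_poissonPMF_mul_affine hlam C B).of_nonneg_of_le (fun _ => norm_nonneg _)
    fun k => norm_poissonPMF_mul_le hlam (hf k)

/-- The expectation of `f` under the Poisson law of mean `lam`. -/
noncomputable def poissonMean (lam : ℝ) (f : ℕ → ℝ) : ℝ := ∑' k, poissonPMF lam k * f k

lemma integral_poissonMean {Ω : Type*} [MeasurableSpace Ω] {μ : Measure Ω}
    [IsProbabilityMeasure μ] (hlam : 0 ≤ lam) {g : ℕ → Ω → ℝ} (hg : ∀ k, Integrable (g k) μ)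
    (hbound : ∀ k, ∀ᵐ ω ∂μ, |g k ω| ≤ C + B * k) :
    ∫ ω, poissonMean lam (fun k => g k ω) ∂μ = poissonMean lam fun k => ∫ ω, g k ω ∂μ := by
  have hsum : Summable fun k => ∫ ω, ‖poissonPMF lam k * g k ω‖ ∂μ := by
    refine (summable_poissonPMF_mul_affine hlam C B).of_nonneg_of_le
      (fun k => integral_nonneg fun ω => norm_nonneg _) fun k => ?_
    have h := integral_mono_ae ((hg k).const_mul (poissonPMF lam k)).norm (integrable_const _)
      ((hbound k).mono fun ω hω => norm_poissonPMF_mul_le hlam hω)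
    rwa [integral_const, probReal_univ, one_smul] at h
  simp only [poissonMean, ← integral_const_mul]
  exact (hasSum_integral_of_summable_integral_norm (fun k => (hg k).const_mul _) hsum).tsum_eq.symm

lemma poissonPMF_mul_poissonPMF (lam : ℝ) (i j : ℕ) :
    poissonPMF lam i * poissonPMF lam j
      = poissonPMF (2 * lam) (i + j) * ((i + j).choose i / 2 ^ (i + j)) := by
  simp only [poissonPMF]
  rw [Nat.cast_add_choose, mul_pow, pow_add lam, show -(2 * lam) = -lam + -lam by ring,
    Real.exp_add]
  field_simp

/-- The sum of two independent Poisson variables of mean `lam` is Poisson of mean `2 * lam`, and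
given that it equals `n` the first one is binomial with parameters `n` and `1 / 2`. -/
lemma hasSum_poissonMean_add_poissonMean {P Q : ℕ → ℝ} {B₁ B₂ C₁ C₂ : ℝ} (hlam : 0 ≤ lam)
    (hP : ∀ k, |P k| ≤ C₁ + B₁ * k) (hQ : ∀ k, |Q k| ≤ C₂ + B₂ * k) :
    HasSum (fun n => poissonPMF (2 * lam) n * ((∑ ij ∈ Finset.HasAntidiagonal.antidiagonal n,
        (n.choose ij.1 : ℝ) * (P ij.1 + Q ij.2)) / 2 ^ n))
      (poissonMean lam P + poissonMean lam Q) := by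
  have hone := hasSum_poissonPMF hlam
  have hsumP := summable_norm_poissonPMF_mul hlam hP
  have hsumQ := summable_norm_poissonPMF_mul hlam hQ
  have hconvP := (summable_norm_sum_mul_antidiagonal_of_summable_norm hsumP
    hone.summable.norm).of_norm.hasSum
  have hconvQ := (summable_norm_sum_mul_antidiagonal_of_summable_norm hone.summable.norm
    hsumQ).of_norm.hasSum
  rw [← tsum_mul_tsum_eq_tsum_sum_antidiagonal_of_summable_norm hsumP hone.summable.norm,
    hone.tsum_eq, mul_one] at hconvP
  rw [← tsum_mul_tsum_eq_tsum_sum_antidiagonal_of_summable_norm hone.summable.norm hsumQ,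
    hone.tsum_eq, one_mul] at hconvQ
  refine (hconvP.add hconvQ).congr_fun fun n => ?_
  rw [← Finset.sum_add_distrib, Finset.sum_div, Finset.mul_sum]
  refine Finset.sum_congr rfl fun ij hij => ?_
  obtain rfl := Finset.HasAntidiagonal.mem_antidiagonal.1 hij
  rw [mul_div_right_comm, ← mul_assoc, ← poissonPMF_mul_poissonPMF]
  ring

lemma poissonMean_add_poissonMean_le {P Q R : ℕ → ℝ} {B₁ B₂ B₃ C₁ C₂ C₃ : ℝ} (hlam : 0 ≤ lam)
    (hP : ∀ k, |P k| ≤ C₁ + B₁ * k) (hQ : ∀ k, |Q k| ≤ C₂ + B₂ * k)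
    (hR : ∀ k, |R k| ≤ C₃ + B₃ * k)
    (hPQR : ∀ n, ∑ ij ∈ Finset.HasAntidiagonal.antidiagonal n,
      (n.choose ij.1 : ℝ) * (P ij.1 + Q ij.2) ≤ 2 ^ n * R n) :
    poissonMean lam P + poissonMean lam Q ≤ poissonMean (2 * lam) R := by
  refine hasSum_le (fun n => ?_) (hasSum_poissonMean_add_poissonMean hlam hP hQ)
    (summable_norm_poissonPMF_mul (by positivity) hR).of_norm.hasSum
  refine mul_le_mul_of_nonneg_left ?_ (poissonPMF_nonneg (by positivity) n)
  exact (div_le_iff₀' (by positivity)).2 (hPQR n)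

end Poisson

section PoissonSplitting

lemma sum_single_eq_occurrences {A : Type*} [DecidableEq A] {m : ℕ} (e : Fin m → A) :
    ∑ t, Pi.single (e t) 1 = occurrences e := by
  ext a
  simp [occurrences, Pi.single_apply, Finset.sum_apply, eq_comm]

variable {A : Type*} [Fintype A]

lemma prod_poissonPMF (μ : ℝ) (J : A → ℕ) :
    ∏ a, poissonPMF μ (J a) = Real.exp (-(Fintype.card A * μ)) * μ ^ (∑ a, J a)
      / (∑ a, J a).factorial * Nat.multinomial Finset.univ J := by
  have hspec : (∏ a, ((J a).factorial : ℝ)) * Nat.multinomial Finset.univ J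
      = (∑ a, J a).factorial := mod_cast Nat.multinomial_spec Finset.univ J
  have hne : ∏ a, ((J a).factorial : ℝ) ≠ 0 := Finset.prod_ne_zero_iff.2 fun a _ => by positivity
  simp only [poissonPMF]
  rw [Finset.prod_div_distrib, Finset.prod_mul_distrib, Finset.prod_pow_eq_pow_sum,
    Finset.prod_const, ← Real.exp_nat_mul, Finset.card_univ, mul_neg, ← hspec]
  have : (Nat.multinomial Finset.univ J : ℝ) ≠ 0 :=
    Nat.cast_ne_zero.2 (Nat.multinomial_pos Finset.univ J).ne'
  field_simp

variable [DecidableEq A]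

/-- Expand the `m`-th power of the sum of the generators of the monoid algebra of `A → ℕ` in two
ways, and apply the linear functional with values `g` on monomials. -/
lemma sum_comp_occurrences (m : ℕ) (g : (A → ℕ) → ℝ) :
    ∑ e : Fin m → A, g (occurrences e)
      = ∑ J ∈ Finset.piAntidiag Finset.univ m, (Nat.multinomial Finset.univ J : ℝ) * g J := by
  let monomial (J : A → ℕ) : AddMonoidAlgebra ℝ (A → ℕ) :=
    AddMonoidAlgebra.of ℝ (A → ℕ) (Multiplicative.ofAdd J)
  let eval : AddMonoidAlgebra ℝ (A → ℕ) →ₗ[ℝ] ℝ :=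
    Finsupp.linearCombination ℝ g ∘ₗ (AddMonoidAlgebra.coeffLinearEquiv ℝ).toLinearMap
  have eval_monomial (J : A → ℕ) : eval (monomial J) = g J := by
    change Finsupp.linearCombination ℝ g (Finsupp.single J 1) = g J
    simp
  have prod_generators (e : Fin m → A) :
      ∏ t, monomial (Pi.single (e t) 1) = monomial (occurrences e) := by
    simp only [monomial, ← map_prod, ← ofAdd_sum, sum_single_eq_occurrences]
  have prod_generators_pow (J : A → ℕ) : ∏ a, monomial (Pi.single a 1) ^ J a = monomial J := by
    simp only [monomial, ← map_pow, ← map_prod, ← ofAdd_nsmul, ← ofAdd_sum]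
    congr 2
    ext a
    simp [Finset.sum_apply, Pi.single_apply]
  have hexpand := congrArg eval <|
    (Fintype.sum_pow (fun a : A => monomial (Pi.single a 1)) m).symm.trans
      (Finset.sum_pow_eq_sum_piAntidiag Finset.univ (fun a : A => monomial (Pi.single a 1)) m)
  simpa only [map_sum, prod_generators, prod_generators_pow, ← nsmul_eq_mul, map_nsmul,
    eval_monomial] using hexpand

lemma coe_piAntidiag_univ (m : ℕ) :
    (Finset.piAntidiag (Finset.univ : Finset A) m : Set (A → ℕ))
      = (fun J : A → ℕ => ∑ a, J a) ⁻¹' {m} := by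
  ext J
  simp

lemma tsum_eq_tsum_sum_piAntidiag {h : (A → ℕ) → ℝ}
    (hsum : Summable fun m : ℕ => ∑ J ∈ Finset.piAntidiag Finset.univ m, |h J|) :
    ∑' J, h J = ∑' m : ℕ, ∑ J ∈ Finset.piAntidiag Finset.univ m, h J := by
  have hfiber (f : (A → ℕ) → ℝ) (m : ℕ) :
      ∑' J : (fun J : A → ℕ => ∑ a, J a) ⁻¹' {m}, f J
        = ∑ J ∈ Finset.piAntidiag Finset.univ m, f J := by
    rw [← coe_piAntidiag_univ]
    exact Finset.tsum_subtype' _ f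
  have hsummable : Summable h := by
    refine .of_abs ((summable_partition (fun J => abs_nonneg (h J))
      (s := fun m => (fun J : A → ℕ => ∑ a, J a) ⁻¹' {m}) fun J => by simp).2 ⟨fun m => ?_, ?_⟩)
    · rw [← coe_piAntidiag_univ]
      exact (Finset.piAntidiag Finset.univ m).summable fun J => |h J|
    · exact hsum.congr fun m => (hfiber (fun J => |h J|) m).symm
  exact (hsummable.hasSum.tsum_fiberwise fun J => ∑ a, J a).tsum_eq.symm.trans
    (tsum_congr (hfiber h))

lemma sum_piAntidiag_prod_poissonPMF_mul [Nonempty A] (μ : ℝ) (g : (A → ℕ) → ℝ) (m : ℕ) :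
    ∑ J ∈ Finset.piAntidiag Finset.univ m, (∏ a, poissonPMF μ (J a)) * g J
      = poissonPMF (Fintype.card A * μ) m * 𝔼 e : Fin m → A, g (occurrences e) := by
  rw [Fintype.expect_eq_sum_div_card, sum_comp_occurrences, Finset.sum_div, Finset.mul_sum]
  refine Finset.sum_congr rfl fun J hJ => ?_
  rw [prod_poissonPMF, (Finset.mem_piAntidiag.1 hJ).1, poissonPMF, mul_pow, Fintype.card_fun,
    Fintype.card_fin]
  push_cast
  field_simp

theorem tsum_prod_poissonPMF_mul [Nonempty A] {μ B C : ℝ} (hμ : 0 ≤ μ) {g : (A → ℕ) → ℝ}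
    (hg : ∀ (m : ℕ) (e : Fin m → A), |g (occurrences e)| ≤ C + B * m) :
    ∑' J : A → ℕ, (∏ a, poissonPMF μ (J a)) * g J
      = poissonMean (Fintype.card A * μ) fun m => 𝔼 e : Fin m → A, g (occurrences e) := by
  have habs (J : A → ℕ) :
      |(∏ a, poissonPMF μ (J a)) * g J| = (∏ a, poissonPMF μ (J a)) * |g J| := by
    rw [abs_mul, abs_of_nonneg (Finset.prod_nonneg fun a _ => poissonPMF_nonneg hμ _)]
  have hmean (m : ℕ) : |𝔼 e : Fin m → A, (|g (occurrences e)|)| ≤ C + B * m := by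
    refine (Finset.abs_expect_le _ _).trans (Finset.expect_le Finset.univ_nonempty fun e _ => ?_)
    rw [abs_abs]
    exact hg m e
  rw [tsum_eq_tsum_sum_piAntidiag]
  · exact tsum_congr (sum_piAntidiag_prod_poissonPMF_mul μ g)
  · simp only [habs, sum_piAntidiag_prod_poissonPMF_mul μ fun J => |g J|]
    exact (summable_norm_poissonPMF_mul (by positivity) hmean).of_norm

end PoissonSplitting

section Functionals

variable {q N : ℕ} {β c : ℝ} {L : Measure (SpinStruct q)}

lemma potts_p_eq_poissonMean [NeZero q] [NeZero N] (hβ : 0 ≤ β) (hc : 0 ≤ c) :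
    potts.p q N β c = (N : ℝ)⁻¹ * poissonMean (c * N / 2) (systemPressure q N β) := by
  have hmean : (Fintype.card (Fin N × Fin N) : ℝ) * (c / (2 * N)) = c * N / 2 := by
    simp only [Fintype.card_prod, Fintype.card_fin, Nat.cast_mul]
    field_simp
  have hsplit := tsum_prod_poissonPMF_mul (μ := c / (2 * N)) (by positivity)
    (g := fun J : Fin N × Fin N → ℕ => Real.log (pottsZ q β J)) fun _ => abs_log_pottsZ_le hβ
  rw [hmean] at hsplit
  change _ = poissonMean (c * N / 2) (systemPressure q N β) at hsplit
  rw [potts.p, potts.pmat, potts.E, ← (Equiv.curry (Fin N) (Fin N) ℕ).tsum_eq,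
    ← hsplit, ← tsum_mul_left]
  refine tsum_congr fun J => ?_
  rw [Fintype.prod_prod_type, one_div, mul_left_comm]
  rfl

lemma partitionFn_cavityEdges {k : ℕ} {p : SpinStruct q} (hβ : 0 ≤ β) (hp : HasProbWeights p)
    (I : Fin k → Fin N) :
    partitionFn β (cavityEdges I) p = ∑' α, p.1 α * ∑ σ : Fin N → Fin q,
      Real.exp (-β * ∑ t : Fin k, if p.2 α t = σ (I t) then 1 else 0) := by
  simp only [partitionFn_eq_tsum_sum hβ hp, energy_cavityEdges, Nat.cast_sum, Nat.cast_ite,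
    Nat.cast_one, Nat.cast_zero, eq_comm]

lemma G1_eq_poissonMean [NeZero q] [NeZero N] (hL : IsRSS q L) (hβ : 0 ≤ β) (hc : 0 ≤ c) :
    G1 q N β c L = (N : ℝ)⁻¹ * poissonMean (c * N) (cavityPressure N β L) := by
  have := hL.1
  have hpressure : cavityPressure N β L
      = fun k => ∫ p, 𝔼 I : Fin k → Fin N, Real.log (partitionFn β (cavityEdges I) p) ∂L := by
    ext k
    simp only [Fintype.expect_eq_sum_div_card, integral_div, cavityPressure, pressure]
    rw [integral_finsetSum _ fun I _ => integrable_log_partitionFn hL hβ _]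
  rw [hpressure, ← integral_poissonMean (C := N * Real.log q) (B := β) (by positivity),
    ← integral_const_mul]
  · refine integral_congr_ae ?_
    filter_upwards [ae_hasProbWeights hL] with p hp
    rw [poissonMean, ← tsum_mul_left]
    refine tsum_congr fun k => ?_
    simp only [partitionFn_cavityEdges hβ hp, Fintype.expect_eq_sum_div_card, Fintype.card_fun,
      Fintype.card_fin, Nat.cast_pow, ← Finset.mul_sum]
    ring
  · intro k
    simp only [Fintype.expect_eq_sum_div_card]
    exact (integrable_finsetSum _ fun I _ => integrable_log_partitionFn hL hβ _).div_const _
  · intro k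
    filter_upwards [ae_hasProbWeights hL] with p hp
    refine (Finset.abs_expect_le _ _).trans (Finset.expect_le Finset.univ_nonempty fun I _ => ?_)
    simpa only [card_cavityEdges] using abs_log_partitionFn_le hβ hp (G := cavityEdges I)

lemma G2_eq_poissonMean [NeZero q] (hL : IsRSS q L) (hβ : 0 ≤ β) (hc : 0 ≤ c) :
    G2 q N β c L = (N : ℝ)⁻¹ * poissonMean (c * N / 2) (pairPressure β L) := by
  have := hL.1
  have hpressure : pairPressure β L
      = fun l => ∫ p, Real.log (partitionFn β (pairEdges 0 l) p) ∂L := rfl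
  rw [hpressure, ← integral_poissonMean (C := 0) (B := β) (by positivity)
    fun l => integrable_log_partitionFn hL hβ _, ← integral_const_mul]
  · refine integral_congr_ae ?_
    filter_upwards [ae_hasProbWeights hL] with p hp
    rw [poissonMean, ← tsum_mul_left]
    refine tsum_congr fun l => ?_
    rw [partitionFn_pairEdges hβ hp]
    ring
  · intro l
    filter_upwards [ae_hasProbWeights hL] with p hp
    simpa only [card_pairEdges, CharP.cast_eq_zero, zero_mul] using
      abs_log_partitionFn_le hβ hp (G := pairEdges 0 l)

theorem poissonMean_system_add_pair_le_cavity [NeZero q] [NeZero N] (hL : IsRSS q L) (hβ : 0 ≤ β)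
    {lam : ℝ} (hlam : 0 ≤ lam) :
    poissonMean lam (systemPressure q N β) + poissonMean lam (pairPressure β L)
      ≤ poissonMean (2 * lam) (cavityPressure N β L) :=
  poissonMean_add_poissonMean_le hlam (abs_systemPressure_le hβ)
    (fun l => (abs_pairPressure_le hL hβ l).trans_eq (zero_add _).symm)
    (abs_cavityPressure_le hL hβ) (sum_choose_mul_system_add_pair_le hL hβ)

end Functionals

end RSB

/-- replica symmetry breaking bound: `p_N(β,c) ≤ G_N^{(1)} - G_N^{(2)}`
for every discrete random spin structure. -/
theorem statement7 (q N : ℕ) (hq : 2 ≤ q) (hN : 0 < N) (β c : ℝ)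
    (hβ : 0 ≤ β) (hc : 0 ≤ c)
    (L : Measure (SpinStruct q)) (hL : IsRSS q L) :
    potts.p q N β c ≤ G1 q N β c L - G2 q N β c L := by
  have : NeZero q := ⟨by omega⟩
  have : NeZero N := ⟨hN.ne'⟩
  have hmean := RSB.poissonMean_system_add_pair_le_cavity (N := N) (lam := c * N / 2) hL hβ
    (by positivity)
  rw [mul_div_cancel₀ _ two_ne_zero] at hmean
  rw [RSB.potts_p_eq_poissonMean hβ hc, RSB.G1_eq_poissonMean hL hβ hc,
    RSB.G2_eq_poissonMean hL hβ hc, ← mul_sub]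
  exact mul_le_mul_of_nonneg_left (le_sub_iff_add_le.2 hmean) (by positivity)
end

section
/- For every β ≥ 0 and c ≥ 0, the extended variational principle holds: lim_{N→∞} p_N(β,c) = lim_{N→∞} inf_{𝓛∈𝒮} ( G_N^(1)(β,c,𝓛) − G_N^(2)(β,c,𝓛) ), and in particular the limit on the right-hand side exists. -/
open MeasureTheory Filter

open Topology
open scoped BigOperators

/-!
Conditionally on their Poisson number, the bonds of the Potts model are independent uniform pairs
of sites, so `N p_N` is a Poisson mean of the log-partition function of uniformly sprinkled bonds.

*Upper bound.* For a fixed Gibbs weight, the loss of log-partition function caused by one bond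
`(v, v')` is `-log (1 - (1 - e^{-β}) ⟨δ(σ_v, σ_v')⟩)`, a positive semidefinite kernel since the
overlap is one and `-log (1 - x)` has nonnegative Taylor coefficients. Hence a bond between two
systems costs no more than the average of one bond within each, and replacing bonds one by one gives
`p_N ≤ G_N^{(1)}(𝓛) - G_N^{(2)}(𝓛)`. The reservoir of the spin structure `𝓛` is first truncated to
`R` sites; as `R → ∞` uniform sites become distinct, and exchangeability applies.

*Lower bound.* The Gibbs state of an `M`-site system, read off at independent uniform sites, is a
random spin structure. Using it as a trial reservoir for `N ≤ M` further sites,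
`M p_M + N inf_𝓛 (G_N^{(1)} - G_N^{(2)}) ≤ (M + N) p_{M + N} + 2 β c N² / (M + N)`, the error coming
from the few bonds among the `N` new sites.

With both bounds `p_N` is almost superadditive and bounded, and the two limits agree.
-/

section Poisson

open Finset.HasAntidiagonal (antidiagonal mem_antidiagonal)

lemma poissonPMF_nonneg {r : ℝ} (hr : 0 ≤ r) (k : ℕ) : 0 ≤ poissonPMF r k := by
  unfold poissonPMF
  positivity

lemma hasSum_poissonPMF (r : ℝ) : HasSum (poissonPMF r) 1 := by
  have h := (NormedSpace.expSeries_div_hasSum_exp (𝔸 := ℝ) r).mul_left (Real.exp (-r))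
  rw [← Real.exp_eq_exp_ℝ, ← Real.exp_add, neg_add_cancel, Real.exp_zero] at h
  exact (funext fun k ↦ mul_div_assoc _ _ _ : poissonPMF r = _) ▸ h

lemma poissonPMF_succ_mul (r : ℝ) (k : ℕ) :
    poissonPMF r (k + 1) * ((k + 1 : ℕ) : ℝ) = r * poissonPMF r k := by
  unfold poissonPMF
  rw [Nat.factorial_succ, Nat.cast_mul]
  field_simp
  exact pow_succ' r k

lemma hasSum_poissonPMF_mul_id (r : ℝ) : HasSum (fun k ↦ poissonPMF r k * (k : ℝ)) r := by
  rw [← hasSum_nat_add_iff' 1]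
  simp only [poissonPMF_succ_mul]
  simpa using (hasSum_poissonPMF r).mul_left r

lemma poissonPMF_mul_poissonPMF (r s : ℝ) (j l : ℕ) :
    poissonPMF r j * poissonPMF s l =
      Real.exp (-(r + s)) / (j + l).factorial * ((j + l).choose j * (r ^ j * s ^ l)) := by
  have hfact : ((j + l).choose j : ℝ) * (j.factorial * l.factorial) = (j + l).factorial := by
    rw [← mul_assoc, Nat.choose_symm_add]
    exact_mod_cast Nat.add_choose_mul_factorial_mul_factorial j l
  unfold poissonPMF
  rw [neg_add, Real.exp_add, ← hfact]
  have : ((j + l).choose j : ℝ) ≠ 0 := by exact_mod_cast (Nat.choose_pos (Nat.le_add_right j l)).ne'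
  field_simp

/-- At most linear growth of a sequence: the class of integrands for which Poisson means are
taken. -/
def HasLinearGrowth (f : ℕ → ℝ) : Prop := ∃ C, ∀ k : ℕ, |f k| ≤ C * (1 + k)

namespace HasLinearGrowth

variable {f g : ℕ → ℝ}

lemma const (a : ℝ) : HasLinearGrowth fun _ ↦ a :=
  ⟨|a|, fun k ↦ le_mul_of_one_le_right (abs_nonneg a) (by linarith [k.cast_nonneg (α := ℝ)])⟩

lemma natCast : HasLinearGrowth fun k ↦ (k : ℝ) := ⟨1, fun k ↦ by rw [Nat.abs_cast]; linarith⟩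

lemma add (hf : HasLinearGrowth f) (hg : HasLinearGrowth g) :
    HasLinearGrowth fun k ↦ f k + g k := by
  obtain ⟨C, hC⟩ := hf
  obtain ⟨D, hD⟩ := hg
  exact ⟨C + D, fun k ↦ (abs_add_le _ _).trans (by linarith [hC k, hD k])⟩

lemma const_mul (a : ℝ) (hf : HasLinearGrowth f) : HasLinearGrowth fun k ↦ a * f k := by
  obtain ⟨C, hC⟩ := hf
  refine ⟨|a| * C, fun k ↦ ?_⟩
  rw [abs_mul, mul_assoc]
  gcongr
  exact hC k

lemma abs (hf : HasLinearGrowth f) : HasLinearGrowth fun k ↦ |f k| := by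
  simpa only [HasLinearGrowth, abs_abs] using hf

lemma summable_poissonPMF_mul {r : ℝ} (hr : 0 ≤ r) (hf : HasLinearGrowth f) :
    Summable fun k ↦ poissonPMF r k * f k := by
  obtain ⟨C, hC⟩ := hf
  have hdom : Summable fun k : ℕ ↦ C * (poissonPMF r k + poissonPMF r k * k) :=
    ((hasSum_poissonPMF r).summable.add (hasSum_poissonPMF_mul_id r).summable).mul_left C
  refine Summable.of_norm_bounded hdom fun k ↦ ?_
  rw [Real.norm_eq_abs, abs_mul, abs_of_nonneg (poissonPMF_nonneg hr k)]
  linarith [mul_le_mul_of_nonneg_left (hC k) (poissonPMF_nonneg hr k)]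

end HasLinearGrowth

/-- The mean of `f` under the Poisson law of parameter `r`. -/
noncomputable def poissonMean (r : ℝ) (f : ℕ → ℝ) : ℝ := ∑' k, poissonPMF r k * f k

section

variable {r : ℝ} {f g : ℕ → ℝ}

lemma poissonMean_const (r a : ℝ) : poissonMean r (fun _ ↦ a) = a := by
  rw [poissonMean, tsum_mul_right, (hasSum_poissonPMF r).tsum_eq, one_mul]

lemma poissonMean_natCast (r : ℝ) : poissonMean r (fun k ↦ (k : ℝ)) = r :=
  (hasSum_poissonPMF_mul_id r).tsum_eq

lemma poissonMean_const_mul (r a : ℝ) (f : ℕ → ℝ) :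
    poissonMean r (fun k ↦ a * f k) = a * poissonMean r f := by
  simp only [poissonMean, ← tsum_mul_left, mul_left_comm]

lemma poissonMean_mono (hr : 0 ≤ r) (hf : HasLinearGrowth f) (hg : HasLinearGrowth g)
    (hfg : ∀ k, f k ≤ g k) : poissonMean r f ≤ poissonMean r g :=
  (hf.summable_poissonPMF_mul hr).tsum_le_tsum
    (fun k ↦ mul_le_mul_of_nonneg_left (hfg k) (poissonPMF_nonneg hr k))
    (hg.summable_poissonPMF_mul hr)

lemma poissonMean_add (hr : 0 ≤ r) (hf : HasLinearGrowth f) (hg : HasLinearGrowth g) :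
    poissonMean r (fun k ↦ f k + g k) = poissonMean r f + poissonMean r g := by
  simp only [poissonMean, mul_add]
  exact (hf.summable_poissonPMF_mul hr).tsum_add (hg.summable_poissonPMF_mul hr)

lemma poissonMean_sub (hr : 0 ≤ r) (hf : HasLinearGrowth f) (hg : HasLinearGrowth g) :
    poissonMean r (fun k ↦ f k - g k) = poissonMean r f - poissonMean r g := by
  simp only [poissonMean, mul_sub]
  exact (hf.summable_poissonPMF_mul hr).tsum_sub (hg.summable_poissonPMF_mul hr)

lemma poissonMean_expect {ι : Type*} [Fintype ι] {F : ι → ℕ → ℝ} (hr : 0 ≤ r)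
    (hF : ∀ i, HasLinearGrowth (F i)) :
    poissonMean r (fun k ↦ 𝔼 i, F i k) = 𝔼 i, poissonMean r (F i) := by
  simp only [poissonMean, Fintype.expect_eq_sum_div_card, ← mul_div_assoc, Finset.mul_sum,
    tsum_div_const]
  rw [Summable.tsum_finsetSum fun i _ ↦ (hF i).summable_poissonPMF_mul hr]

lemma abs_poissonMean_le (hr : 0 ≤ r) {a b : ℝ} (hf : ∀ k, |f k| ≤ a + b * k) :
    |poissonMean r f| ≤ a + b * r := by
  have hdom : HasLinearGrowth fun k ↦ a + b * (k : ℝ) :=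
    (HasLinearGrowth.const a).add (HasLinearGrowth.natCast.const_mul b)
  have hfg : HasLinearGrowth f := by
    obtain ⟨C, hC⟩ := hdom
    exact ⟨C, fun k ↦ (hf k).trans ((le_abs_self _).trans (hC k))⟩
  calc |poissonMean r f| ≤ poissonMean r fun k ↦ |f k| := by
        have hsum := hfg.abs.summable_poissonPMF_mul hr
        have habs : ∀ k, ‖poissonPMF r k * f k‖ = poissonPMF r k * |f k| := fun k ↦ by
          rw [Real.norm_eq_abs, abs_mul, abs_of_nonneg (poissonPMF_nonneg hr k)]
        simp only [poissonMean, ← habs] at hsum ⊢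
        exact norm_tsum_le_tsum_norm hsum
    _ ≤ poissonMean r fun k ↦ a + b * (k : ℝ) := poissonMean_mono hr hfg.abs hdom hf
    _ = a + b * r := by
        rw [poissonMean_add hr (.const a) (HasLinearGrowth.natCast.const_mul b),
          poissonMean_const, poissonMean_const_mul, poissonMean_natCast]

lemma tendsto_poissonMean {ι : Type*} {l : Filter ι} {F : ι → ℕ → ℝ} (hr : 0 ≤ r)
    {C : ℝ} (hC : ∀ᶠ i in l, ∀ k : ℕ, |F i k| ≤ C * (1 + k))
    (hF : ∀ k, Tendsto (F · k) l (𝓝 (f k))) :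
    Tendsto (fun i ↦ poissonMean r (F i)) l (𝓝 (poissonMean r f)) := by
  have hdom : HasLinearGrowth fun k : ℕ ↦ C * (1 + (k : ℝ)) :=
    ((HasLinearGrowth.const 1).add .natCast).const_mul C
  refine tendsto_tsum_of_dominated_convergence (hdom.summable_poissonPMF_mul hr)
    (fun k ↦ (hF k).const_mul _) ?_
  filter_upwards [hC] with i hi k
  rw [Real.norm_eq_abs, abs_mul, abs_of_nonneg (poissonPMF_nonneg hr k)]
  exact mul_le_mul_of_nonneg_left (hi k) (poissonPMF_nonneg hr k)

lemma integral_poissonMean {α : Type*} [MeasurableSpace α] {μ : Measure α} [IsProbabilityMeasure μ]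
    {F : α → ℕ → ℝ} (hr : 0 ≤ r) (hF : ∀ k, AEStronglyMeasurable (F · k) μ)
    {C : ℝ} (hC : ∀ k : ℕ, ∀ᵐ x ∂μ, |F x k| ≤ C * (1 + k)) :
    ∫ x, poissonMean r (F x) ∂μ = poissonMean r fun k ↦ ∫ x, F x k ∂μ := by
  have hdom : HasLinearGrowth fun k : ℕ ↦ C * (1 + (k : ℝ)) :=
    ((HasLinearGrowth.const 1).add .natCast).const_mul C
  have hint : ∀ k, Integrable (F · k) μ := fun k ↦
    .of_bound (hF k) _ (by simpa only [Real.norm_eq_abs] using hC k)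
  have hbound : ∀ k, ∫ x, ‖poissonPMF r k * F x k‖ ∂μ ≤ poissonPMF r k * (C * (1 + k)) := by
    intro k
    simp only [norm_mul, Real.norm_eq_abs, abs_of_nonneg (poissonPMF_nonneg hr k),
      integral_const_mul]
    refine mul_le_mul_of_nonneg_left ?_ (poissonPMF_nonneg hr k)
    simpa using integral_mono_ae (hint k).abs (integrable_const (C * (1 + (k : ℝ)))) (hC k)
  have hsum : Summable fun k ↦ ∫ x, ‖poissonPMF r k * F x k‖ ∂μ :=
    .of_nonneg_of_le (fun k ↦ integral_nonneg fun x ↦ norm_nonneg _) hbound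
      (hdom.summable_poissonPMF_mul hr)
  simp only [poissonMean, ← integral_const_mul]
  exact (integral_tsum_of_summable_integral_norm (fun k ↦ (hint k).const_mul _) hsum).symm

lemma integrable_poissonMean {α : Type*} [MeasurableSpace α] {μ : Measure α}
    [IsProbabilityMeasure μ] {F : α → ℕ → ℝ} (hr : 0 ≤ r) (hF : ∀ k, AEStronglyMeasurable (F · k) μ)
    {C : ℝ} (hC : ∀ k : ℕ, ∀ᵐ x ∂μ, |F x k| ≤ C * (1 + k)) :
    Integrable (fun x ↦ poissonMean r (F x)) μ := by
  have hmeas : AEMeasurable (fun x ↦ poissonMean r (F x)) μ := by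
    refine aemeasurable_of_tendsto_metrizable_ae atTop
      (f := fun (s : Finset ℕ) x ↦ ∑ k ∈ s, poissonPMF r k * F x k) (fun s ↦ ?_) ?_
    · exact Finset.aemeasurable_fun_sum s fun k _ ↦ (hF k).aemeasurable.const_mul _
    · filter_upwards [ae_all_iff.2 hC] with x hx
      exact (HasLinearGrowth.summable_poissonPMF_mul hr ⟨C, hx⟩).hasSum
  refine .of_bound hmeas.aestronglyMeasurable (C + C * r) ?_
  filter_upwards [ae_all_iff.2 hC] with x hx
  exact abs_poissonMean_le hr fun k ↦ (hx k).trans_eq (by ring)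

end

/-- At most linear growth of a doubly indexed sequence. -/
def HasLinearGrowth₂ (f : ℕ → ℕ → ℝ) : Prop := ∃ C, ∀ j l : ℕ, |f j l| ≤ C * (1 + j + l)

namespace HasLinearGrowth₂

variable {f : ℕ → ℕ → ℝ}

lemma exists_nonneg (hf : HasLinearGrowth₂ f) :
    ∃ C, 0 ≤ C ∧ ∀ j l : ℕ, |f j l| ≤ C * (1 + j + l) := by
  obtain ⟨C, hC⟩ := hf
  exact ⟨C, (abs_nonneg (f 0 0)).trans (by simpa using hC 0 0), hC⟩

lemma hasLinearGrowth_poissonMean {s : ℝ} (hf : HasLinearGrowth₂ f) (hs : 0 ≤ s) :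
    HasLinearGrowth fun j ↦ poissonMean s (f j) := by
  obtain ⟨C, hC0, hC⟩ := hf.exists_nonneg
  refine ⟨C * (1 + s), fun j ↦ ?_⟩
  have h := abs_poissonMean_le hs (f := f j) (a := C * (1 + j)) (b := C)
    fun l ↦ (hC j l).trans (by linarith)
  have : 0 ≤ C * (s * j) := by positivity
  linarith

lemma summable_poissonPMF_mul {r s : ℝ} (hf : HasLinearGrowth₂ f) (hr : 0 ≤ r) (hs : 0 ≤ s) :
    Summable fun x : ℕ × ℕ ↦ poissonPMF r x.1 * poissonPMF s x.2 * f x.1 x.2 := by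
  obtain ⟨C, hC0, hC⟩ := hf.exists_nonneg
  have hlin : HasLinearGrowth fun k ↦ 1 + (k : ℝ) := (HasLinearGrowth.const 1).add .natCast
  have hdom := ((hlin.summable_poissonPMF_mul hr).mul_of_nonneg (hlin.summable_poissonPMF_mul hs)
    (fun k ↦ mul_nonneg (poissonPMF_nonneg hr k) (by positivity))
    (fun k ↦ mul_nonneg (poissonPMF_nonneg hs k) (by positivity))).mul_left C
  refine Summable.of_norm_bounded hdom ?_
  rintro ⟨j, l⟩
  have hj := poissonPMF_nonneg hr j
  have hl := poissonPMF_nonneg hs l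
  have hf' : |f j l| ≤ C * ((1 + j) * (1 + l)) := (hC j l).trans (by gcongr; nlinarith)
  calc ‖poissonPMF r j * poissonPMF s l * f j l‖
      = poissonPMF r j * poissonPMF s l * |f j l| := by
        rw [Real.norm_eq_abs, abs_mul, abs_of_nonneg (mul_nonneg hj hl)]
    _ ≤ poissonPMF r j * poissonPMF s l * (C * ((1 + j) * (1 + l))) := by gcongr
    _ = C * (poissonPMF r j * (1 + j) * (poissonPMF s l * (1 + l))) := by ring

lemma poissonMean_poissonMean {r s : ℝ} (hf : HasLinearGrowth₂ f) (hr : 0 ≤ r) (hs : 0 ≤ s) :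
    poissonMean r (fun j ↦ poissonMean s (f j)) =
      ∑' n, ∑ x ∈ antidiagonal n, poissonPMF r x.1 * poissonPMF s x.2 * f x.1 x.2 := by
  have hsum := hf.summable_poissonPMF_mul hr hs
  have hsum' := Finset.HasAntidiagonal.sigmaAntidiagonalEquivProd.summable_iff.2 hsum
  simp only [Function.comp_def] at hsum'
  calc poissonMean r (fun j ↦ poissonMean s (f j))
      = ∑' x : ℕ × ℕ, poissonPMF r x.1 * poissonPMF s x.2 * f x.1 x.2 := by
        rw [hsum.tsum_prod]
        simp only [poissonMean, ← tsum_mul_left, mul_assoc]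
    _ = _ := by
        rw [← Finset.HasAntidiagonal.sigmaAntidiagonalEquivProd.tsum_eq,
          Summable.tsum_sigma' (fun n ↦ (hasSum_fintype _).summable) hsum']
        refine tsum_congr fun n ↦ ?_
        rw [tsum_fintype]
        exact Finset.sum_coe_sort (antidiagonal n)
          fun x ↦ poissonPMF r x.1 * poissonPMF s x.2 * f x.1 x.2

end HasLinearGrowth₂

lemma HasLinearGrowth.comp_add {f : ℕ → ℝ} (hf : HasLinearGrowth f) :
    HasLinearGrowth₂ fun j l ↦ f (j + l) := by
  obtain ⟨C, hC⟩ := hf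
  exact ⟨C, fun j l ↦ by simpa [add_assoc] using hC (j + l)⟩

/-- The mean of `f j l` over the numbers `j` of successes and `l` of failures in `n` independent
trials of success probability `p`. -/
noncomputable def binomialMean (p : ℝ) (n : ℕ) (f : ℕ → ℕ → ℝ) : ℝ :=
  ∑ x ∈ antidiagonal n, n.choose x.1 * (p ^ x.1 * (1 - p) ^ x.2) * f x.1 x.2

section

variable {p : ℝ} {f : ℕ → ℕ → ℝ}

lemma binomialMean_succ (p : ℝ) (n : ℕ) (f : ℕ → ℕ → ℝ) :
    binomialMean p (n + 1) f =
      p * binomialMean p n (fun j l ↦ f (j + 1) l) +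
        (1 - p) * binomialMean p n fun j l ↦ f j (l + 1) := by
  have h := Finset.sum_antidiagonal_choose_succ_mul
    (fun j l ↦ p ^ j * (1 - p) ^ l * f j l) n
  simp only [binomialMean, mul_assoc] at h ⊢
  rw [h, add_comm, Finset.mul_sum, Finset.mul_sum]
  congr 1 <;> refine Finset.sum_congr rfl fun x hx ↦ ?_
  · rw [Nat.choose_symm_of_eq_add (mem_antidiagonal.1 hx).symm]
    ring
  · ring

lemma binomialMean_expect {ι : Type*} [Fintype ι] (p : ℝ) (n : ℕ) (F : ι → ℕ → ℕ → ℝ) :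
    binomialMean p n (fun j l ↦ 𝔼 i, F i j l) = 𝔼 i, binomialMean p n (F i) := by
  simp only [binomialMean, Finset.mul_expect, Finset.expect_sum_comm]

lemma binomialMean_const (p : ℝ) (n : ℕ) (a : ℝ) : binomialMean p n (fun _ _ ↦ a) = a := by
  have h := (Commute.all p (1 - p)).add_pow' n
  simp only [add_sub_cancel, one_pow, nsmul_eq_mul] at h
  rw [binomialMean, ← Finset.sum_mul, ← h, one_mul]

lemma hasLinearGrowth_binomialMean (hp : 0 ≤ p) (hp1 : p ≤ 1) (hf : HasLinearGrowth₂ f) :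
    HasLinearGrowth fun n ↦ binomialMean p n f := by
  obtain ⟨C, hC⟩ := hf
  refine ⟨C, fun n ↦ ?_⟩
  have : 0 ≤ 1 - p := sub_nonneg.2 hp1
  calc |binomialMean p n f|
      ≤ ∑ x ∈ antidiagonal n, n.choose x.1 * (p ^ x.1 * (1 - p) ^ x.2) * |f x.1 x.2| := by
        refine (Finset.abs_sum_le_sum_abs _ _).trans_eq (Finset.sum_congr rfl fun x _ ↦ ?_)
        rw [abs_mul, abs_of_nonneg (by positivity)]
    _ ≤ binomialMean p n fun _ _ ↦ C * (1 + n) := by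
        refine Finset.sum_le_sum fun x hx ↦ mul_le_mul_of_nonneg_left ?_ (by positivity)
        rw [← mem_antidiagonal.1 hx, Nat.cast_add, ← add_assoc]
        exact hC _ _
    _ = C * (1 + n) := binomialMean_const p n _

lemma poissonMean_binomialMean {Λ : ℝ} (hΛ : 0 ≤ Λ) (hp : 0 ≤ p) (hp1 : p ≤ 1)
    (hf : HasLinearGrowth₂ f) :
    poissonMean Λ (fun n ↦ binomialMean p n f) =
      poissonMean (p * Λ) fun j ↦ poissonMean ((1 - p) * Λ) (f j) := by
  rw [hf.poissonMean_poissonMean (by positivity) (mul_nonneg (sub_nonneg.2 hp1) hΛ), poissonMean]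
  refine tsum_congr fun n ↦ ?_
  rw [binomialMean, Finset.mul_sum]
  refine Finset.sum_congr rfl fun x hx ↦ ?_
  rw [poissonPMF_mul_poissonPMF, mem_antidiagonal.1 hx, poissonPMF,
    ← mem_antidiagonal.1 hx, mul_pow, mul_pow, pow_add]
  ring_nf

lemma poissonMean_poissonMean_comp_add {r s : ℝ} (hr : 0 ≤ r) (hs : 0 ≤ s) {f : ℕ → ℝ}
    (hf : HasLinearGrowth f) :
    poissonMean r (fun j ↦ poissonMean s fun l ↦ f (j + l)) = poissonMean (r + s) f := by
  rw [hf.comp_add.poissonMean_poissonMean hr hs, poissonMean]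
  refine tsum_congr fun n ↦ ?_
  have hbinom := (Commute.all r s).add_pow' n
  simp only [nsmul_eq_mul] at hbinom
  rw [poissonPMF, hbinom, mul_div_right_comm, Finset.mul_sum, Finset.sum_mul]
  refine Finset.sum_congr rfl fun x hx ↦ ?_
  rw [poissonPMF_mul_poissonPMF, mem_antidiagonal.1 hx]

end

end Poisson

section UniformTuples

variable {ι κ : Type*} [Fintype ι] [Fintype κ]

lemma abs_expect_le_of_forall_abs_le [Nonempty ι] {f : ι → ℝ} {C : ℝ} (hf : ∀ i, |f i| ≤ C) :
    |𝔼 i, f i| ≤ C :=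
  (Finset.abs_expect_le _ _).trans (Finset.expect_le Finset.univ_nonempty fun i _ ↦ hf i)

lemma expect_le_expect_add_const [Nonempty ι] {f g : ι → ℝ} {a : ℝ} (hfg : ∀ i, f i ≤ g i + a) :
    𝔼 i, f i ≤ 𝔼 i, g i + a := by
  simpa only [Finset.expect_add_distrib, Fintype.expect_const] using
    Finset.expect_le_expect (s := Finset.univ) fun i _ ↦ hfg i

lemma expect_prod_type (f : ι × κ → ℝ) : 𝔼 x, f x = 𝔼 i, 𝔼 k, f (i, k) :=
  Finset.expect_product Finset.univ Finset.univ f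

lemma expect_fin_succ {n : ℕ} (f : (Fin (n + 1) → ι) → ℝ) :
    𝔼 e, f e = 𝔼 x, 𝔼 e : Fin n → ι, f (Fin.cons x e) := by
  rw [← Fintype.expect_equiv (Fin.consEquiv fun _ ↦ ι) (fun x ↦ f (Fin.cons x.1 x.2)) f
    fun _ ↦ rfl, expect_prod_type]

lemma expect_arrow_prod {ν : Type*} [Fintype ν] [DecidableEq ν] (f : (ν → ι × κ) → ℝ) :
    𝔼 e, f e = 𝔼 I : ν → ι, 𝔼 K : ν → κ, f fun i ↦ (I i, K i) := by
  rw [← Fintype.expect_equiv (Equiv.arrowProdEquivProdArrow ν (fun _ ↦ ι) fun _ ↦ κ).symm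
    (fun x ↦ f fun i ↦ (x.1 i, x.2 i)) f fun _ ↦ rfl, expect_prod_type]

end UniformTuples

section Poissonization

variable {ι : Type*}

/-- The number of occurrences of each value in the tuple `e`. -/
noncomputable def occurrences {n : ℕ} (e : Fin n → ι) : ι →₀ ℕ := ∑ l, Finsupp.single (e l) 1

variable [Fintype ι]

lemma sum_occurrences_mul {n : ℕ} (e : Fin n → ι) (b : ι → ℕ) :
    ∑ i, occurrences e i * b i = ∑ l, b (e l) := by
  classical
  simp only [occurrences, Finsupp.coe_finsetSum, Finset.sum_apply, Finset.sum_mul]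
  rw [Finset.sum_comm]
  simp [Finsupp.single_apply]

lemma sum_occurrences {n : ℕ} (e : Fin n → ι) : ∑ i, occurrences e i = n := by
  simpa using sum_occurrences_mul e 1

open MvPolynomial in
lemma card_occurrences_eq {J : ι → ℕ} {n : ℕ} (hJ : ∑ i, J i = n) :
    Finset.card {e : Fin n → ι | ⇑(occurrences e) = J} = Nat.multinomial Finset.univ J := by
  classical
  have hexpand : (∑ i, X i : MvPolynomial ι ℕ) ^ n =
      ∑ e : Fin n → ι, monomial (occurrences e) 1 := by
    rw [Fintype.sum_pow]
    exact Finset.sum_congr rfl fun e _ ↦ (monomial_sum_one _ _).symm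
  have hcoeff := congrArg (coeff (Finsupp.equivFunOnFinite.symm J)) hexpand
  rw [coeff_sum_X_pow_of_fintype, if_pos (by simpa [Finsupp.sum_fintype] using hJ),
    coeff_sum, Finsupp.multinomial_eq_of_support_subset (Finset.subset_univ _)] at hcoeff
  simp only [coeff_monomial, Finset.sum_boole, Nat.cast_id] at hcoeff
  simpa [Finsupp.ext_iff, funext_iff] using hcoeff.symm

lemma prod_poissonPMF_mul_card (r : ℝ) (J : ι → ℕ) :
    (∏ i, poissonPMF r (J i)) * (Fintype.card ι : ℝ) ^ (∑ i, J i) =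
      poissonPMF (Fintype.card ι * r) (∑ i, J i) * Nat.multinomial Finset.univ J := by
  have hspec : (∏ i, ((J i).factorial : ℝ)) * Nat.multinomial Finset.univ J =
      (∑ i, J i).factorial := by
    exact_mod_cast Nat.multinomial_spec Finset.univ J
  have hprod : ∏ i, ((J i).factorial : ℝ) ≠ 0 :=
    Finset.prod_ne_zero_iff.2 fun i _ ↦ by positivity
  simp only [poissonPMF, Finset.prod_div_distrib, Finset.prod_mul_distrib,
    Finset.prod_pow_eq_pow_sum, Finset.prod_const, ← Real.exp_nat_mul, Finset.card_univ]
  rw [← hspec, mul_pow, mul_neg]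
  have : (Nat.multinomial Finset.univ J : ℝ) ≠ 0 := by
    exact_mod_cast (Nat.multinomial_pos Finset.univ J).ne'
  field_simp

lemma sum_piAntidiag_prod_poissonPMF_mul [DecidableEq ι] [Nonempty ι] (r : ℝ)
    (g : (ι → ℕ) → ℝ) (n : ℕ) :
    ∑ J ∈ Finset.piAntidiag Finset.univ n, (∏ i, poissonPMF r (J i)) * g J =
      poissonPMF (Fintype.card ι * r) n * 𝔼 e : Fin n → ι, g (occurrences e) := by
  have hcard : (Fintype.card ι : ℝ) ^ n ≠ 0 := by positivity
  have hfiber : ∑ e : Fin n → ι, g (occurrences e) =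
      ∑ J ∈ Finset.piAntidiag Finset.univ n, (Nat.multinomial Finset.univ J : ℝ) * g J := by
    rw [← Finset.sum_fiberwise_of_maps_to (s := Finset.univ)
      (g := fun e : Fin n → ι ↦ ⇑(occurrences e)) (t := Finset.piAntidiag Finset.univ n)
      fun e _ ↦ by simp [sum_occurrences]]
    refine Finset.sum_congr rfl fun J hJ ↦ ?_
    rw [Finset.sum_congr rfl fun e he ↦ congrArg g (Finset.mem_filter.1 he).2, Finset.sum_const,
      card_occurrences_eq (Finset.mem_piAntidiag.1 hJ).1, nsmul_eq_mul]
  rw [Fintype.expect_eq_sum_div_card, hfiber, Fintype.card_fun, Fintype.card_fin, Nat.cast_pow,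
    mul_div_assoc', eq_div_iff hcard, Finset.sum_mul, Finset.mul_sum]
  refine Finset.sum_congr rfl fun J hJ ↦ ?_
  have h := prod_poissonPMF_mul_card r J
  rw [(Finset.mem_piAntidiag.1 hJ).1] at h
  linear_combination g J * h

lemma tsum_eq_tsum_sum_piAntidiag [DecidableEq ι] {f : (ι → ℕ) → ℝ}
    (hf : Summable fun n ↦ ∑ J ∈ Finset.piAntidiag Finset.univ n, |f J|) :
    ∑' J, f J = ∑' n, ∑ J ∈ Finset.piAntidiag Finset.univ n, f J := by
  let total : (ι → ℕ) → ℕ := fun J ↦ ∑ i, J i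
  have hfiber (n : ℕ) (F : (ι → ℕ) → ℝ) : HasSum (fun J : {J // total J = n} ↦ F J)
      (∑ J ∈ Finset.piAntidiag Finset.univ n, F J) := by
    have hmem (J : ι → ℕ) : total J = n ↔ J ∈ Finset.piAntidiag Finset.univ n := by simp [total]
    exact (Equiv.subtypeEquivRight hmem).hasSum_iff.2 (Finset.hasSum _ F)
  have hsum : Summable fun x : Σ n, {J // total J = n} ↦ |f x.2| :=
    (summable_sigma_of_nonneg fun _ ↦ abs_nonneg _).2
      ⟨fun n ↦ (hfiber n fun J ↦ |f J|).summable, by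
        simpa only [(hfiber _ fun J ↦ |f J|).tsum_eq] using hf⟩
  calc ∑' J, f J = ∑' x : Σ n, {J // total J = n}, f x.2 :=
        ((Equiv.sigmaFiberEquiv total).tsum_eq f).symm
    _ = ∑' n, ∑' J : {J // total J = n}, f J :=
        Summable.tsum_sigma' (fun n ↦ (hfiber n f).summable) hsum.of_abs
    _ = _ := tsum_congr fun n ↦ (hfiber n f).tsum_eq

lemma tsum_prod_poissonPMF_mul [Nonempty ι] {r : ℝ} (hr : 0 ≤ r) {g : (ι → ℕ) → ℝ}
    {C : ℝ} (hg : ∀ J, |g J| ≤ C * (1 + (∑ i, J i : ℕ))) :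
    ∑' J : ι → ℕ, (∏ i, poissonPMF r (J i)) * g J =
      poissonMean (Fintype.card ι * r) fun n ↦ 𝔼 e : Fin n → ι, g (occurrences e) := by
  classical
  have habs (J : ι → ℕ) : |(∏ i, poissonPMF r (J i)) * g J| =
      (∏ i, poissonPMF r (J i)) * |g J| := by
    rw [abs_mul, abs_of_nonneg (Finset.prod_nonneg fun i _ ↦ poissonPMF_nonneg hr _)]
  rw [tsum_eq_tsum_sum_piAntidiag]
  · exact tsum_congr fun n ↦ sum_piAntidiag_prod_poissonPMF_mul r g n
  · simp only [habs, sum_piAntidiag_prod_poissonPMF_mul]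
    refine HasLinearGrowth.summable_poissonPMF_mul (by positivity)
      ⟨C, fun n ↦ abs_expect_le_of_forall_abs_le fun e ↦ ?_⟩
    have h := hg (occurrences e)
    rwa [sum_occurrences, ← abs_abs] at h

end Poissonization

section Sprinkling

variable {E ι κ μ : Type*} [AddCommMonoid E]

/-- Adding one of the bonds `b x` to the energy changes `Φ` by at most `β`. -/
def HasBoundedIncrements (β : ℝ) (b : ι → E) (Φ : E → ℝ) : Prop :=
  ∀ h x, |Φ (h + b x) - Φ h| ≤ β

variable [Fintype ι]

/-- The mean of `Φ` at the energy `h` augmented by `n` independent uniformly chosen bonds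
`b x`. -/
noncomputable def sprinkle (b : ι → E) (n : ℕ) (Φ : E → ℝ) (h : E) : ℝ :=
  𝔼 e : Fin n → ι, Φ (h + ∑ i, b (e i))

lemma sprinkle_zero (b : ι → E) (Φ : E → ℝ) : sprinkle b 0 Φ = Φ := by
  funext h
  simp [sprinkle]

lemma sprinkle_succ (b : ι → E) (n : ℕ) (Φ : E → ℝ) (h : E) :
    sprinkle b (n + 1) Φ h = 𝔼 x, sprinkle b n Φ (h + b x) := by
  simp only [sprinkle, expect_fin_succ, Fin.sum_univ_succ, Fin.cons_zero, Fin.cons_succ, add_assoc]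

lemma sprinkle_expect_add [Fintype κ] (b : ι → E) (n : ℕ) (Φ : E → ℝ) (b' : κ → E) (h : E) :
    sprinkle b n (fun h ↦ 𝔼 y, Φ (h + b' y)) h = 𝔼 y, sprinkle b n Φ (h + b' y) := by
  simp only [sprinkle, add_right_comm h]
  exact Finset.expect_comm ..

lemma sprinkle_add (b : ι → E) (m n : ℕ) (Φ : E → ℝ) (h : E) :
    sprinkle b (m + n) Φ h = sprinkle b m (sprinkle b n Φ) h := by
  induction m generalizing h with
  | zero => rw [zero_add, sprinkle_zero]
  | succ m ih => simp only [Nat.succ_add, sprinkle_succ, ih]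

lemma sprinkle_mono (b : ι → E) (n : ℕ) {Φ Ψ : E → ℝ} (hΦΨ : ∀ h, Φ h ≤ Ψ h) (h : E) :
    sprinkle b n Φ h ≤ sprinkle b n Ψ h :=
  Finset.expect_le_expect fun _ _ ↦ hΦΨ _

lemma sprinkle_combination (b : ι → E) (n : ℕ) (s t : ℝ) (Φ Ψ : E → ℝ) (h : E) :
    sprinkle b n (fun h ↦ s * Φ h + t * Ψ h) h = s * sprinkle b n Φ h + t * sprinkle b n Ψ h := by
  simp only [sprinkle, Finset.expect_add_distrib, Finset.mul_expect]

lemma sprinkle_add_const [Nonempty ι] (b : ι → E) (n : ℕ) (Φ : E → ℝ) (ε : ℝ) (h : E) :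
    sprinkle b n (fun h ↦ Φ h + ε) h = sprinkle b n Φ h + ε := by
  rw [sprinkle, Finset.expect_add_distrib, Fintype.expect_const, sprinkle]

lemma sprinkle_comp_equiv [Fintype κ] (σ : κ ≃ ι) (b : ι → E) (n : ℕ) (Φ : E → ℝ) (h : E) :
    sprinkle (b ∘ σ) n Φ h = sprinkle b n Φ h :=
  Fintype.expect_equiv ((Equiv.refl _).arrowCongr σ) _ _ fun _ ↦ rfl

lemma sprinkle_poissonMean {r : ℝ} (hr : 0 ≤ r) {F : ℕ → E → ℝ}
    (hF : ∀ h, HasLinearGrowth fun n ↦ F n h) (b : ι → E) (j : ℕ) (h : E) :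
    sprinkle b j (fun h ↦ poissonMean r fun n ↦ F n h) h =
      poissonMean r fun n ↦ sprinkle b j (F n) h :=
  (poissonMean_expect hr fun _ ↦ hF _).symm

section Map

variable {E₁ E₂ F₁ F₂ : Type*} [AddCommMonoid E₁] [AddCommMonoid E₂]
  [FunLike F₁ E₁ E] [AddMonoidHomClass F₁ E₁ E] [FunLike F₂ E₂ E] [AddMonoidHomClass F₂ E₂ E]

lemma sprinkle_map (f : F₁) (b : ι → E₁) (n : ℕ) (Φ : E → ℝ) (h : E₁) :
    sprinkle (f ∘ b) n Φ (f h) = sprinkle b n (Φ ∘ f) h := by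
  simp only [sprinkle, Function.comp_apply, map_add, map_sum]

lemma sprinkle_sprinkle_eq_add [Fintype κ] [Nonempty ι] [Nonempty κ] (f₁ : F₁) (f₂ : F₂)
    (b₁ : ι → E₁) (b₂ : κ → E₂) {Φ : E → ℝ} {Φ₁ : E₁ → ℝ} {Φ₂ : E₂ → ℝ}
    (hΦ : ∀ h₁ h₂, Φ (f₁ h₁ + f₂ h₂) = Φ₁ h₁ + Φ₂ h₂) (j l : ℕ) :
    sprinkle (f₁ ∘ b₁) j (sprinkle (f₂ ∘ b₂) l Φ) 0 =
      sprinkle b₁ j Φ₁ 0 + sprinkle b₂ l Φ₂ 0 := by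
  simp only [sprinkle, Function.comp_apply, zero_add, ← map_sum, hΦ, Finset.expect_add_distrib,
    Fintype.expect_const]

end Map

namespace HasBoundedIncrements

variable {β : ℝ} {b : ι → E} {b' : κ → E} {Φ : E → ℝ}

lemma abs_expect_sub_le [Nonempty ι] (hΦ : HasBoundedIncrements β b Φ) (h : E) :
    |𝔼 x, Φ (h + b x) - Φ h| ≤ β := by
  rw [← Fintype.expect_const (ι := ι) (Φ h), ← Finset.expect_sub_distrib]
  exact abs_expect_le_of_forall_abs_le fun x ↦ hΦ h x

lemma abs_sprinkle_sub_le [Nonempty ι] (hΦ : HasBoundedIncrements β b Φ) (n : ℕ) (h : E) :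
    |sprinkle b n Φ h - Φ h| ≤ β * n := by
  induction n generalizing h with
  | zero => simp [sprinkle_zero]
  | succ n ih =>
    rw [sprinkle_succ, ← Fintype.expect_const (ι := ι) (Φ h), ← Finset.expect_sub_distrib]
    refine abs_expect_le_of_forall_abs_le fun x ↦ (abs_sub_le _ (Φ (h + b x)) _).trans ?_
    push_cast
    linarith [ih (h + b x), hΦ h x]

lemma hasBoundedIncrements_sprinkle [Nonempty ι] (hΦ : HasBoundedIncrements β b' Φ) (n : ℕ) :
    HasBoundedIncrements β b' (sprinkle b n Φ) := by
  intro h y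
  rw [sprinkle, sprinkle, ← Finset.expect_sub_distrib]
  refine abs_expect_le_of_forall_abs_le fun e ↦ ?_
  rw [add_right_comm]
  exact hΦ _ y

lemma hasLinearGrowth_sprinkle [Nonempty ι] (hΦ : HasBoundedIncrements β b Φ) (h : E) :
    HasLinearGrowth fun n ↦ sprinkle b n Φ h := by
  have hβ : 0 ≤ β := (abs_nonneg _).trans (hΦ h (Classical.arbitrary ι))
  refine ⟨|Φ h| + β, fun n ↦ ?_⟩
  have hn : 0 ≤ |Φ h| * n := by positivity
  linarith [abs_sub_abs_le_abs_sub (sprinkle b n Φ h) (Φ h), hΦ.abs_sprinkle_sub_le n h]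

lemma hasLinearGrowth₂_sprinkle [Nonempty ι] [Fintype κ] [Nonempty κ]
    (hΦ : HasBoundedIncrements β b Φ) (hΦ' : HasBoundedIncrements β b' Φ) (h : E) :
    HasLinearGrowth₂ fun j l ↦ sprinkle b j (sprinkle b' l Φ) h := by
  have hβ : 0 ≤ β := (abs_nonneg _).trans (hΦ h (Classical.arbitrary ι))
  refine ⟨|Φ h| + β, fun j l ↦ ?_⟩
  have hjl : 0 ≤ |Φ h| * (j + l) := by positivity
  have hj := (hΦ.hasBoundedIncrements_sprinkle (b := b') l).abs_sprinkle_sub_le j h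
  have hl := hΦ'.abs_sprinkle_sub_le l h
  linarith [abs_sub_abs_le_abs_sub (sprinkle b j (sprinkle b' l Φ) h)
    (sprinkle b' l Φ h), abs_sub_abs_le_abs_sub (sprinkle b' l Φ h) (Φ h)]

end HasBoundedIncrements

section Interpolation

variable [Fintype κ] [Fintype μ] [Nonempty ι] [Nonempty κ] [Nonempty μ] {b₁ : ι → E} {b₂ : κ → E}
  {b₃ : μ → E} {Φ : E → ℝ} {p ε : ℝ}

-- The bonds are exchanged one at a time, which replaces the derivative along the interpolation.
lemma binomialMean_sprinkle_le (hp : 0 ≤ p) (hp1 : p ≤ 1)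
    (hcmp : ∀ h, p * 𝔼 x, Φ (h + b₁ x) + (1 - p) * 𝔼 y, Φ (h + b₂ y) ≤
      𝔼 z, Φ (h + b₃ z) + ε) (n : ℕ) (h : E) :
    binomialMean p n (fun j l ↦ sprinkle b₁ j (sprinkle b₂ l Φ) h) ≤
      sprinkle b₃ n Φ h + n * ε := by
  induction n generalizing h with
  | zero => simp [binomialMean, sprinkle_zero]
  | succ n ih =>
    have hshift (j l : ℕ) : sprinkle b₁ j (sprinkle b₂ (l + 1) Φ) h =
        𝔼 y, sprinkle b₁ j (sprinkle b₂ l Φ) (h + b₂ y) := by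
      rw [← sprinkle_expect_add]
      exact congrFun (congrArg _ (funext fun h ↦ sprinkle_succ ..)) h
    have hmean₁ := expect_le_expect_add_const fun x ↦ ih (h + b₁ x)
    have hmean₂ := expect_le_expect_add_const fun y ↦ ih (h + b₂ y)
    rw [← sprinkle_expect_add] at hmean₁ hmean₂
    simp only [binomialMean_succ, sprinkle_succ b₁, hshift, binomialMean_expect]
    have hnext := sprinkle_mono b₃ n hcmp h
    rw [sprinkle_combination, sprinkle_add_const, sprinkle_expect_add b₃ n Φ b₃,
      ← sprinkle_succ] at hnext
    push_cast
    linarith [mul_le_mul_of_nonneg_left hmean₁ hp,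
      mul_le_mul_of_nonneg_left hmean₂ (sub_nonneg.2 hp1)]

lemma poissonMean_sprinkle_le {β Λ : ℝ} (hΛ : 0 ≤ Λ)
    (h₁ : HasBoundedIncrements β b₁ Φ) (h₂ : HasBoundedIncrements β b₂ Φ)
    (h₃ : HasBoundedIncrements β b₃ Φ) (hp : 0 ≤ p) (hp1 : p ≤ 1)
    (hcmp : ∀ h, p * 𝔼 x, Φ (h + b₁ x) + (1 - p) * 𝔼 y, Φ (h + b₂ y) ≤
      𝔼 z, Φ (h + b₃ z) + ε) (h : E) :
    poissonMean (p * Λ) (fun j ↦ poissonMean ((1 - p) * Λ)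
        fun l ↦ sprinkle b₁ j (sprinkle b₂ l Φ) h) ≤
      poissonMean Λ (fun n ↦ sprinkle b₃ n Φ h) + Λ * ε := by
  have hmixed := h₁.hasLinearGrowth₂_sprinkle h₂ h
  have herror := HasLinearGrowth.natCast.const_mul ε
  have hall := h₃.hasLinearGrowth_sprinkle h
  calc _ = poissonMean Λ fun n ↦ binomialMean p n fun j l ↦ sprinkle b₁ j (sprinkle b₂ l Φ) h :=
        (poissonMean_binomialMean hΛ hp hp1 hmixed).symm
    _ ≤ poissonMean Λ fun n ↦ sprinkle b₃ n Φ h + ε * n :=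
        poissonMean_mono hΛ (hasLinearGrowth_binomialMean hp hp1 hmixed) (hall.add herror)
          fun n ↦ (binomialMean_sprinkle_le hp hp1 hcmp n h).trans_eq (by rw [mul_comm])
    _ = _ := by
        rw [poissonMean_add hΛ hall herror, poissonMean_const_mul, poissonMean_natCast, mul_comm ε]

end Interpolation

end Sprinkling

section Sites

variable {Ω S V W : Type*} [DecidableEq S]

/-- The bond joining the site `x.1` of the family `s` to the site `x.2` of the family `t`: it costs
one unit of energy when the two spins agree. A site is a random variable, giving its spin in each
configuration `ω`. -/
def bond (s : V → Ω → S) (t : W → Ω → S) (x : V × W) (ω : Ω) : ℕ :=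
  if s x.1 ω = t x.2 ω then 1 else 0

variable (s : V → Ω → S) (t : W → Ω → S)

lemma bond_le_one (x : V × W) (ω : Ω) : bond s t x ω ≤ 1 := by
  unfold bond
  split_ifs <;> simp

lemma bond_swap (x : V × W) : bond t s x.swap = bond s t x := by
  funext ω
  simp only [bond, Prod.fst_swap, Prod.snd_swap, eq_comm]

lemma bond_sumElim_inl_inl (v v' : V) :
    bond (Sum.elim s t) (Sum.elim s t) (.inl v, .inl v') = bond s s (v, v') := rfl

lemma bond_sumElim_inl_inr (v : V) (v' : W) :
    bond (Sum.elim s t) (Sum.elim s t) (.inl v, .inr v') = bond s t (v, v') := rfl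

lemma bond_sumElim_inr_inl (v : W) (v' : V) :
    bond (Sum.elim s t) (Sum.elim s t) (.inr v, .inl v') = bond s t (v', v) :=
  bond_swap s t (v', v)

lemma bond_sumElim_inr_inr (v v' : W) :
    bond (Sum.elim s t) (Sum.elim s t) (.inr v, .inr v') = bond t t (v, v') := rfl

end Sites

section LogPartition

variable {Ω Ω' : Type*}

/-- A summable, nonnegative and nonzero a priori weight on the configurations `Ω`. -/
structure IsWeight (w : Ω → ℝ) : Prop where
  nonneg : ∀ ω, 0 ≤ w ω
  summable : Summable w
  tsum_pos : 0 < ∑' ω, w ω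

/-- The partition function at inverse temperature `β` of the energy `h`, with a priori weight
`w`. -/
noncomputable def partitionFunction (w : Ω → ℝ) (β : ℝ) (h : Ω → ℕ) : ℝ :=
  ∑' ω, w ω * Real.exp (-β * h ω)

/-- The logarithm of the partition function. -/
noncomputable def logPartition (w : Ω → ℝ) (β : ℝ) (h : Ω → ℕ) : ℝ :=
  Real.log (partitionFunction w β h)

lemma exp_neg_mul_natCast_le_one {β : ℝ} (hβ : 0 ≤ β) (n : ℕ) : Real.exp (-β * n) ≤ 1 :=
  Real.exp_le_one_iff.2 (mul_nonpos_of_nonpos_of_nonneg (neg_nonpos.2 hβ) n.cast_nonneg)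

lemma isWeight_one [Finite Ω] [Nonempty Ω] : IsWeight (1 : Ω → ℝ) := by
  cases nonempty_fintype Ω
  exact ⟨fun _ ↦ zero_le_one, .of_finite, by simp [tsum_fintype, Fintype.card_pos]⟩

namespace IsWeight

variable {w : Ω → ℝ} {w' : Ω' → ℝ} {β : ℝ}

lemma tsum_mul_tsum (hw : IsWeight w) (hw' : IsWeight w') :
    (∑' ω, w ω) * ∑' ω, w' ω = ∑' x : Ω × Ω', w x.1 * w' x.2 :=
  tsum_mul_tsum_of_summable_norm hw.summable.norm hw'.summable.norm

lemma prod (hw : IsWeight w) (hw' : IsWeight w') : IsWeight fun x : Ω × Ω' ↦ w x.1 * w' x.2 where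
  nonneg _ := mul_nonneg (hw.nonneg _) (hw'.nonneg _)
  summable := hw.summable.mul_of_nonneg hw'.summable hw.nonneg hw'.nonneg
  tsum_pos := hw.tsum_mul_tsum hw' ▸ mul_pos hw.tsum_pos hw'.tsum_pos

lemma summable_mul_exp (hw : IsWeight w) (hβ : 0 ≤ β) (h : Ω → ℕ) :
    Summable fun ω ↦ w ω * Real.exp (-β * h ω) :=
  .of_nonneg_of_le (fun ω ↦ mul_nonneg (hw.nonneg ω) (Real.exp_nonneg _))
    (fun ω ↦ mul_le_of_le_one_right (hw.nonneg ω) (exp_neg_mul_natCast_le_one hβ _)) hw.summable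

lemma mul_exp (hw : IsWeight w) (hβ : 0 ≤ β) (h : Ω → ℕ) :
    IsWeight fun ω ↦ w ω * Real.exp (-β * h ω) where
  nonneg ω := mul_nonneg (hw.nonneg ω) (Real.exp_nonneg _)
  summable := hw.summable_mul_exp hβ h
  tsum_pos := by
    obtain ⟨ω, hω⟩ : ∃ ω, w ω ≠ 0 := by
      by_contra! hzero
      simpa [hzero] using hw.tsum_pos
    exact (hw.summable_mul_exp hβ h).tsum_pos
      (fun ω ↦ mul_nonneg (hw.nonneg ω) (Real.exp_nonneg _)) ω
      (mul_pos ((hw.nonneg ω).lt_of_ne' hω) (Real.exp_pos _))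

lemma partitionFunction_pos (hw : IsWeight w) (hβ : 0 ≤ β) (h : Ω → ℕ) :
    0 < partitionFunction w β h :=
  (hw.mul_exp hβ h).tsum_pos

lemma logPartition_antitone (hw : IsWeight w) (hβ : 0 ≤ β) : Antitone (logPartition w β) := by
  refine fun h h' hh' ↦ Real.log_le_log (hw.partitionFunction_pos hβ h') ?_
  refine (hw.summable_mul_exp hβ h').tsum_le_tsum (fun ω ↦ ?_) (hw.summable_mul_exp hβ h)
  refine mul_le_mul_of_nonneg_left (Real.exp_le_exp.2 ?_) (hw.nonneg ω)
  exact mul_le_mul_of_nonpos_left (Nat.cast_le.2 (hh' ω)) (neg_nonpos.2 hβ)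

lemma logPartition_add_natCast (hw : IsWeight w) (hβ : 0 ≤ β) (h : Ω → ℕ) (n : ℕ) :
    logPartition w β (h + n) = logPartition w β h - β * n := by
  have hshift : partitionFunction w β (h + n) =
      partitionFunction w β h * Real.exp (-β * n) := by
    simp only [partitionFunction, ← tsum_mul_right, mul_assoc, ← Real.exp_add]
    simp [mul_add]
  rw [logPartition, hshift, Real.log_mul (hw.partitionFunction_pos hβ h).ne' (Real.exp_ne_zero _),
    Real.log_exp, logPartition]
  ring

lemma hasBoundedIncrements_logPartition {ι : Type*} (hw : IsWeight w) (hβ : 0 ≤ β)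
    {b : ι → Ω → ℕ} (hb : ∀ x ω, b x ω ≤ 1) : HasBoundedIncrements β b (logPartition w β) := by
  intro h x
  have hle : h + b x ≤ h + ((1 : ℕ) : Ω → ℕ) := add_le_add le_rfl fun ω ↦ by simpa using hb x ω
  have hlow := hw.logPartition_antitone hβ hle
  have hup := hw.logPartition_antitone hβ (le_self_add : h ≤ h + b x)
  rw [hw.logPartition_add_natCast hβ, Nat.cast_one, mul_one] at hlow
  rw [abs_le]
  constructor <;> linarith

lemma logPartition_prod (hw : IsWeight w) (hw' : IsWeight w') (hβ : 0 ≤ β) (h : Ω → ℕ)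
    (h' : Ω' → ℕ) :
    logPartition (fun x : Ω × Ω' ↦ w x.1 * w' x.2) β (h ∘ Prod.fst + h' ∘ Prod.snd) =
      logPartition w β h + logPartition w' β h' := by
  rw [logPartition, logPartition, logPartition, ← Real.log_mul (hw.partitionFunction_pos hβ h).ne'
    (hw'.partitionFunction_pos hβ h').ne']
  congr 1
  refine Eq.trans (tsum_congr fun x ↦ ?_) ((hw.mul_exp hβ h).tsum_mul_tsum (hw'.mul_exp hβ h')).symm
  simp only [Pi.add_apply, Function.comp_apply, Nat.cast_add, mul_add, Real.exp_add]
  ring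

end IsWeight

lemma logPartition_mul_exp (w : Ω → ℝ) (β : ℝ) (g h : Ω → ℕ) :
    logPartition (fun ω ↦ w ω * Real.exp (-β * g ω)) β h = logPartition w β (g + h) := by
  simp only [logPartition, partitionFunction, mul_assoc, ← Real.exp_add, Pi.add_apply,
    Nat.cast_add, mul_add]

lemma logPartition_comp_equiv (e : Ω' ≃ Ω) (w : Ω → ℝ) (β : ℝ) (h : Ω → ℕ) :
    logPartition (w ∘ e) β (h ∘ e) = logPartition w β h :=
  congrArg Real.log (e.tsum_eq fun ω ↦ w ω * Real.exp (-β * h ω))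

lemma logPartition_prod_unit (w : Ω → ℝ) (β : ℝ) (h : Ω → ℕ) :
    logPartition (fun y : Ω × Unit ↦ w y.1 * (1 : Unit → ℝ) y.2) β (fun y ↦ h y.1) =
      logPartition w β h := by
  simp only [Pi.one_apply, mul_one]
  exact logPartition_comp_equiv (Equiv.prodPUnit Ω) w β h

end LogPartition

section PositiveSemidefinite

variable {V A B : Type*}

lemma posSemidef_pow_succ {K : Matrix V V ℝ} (hK : K.PosSemidef) (n : ℕ) :
    (Matrix.of fun v w ↦ K v w ^ (n + 1)).PosSemidef := by
  induction n with
  | zero =>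
    simp only [zero_add, pow_one]
    exact hK
  | succ n ih =>
    simp only [pow_succ _ (n + 1)]
    exact ih.hadamard hK

lemma posSemidef_of_hasSum {ι : Type*} {F : ι → Matrix V V ℝ} {K : Matrix V V ℝ}
    (hF : ∀ i, (F i).PosSemidef) (hK : ∀ v w, HasSum (fun i ↦ F i v w) (K v w)) :
    K.PosSemidef := by
  refine ⟨.ext fun v w ↦ (hK w v).unique ?_, fun u ↦ ?_⟩
  · simpa only [← (hF _).1.apply v w, star_trivial] using hK v w
  · exact (hasSum_sum fun v _ ↦ hasSum_sum fun w _ ↦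
      ((hK v w).mul_left (star (u v))).mul_right (u w)).nonneg fun i ↦ (hF i).2 u

lemma posSemidef_neg_log_one_sub {K : Matrix V V ℝ} (hK : K.PosSemidef)
    (hK1 : ∀ v w, |K v w| < 1) :
    (Matrix.of fun v w ↦ -Real.log (1 - K v w)).PosSemidef :=
  posSemidef_of_hasSum (F := fun n : ℕ ↦ (1 / (n + 1 : ℝ)) • Matrix.of fun v w ↦ K v w ^ (n + 1))
    (fun n ↦ (posSemidef_pow_succ hK n).smul (by positivity)) fun v w ↦ by
      simpa [div_eq_inv_mul] using Real.hasSum_pow_div_log_of_abs_lt_one (hK1 v w)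

lemma posSemidef_ite_eq {S : Type*} [DecidableEq S] (f : V → S) :
    (Matrix.of fun v w ↦ if f v = f w then (1 : ℝ) else 0).PosSemidef :=
  Matrix.PosSemidef.one.submatrix f

variable [Fintype A] [Fintype B]

lemma two_mul_expect_le_of_posSemidef {K : Matrix (A ⊕ B) (A ⊕ B) ℝ} (hK : K.PosSemidef) :
    2 * 𝔼 x : A × B, K (.inl x.1) (.inr x.2) ≤
      𝔼 x : A × A, K (.inl x.1) (.inl x.2) + 𝔼 x : B × B, K (.inr x.1) (.inr x.2) := by
  have hsymm (v w) : K v w = K w v := hK.1.apply w v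
  have h := hK.dotProduct_mulVec_nonneg
    (Sum.elim (fun _ ↦ (Fintype.card A : ℝ)⁻¹) fun _ ↦ -(Fintype.card B : ℝ)⁻¹)
  have hcomm : ∑ b, ∑ a, K (.inr b) (.inl a) = ∑ a, ∑ b, K (.inl a) (.inr b) := by
    rw [Finset.sum_comm]
    simp only [hsymm (.inr _)]
  simp only [dotProduct, Matrix.mulVec, Pi.star_apply, star_trivial, Fintype.sum_sum_type,
    Sum.elim_inl, Sum.elim_inr, ← Finset.sum_mul, ← Finset.mul_sum, Finset.sum_add_distrib,
    hcomm] at h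
  simp only [Fintype.expect_eq_sum_div_card, Fintype.sum_prod_type, Fintype.card_prod,
    Nat.cast_mul, div_eq_mul_inv, mul_inv]
  linarith

end PositiveSemidefinite

section BondComparison

variable {Ω S V A B : Type*} [DecidableEq S] {w : Ω → ℝ} {β : ℝ}

namespace IsWeight

lemma summable_mul_bond (hw : IsWeight w) (s : V → Ω → S) (x : V × V) :
    Summable fun ω ↦ w ω * bond s s x ω :=
  .of_nonneg_of_le (fun ω ↦ mul_nonneg (hw.nonneg ω) (Nat.cast_nonneg _))
    (fun ω ↦ mul_le_of_le_one_right (hw.nonneg ω) (Nat.cast_le_one.2 (bond_le_one ..))) hw.summable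

lemma partitionFunction_bond (hw : IsWeight w) (s : V → Ω → S) (x : V × V) :
    partitionFunction w β (bond s s x) =
      ∑' ω, w ω - (1 - Real.exp (-β)) * ∑' ω, w ω * bond s s x ω := by
  rw [← tsum_mul_left, ← hw.summable.tsum_sub ((hw.summable_mul_bond s x).mul_left _),
    partitionFunction]
  refine tsum_congr fun ω ↦ ?_
  unfold bond
  split_ifs
  · simp only [Nat.cast_one, mul_one]
    ring
  · simp

lemma posSemidef_overlap (hw : IsWeight w) (s : V → Ω → S) :
    (Matrix.of fun v v' ↦ ∑' ω, w ω * bond s s (v, v') ω).PosSemidef :=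
  posSemidef_of_hasSum (F := fun ω ↦ w ω • Matrix.of fun v v' ↦ (bond s s (v, v') ω : ℝ))
    (fun ω ↦ .smul (by simpa [bond] using posSemidef_ite_eq (s · ω)) (hw.nonneg ω))
    fun v v' ↦ (hw.summable_mul_bond s (v, v')).hasSum

lemma posSemidef_log_tsum_sub_logPartition_bond (hw : IsWeight w) (hβ : 0 ≤ β) (s : V → Ω → S) :
    (Matrix.of fun v v' ↦
      Real.log (∑' ω, w ω) - logPartition w β (bond s s (v, v'))).PosSemidef := by
  set Z := ∑' ω, w ω
  have hZ : 0 < Z := hw.tsum_pos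
  have ha : 0 ≤ 1 - Real.exp (-β) := sub_nonneg.2 (Real.exp_le_one_iff.2 (neg_nonpos.2 hβ))
  have hK := (hw.posSemidef_overlap s).smul (div_nonneg ha hZ.le)
  have hratio (x : V × V) : 1 - (1 - Real.exp (-β)) / Z * ∑' ω, w ω * bond s s x ω =
      partitionFunction w β (bond s s x) / Z := by
    rw [show partitionFunction w β (bond s s x) = Z - _ from hw.partitionFunction_bond s x]
    field_simp
  have hpos (x : V × V) : 0 < partitionFunction w β (bond s s x) / Z :=
    div_pos (hw.partitionFunction_pos hβ _) hZ
  convert! posSemidef_neg_log_one_sub hK fun v v' ↦ ?_ using 4 with v v'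
  · simp only [Matrix.smul_apply, Matrix.of_apply, smul_eq_mul, hratio]
    rw [Real.log_div (hw.partitionFunction_pos hβ _).ne' hZ.ne', neg_sub, logPartition]
  · have hoverlap : 0 ≤ ∑' ω, w ω * (bond s s (v, v') ω : ℝ) :=
      tsum_nonneg fun ω ↦ mul_nonneg (hw.nonneg ω) (Nat.cast_nonneg _)
    simp only [Matrix.smul_apply, Matrix.of_apply, smul_eq_mul]
    rw [abs_of_nonneg (mul_nonneg (div_nonneg ha hZ.le) hoverlap)]
    linarith [hpos (v, v'), hratio (v, v')]

variable [Fintype A] [Fintype B]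

lemma half_expect_bond_add_half_expect_bond_le (hw : IsWeight w) (hβ : 0 ≤ β) [Nonempty A]
    [Nonempty B] (s : A → Ω → S) (t : B → Ω → S) (h : Ω → ℕ) :
    1 / 2 * 𝔼 x, logPartition w β (h + bond s s x) +
        (1 - 1 / 2) * 𝔼 y, logPartition w β (h + bond t t y) ≤
      𝔼 z, logPartition w β (h + bond s t z) := by
  have hpsd := two_mul_expect_le_of_posSemidef
    ((hw.mul_exp hβ h).posSemidef_log_tsum_sub_logPartition_bond hβ (Sum.elim s t))
  simp only [Matrix.of_apply, Finset.expect_sub_distrib, Fintype.expect_const,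
    logPartition_mul_exp, bond_sumElim_inl_inl, bond_sumElim_inl_inr, bond_sumElim_inr_inr,
    Prod.mk.eta] at hpsd
  linarith

end IsWeight

end BondComparison

section Pressure

variable {Ω S V V' : Type*}

lemma IsWeight.abs_logPartition_sub_le {w : Ω → ℝ} {β : ℝ} (hw : IsWeight w) (hβ : 0 ≤ β)
    {h : Ω → ℕ} {n : ℕ} (hn : ∀ ω, h ω ≤ n) :
    |logPartition w β h - logPartition w β 0| ≤ β * n := by
  have hlow : logPartition w β (n : Ω → ℕ) ≤ logPartition w β h := hw.logPartition_antitone hβ hn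
  have hup := hw.logPartition_antitone hβ (zero_le : (0 : Ω → ℕ) ≤ h)
  have hshift := hw.logPartition_add_natCast hβ 0 n
  rw [zero_add] at hshift
  rw [abs_le]
  constructor <;> linarith [show 0 ≤ β * n by positivity]

lemma IsWeight.abs_logPartition_le {w : Ω → ℝ} {β : ℝ} (hw : IsWeight w) (hβ : 0 ≤ β)
    {h : Ω → ℕ} {n : ℕ} (hn : ∀ ω, h ω ≤ n) :
    |logPartition w β h| ≤ (|logPartition w β 0| + β) * (1 + n) := by
  have : 0 ≤ |logPartition w β 0| * n := by positivity
  linarith [abs_sub_abs_le_abs_sub (logPartition w β h) (logPartition w β 0),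
    hw.abs_logPartition_sub_le hβ hn]

lemma sprinkle_logPartition_le [Fintype V] [Nonempty V] {w : Ω → ℝ} {β : ℝ} (hw : IsWeight w)
    (hβ : 0 ≤ β) (b : V → Ω → ℕ) (n : ℕ) :
    sprinkle b n (logPartition w β) 0 ≤ logPartition w β 0 :=
  Finset.expect_le Finset.univ_nonempty fun _ _ ↦ hw.logPartition_antitone hβ zero_le

variable [DecidableEq S] [Fintype V] [Fintype V']

lemma sprinkle_bond_equiv (σ : V ≃ V') (e : Ω ≃ (V' → S)) {s : V → Ω → S}
    (hs : ∀ v ω, s v ω = e ω (σ v)) (β : ℝ) (n : ℕ) :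
    sprinkle (bond s s) n (logPartition 1 β) 0 =
      sprinkle (bond Function.eval Function.eval : V' × V' → (V' → S) → ℕ) n
        (logPartition 1 β) 0 := by
  have hbond : bond s s = LinearMap.funLeft ℕ ℕ e ∘
      (bond Function.eval Function.eval : V' × V' → (V' → S) → ℕ) ∘ σ.prodCongr σ := by
    funext x ω
    simp [bond, hs, LinearMap.funLeft_apply]
  rw [hbond, ← map_zero (LinearMap.funLeft ℕ ℕ e), sprinkle_map, sprinkle_comp_equiv]
  exact congrArg (sprinkle _ n · 0) (funext fun h ↦ logPartition_comp_equiv e 1 β h)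

end Pressure

section Potts

variable {q N : ℕ} {β c : ℝ}

lemma log_potts_Z (β : ℝ) (J : Fin N × Fin N → ℕ) :
    Real.log (potts.Z q N fun i j ↦ β * J (i, j)) =
      logPartition 1 β fun σ : Fin N → Fin q ↦ ∑ x, J x * bond Function.eval Function.eval x σ := by
  simp only [potts.Z, potts.H, logPartition, partitionFunction, tsum_fintype, Pi.one_apply, one_mul,
    Fintype.sum_prod_type]
  refine congrArg Real.log (Finset.sum_congr rfl fun σ _ ↦ congrArg Real.exp ?_)
  simp [bond, Finset.mul_sum, ← Finset.sum_neg_distrib, apply_ite]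

lemma natCast_mul_potts_p [NeZero N] (q : ℕ) [NeZero q] (hβ : 0 ≤ β) (hc : 0 ≤ c) :
    N * potts.p q N β c = poissonMean (c * N / 2) fun n ↦
      sprinkle (bond Function.eval Function.eval : Fin N × Fin N → (Fin N → Fin q) → ℕ) n
        (logPartition 1 β) 0 := by
  let energy (J : Fin N × Fin N → ℕ) (σ : Fin N → Fin q) : ℕ :=
    ∑ x, J x * bond Function.eval Function.eval x σ
  have hw : IsWeight (1 : (Fin N → Fin q) → ℝ) := isWeight_one
  have hN : (N : ℝ) ≠ 0 := NeZero.ne _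
  have henergy (J : Fin N × Fin N → ℕ) (σ : Fin N → Fin q) : energy J σ ≤ ∑ x, J x :=
    Finset.sum_le_sum fun x _ ↦ mul_le_of_le_one_right zero_le (bond_le_one ..)
  calc N * potts.p q N β c
      = ∑' J : Fin N × Fin N → ℕ, (∏ x, poissonPMF (c / (2 * N)) (J x)) *
          logPartition 1 β (energy J) := by
        rw [potts.p, potts.pmat, potts.E, ← (Equiv.curry _ _ _).tsum_eq, ← tsum_mul_left]
        refine tsum_congr fun J ↦ ?_
        simp only [Fintype.prod_prod_type, energy, ← log_potts_Z]
        simp only [Equiv.curry_apply, Function.curry_apply]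
        field_simp
    _ = _ := by
        rw [tsum_prod_poissonPMF_mul (by positivity) fun J ↦ hw.abs_logPartition_le hβ (henergy J)]
        congr 1
        · rw [Fintype.card_prod, Fintype.card_fin, Nat.cast_mul]
          field_simp
        · simp only [sprinkle, zero_add]
          refine funext fun n ↦ Finset.expect_congr rfl fun e _ ↦ congrArg _ (funext fun σ ↦ ?_)
          rw [Finset.sum_apply]
          exact sum_occurrences_mul e _

lemma potts_p_le_log [NeZero N] (q : ℕ) [NeZero q] (hβ : 0 ≤ β) (hc : 0 ≤ c) :
    potts.p q N β c ≤ Real.log q := by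
  have hw : IsWeight (1 : (Fin N → Fin q) → ℝ) := isWeight_one
  have hfree : logPartition (1 : (Fin N → Fin q) → ℝ) β 0 = N * Real.log q := by
    simp [logPartition, partitionFunction, tsum_fintype]
  have hN : (0 : ℝ) < N := Nat.cast_pos.2 (NeZero.pos N)
  have hinc := hw.hasBoundedIncrements_logPartition hβ
    (bond_le_one (Function.eval : Fin N → (Fin N → Fin q) → Fin q) Function.eval)
  refine le_of_mul_le_mul_left ?_ hN
  rw [natCast_mul_potts_p q hβ hc, ← hfree, ← poissonMean_const (c * N / 2) (logPartition 1 β 0)]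
  exact poissonMean_mono (by positivity) (hinc.hasLinearGrowth_sprinkle 0) (.const _)
    fun n ↦ sprinkle_logPartition_le hw hβ _ n

end Potts

section VolumeComparison

variable {Ω S A B : Type*} [DecidableEq S] [Fintype A] [Fintype B]

lemma expect_bond_sumElim [Nonempty A] [Nonempty B] (s : A → Ω → S) (t : B → Ω → S)
    (F : (Ω → ℕ) → ℝ) :
    (Fintype.card A + Fintype.card B : ℝ) ^ 2 *
        𝔼 z, F (bond (Sum.elim s t) (Sum.elim s t) z) =
      (Fintype.card A : ℝ) ^ 2 * 𝔼 x, F (bond s s x) +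
        2 * Fintype.card A * Fintype.card B * 𝔼 x, F (bond s t x) +
        (Fintype.card B : ℝ) ^ 2 * 𝔼 x, F (bond t t x) := by
  simp only [Fintype.expect_eq_sum_div_card, Fintype.sum_prod_type, Fintype.card_prod,
    Fintype.card_sum, Fintype.sum_sum_type, bond_sumElim_inl_inl, bond_sumElim_inl_inr,
    bond_sumElim_inr_inl, bond_sumElim_inr_inr, Finset.sum_add_distrib, Nat.cast_mul, Nat.cast_add]
  rw [Finset.sum_comm (s := (Finset.univ : Finset B)) (t := (Finset.univ : Finset A))]
  field_simp
  ring

variable {w : Ω → ℝ} {β : ℝ}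

lemma IsWeight.expect_bond_le_expect_bond_sumElim [Nonempty A] [Nonempty B] (hw : IsWeight w)
    (hβ : 0 ≤ β) (s : A → Ω → S) (t : B → Ω → S) {M N p : ℝ} (hM : Fintype.card A = M)
    (hN : Fintype.card B = N) (hp : p * (M + N) = M - N) (h : Ω → ℕ) :
    p * 𝔼 x, logPartition w β (h + bond s s x) +
        (1 - p) * 𝔼 y, logPartition w β (h + bond s t y) ≤
      𝔼 z, logPartition w β (h + bond (Sum.elim s t) (Sum.elim s t) z) +
        4 * β * (N / (M + N)) ^ 2 := by
  have hM0 : 0 < M := hM ▸ Nat.cast_pos.2 Fintype.card_pos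
  have hN0 : 0 < N := hN ▸ Nat.cast_pos.2 Fintype.card_pos
  have hsplit := expect_bond_sumElim s t fun b ↦ logPartition w β (h + b)
  rw [hM, hN] at hsplit
  have hss := abs_le.1 ((hw.hasBoundedIncrements_logPartition hβ
    (bond_le_one s s)).abs_expect_sub_le h)
  have hst := abs_le.1 ((hw.hasBoundedIncrements_logPartition hβ
    (bond_le_one s t)).abs_expect_sub_le h)
  have htt := abs_le.1 ((hw.hasBoundedIncrements_logPartition hβ
    (bond_le_one t t)).abs_expect_sub_le h)
  set ss := 𝔼 x, logPartition w β (h + bond s s x)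
  set st := 𝔼 x, logPartition w β (h + bond s t x)
  set tt := 𝔼 x, logPartition w β (h + bond t t x)
  -- The weights `p` and `1 - p` differ from the true frequencies of the bonds only by
  -- multiples of `(N / (M + N)) ^ 2`.
  have hdefect : N ^ 2 * (2 * st - ss - tt) ≤ N ^ 2 * (4 * β) :=
    mul_le_mul_of_nonneg_left (by linarith) (sq_nonneg N)
  refine le_of_mul_le_mul_left ?_ (show 0 < (M + N) ^ 2 by positivity)
  rw [mul_add _ _ (4 * β * _), hsplit]
  have herr : (M + N) ^ 2 * (4 * β * (N / (M + N)) ^ 2) = 4 * β * N ^ 2 := by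
    field_simp
  rw [herr]
  linear_combination hdefect + (M + N) * (ss - st) * hp

lemma IsWeight.poissonMean_sprinkle_bond_le [Nonempty A] [Nonempty B] (hw : IsWeight w)
    (hβ : 0 ≤ β) {c : ℝ} (hc : 0 ≤ c) (s : A → Ω → S) (t : B → Ω → S) {M N : ℝ}
    (hM : Fintype.card A = M) (hN : Fintype.card B = N) (hNM : N ≤ M) :
    poissonMean (c * (M - N) / 2) (fun j ↦ poissonMean (c * N)
        fun l ↦ sprinkle (bond s s) j (sprinkle (bond s t) l (logPartition w β)) 0) ≤
      poissonMean (c * (M + N) / 2) (fun n ↦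
        sprinkle (bond (Sum.elim s t) (Sum.elim s t)) n (logPartition w β) 0) +
      2 * β * c * (N ^ 2 / (M + N)) := by
  have hM0 : 0 < M := hM ▸ Nat.cast_pos.2 Fintype.card_pos
  have hN0 : 0 < N := hN ▸ Nat.cast_pos.2 Fintype.card_pos
  set p := (M - N) / (M + N) with hp
  have hpΛ : p * (c * (M + N) / 2) = c * (M - N) / 2 := by
    rw [hp]
    field_simp
  have hqΛ : (1 - p) * (c * (M + N) / 2) = c * N := by
    linear_combination -hpΛ
  have hss := hw.hasBoundedIncrements_logPartition hβ (bond_le_one s s)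
  have hst := hw.hasBoundedIncrements_logPartition hβ (bond_le_one s t)
  have hall := hw.hasBoundedIncrements_logPartition hβ
    (bond_le_one (Sum.elim s t) (Sum.elim s t))
  have hp0 : 0 ≤ p := div_nonneg (sub_nonneg.2 hNM) (by positivity)
  have hp1 : p ≤ 1 := div_le_one_of_le₀ (by linarith) (by positivity)
  have hinterp := poissonMean_sprinkle_le (Λ := c * (M + N) / 2) (by positivity) hss hst hall
    hp0 hp1 (hw.expect_bond_le_expect_bond_sumElim hβ s t hM hN
      (div_mul_cancel₀ _ (by positivity))) 0
  rw [hpΛ, hqΛ] at hinterp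
  refine hinterp.trans_eq (congrArg _ ?_)
  field_simp
  ring

end VolumeComparison

section RandomSpinStructures

variable {q : ℕ} {L : Measure (SpinStruct q)}

lemma measurable_weight (n : ℕ) : Measurable fun p : SpinStruct q ↦ p.1 n :=
  (measurable_pi_apply n).comp measurable_fst

lemma measurable_spin (α i : ℕ) : Measurable fun p : SpinStruct q ↦ p.2 α i :=
  (measurable_pi_apply i).comp ((measurable_pi_apply α).comp measurable_snd)

lemma measurable_relabel_sites (π : ℕ → ℕ) :
    Measurable fun p : SpinStruct q ↦ ((p.1, fun α k ↦ p.2 α (π k)) : SpinStruct q) :=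
  measurable_fst.prodMk <| measurable_pi_lambda _ fun α ↦
    measurable_pi_lambda _ fun k ↦ measurable_spin α (π k)

lemma measurableSet_nonneg_antitone_hasSum_one :
    MeasurableSet {p : SpinStruct q | (∀ n, 0 ≤ p.1 n) ∧ Antitone p.1 ∧ HasSum p.1 1} := by
  have hnonneg : MeasurableSet {p : SpinStruct q | ∀ n, 0 ≤ p.1 n} := by
    rw [Set.ofPred_forall]
    exact .iInter fun n ↦ measurableSet_le measurable_const (measurable_weight n)
  have hantitone : MeasurableSet {p : SpinStruct q | Antitone p.1} := by
    have : {p : SpinStruct q | Antitone p.1} = ⋂ n, {p | p.1 (n + 1) ≤ p.1 n} := by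
      ext p
      simpa using ⟨fun hp n ↦ hp n.le_succ, antitone_nat_of_succ_le⟩
    exact this ▸ .iInter fun n ↦ measurableSet_le (measurable_weight _) (measurable_weight _)
  have hsum : MeasurableSet {p : SpinStruct q | HasSum p.1 1} :=
    measurableSet_tendsto _ fun s ↦ Finset.measurable_sum s fun n _ ↦ measurable_weight n
  exact hnonneg.inter (hantitone.inter hsum)

namespace IsRSS

lemma ae_nonneg_and_hasSum (hL : IsRSS q L) : ∀ᵐ p ∂L, (∀ n, 0 ≤ p.1 n) ∧ HasSum p.1 1 := by
  have := hL.1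
  have hae := (mem_ae_iff_prob_eq_one measurableSet_nonneg_antitone_hasSum_one).2 hL.2.1
  filter_upwards [hae] with p hp using ⟨hp.1, hp.2.2⟩

lemma ae_isWeight (hL : IsRSS q L) : ∀ᵐ p ∂L, IsWeight p.1 := by
  filter_upwards [hL.ae_nonneg_and_hasSum] with p hp
  exact ⟨hp.1, hp.2.summable, hp.2.tsum_eq ▸ one_pos⟩

end IsRSS

/-- The log-partition function of the replicas of `p`, weighted by `p.1`, coupled to a finite system
with configurations `X` by an energy that depends on the spins of the replica at the sites `r`. -/
noncomputable def structureLog {κ X : Type*} (β : ℝ) (f : (κ → Fin q) → X → ℕ) (r : κ → ℕ)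
    (p : SpinStruct q) : ℝ :=
  logPartition (fun y : ℕ × X ↦ p.1 y.1 * (1 : X → ℝ) y.2) β fun y ↦ f (p.2 y.1 ∘ r) y.2

lemma structureLog_unit {κ : Type*} (β : ℝ) (f : (κ → Fin q) → ℕ) (r : κ → ℕ) (p : SpinStruct q) :
    structureLog β (fun τ (_ : Unit) ↦ f τ) r p = logPartition p.1 β fun α ↦ f (p.2 α ∘ r) :=
  logPartition_prod_unit p.1 β fun α ↦ f (p.2 α ∘ r)

/-- A family of bounded observables of a random spin structure, indexed by the sites they depend
on, whose mean is the same at all families of distinct sites. -/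
structure IsExchangeable {κ : Type*} (L : Measure (SpinStruct q)) (C : ℝ)
    (F : (κ → ℕ) → SpinStruct q → ℝ) : Prop where
  aestronglyMeasurable : ∀ r, AEStronglyMeasurable (F r) L
  ae_abs_le : ∀ r, ∀ᵐ p ∂L, |F r p| ≤ C
  integral_eq : ∀ ⦃r r'⦄, r.Injective → r'.Injective → ∫ p, F r p ∂L = ∫ p, F r' p ∂L

lemma exists_perm_finite_extending_pair {ι κ : Type*} [Finite κ] {r r' : κ → ι}
    (hr : r.Injective) (hr' : r'.Injective) :
    ∃ π : Equiv.Perm ι, {i | π i ≠ i}.Finite ∧ ∀ k, π (r k) = r' k := by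
  classical
  let T : Set ι := Set.range r ∪ Set.range r'
  obtain ⟨σ, hσ⟩ := Equiv.Perm.exists_extending_pair
    (fun k ↦ (⟨r k, .inl ⟨k, rfl⟩⟩ : T)) (fun k ↦ ⟨r' k, .inr ⟨k, rfl⟩⟩)
    (fun _ _ h ↦ hr (congrArg Subtype.val h)) fun _ _ h ↦ hr' (congrArg Subtype.val h)
  refine ⟨Equiv.Perm.ofSubtype σ, ?_, fun k ↦ ?_⟩
  · refine ((Set.finite_range r).union (Set.finite_range r')).subset fun i hi ↦ ?_
    by_contra hiT
    exact hi (Equiv.Perm.ofSubtype_apply_of_not_mem σ hiT)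
  · rw [Equiv.Perm.ofSubtype_apply_of_mem σ (.inl ⟨k, rfl⟩), hσ]

namespace IsRSS

variable {κ X : Type*} {β : ℝ} {f : (κ → Fin q) → X → ℕ}

lemma aestronglyMeasurable_structureLog [Finite X] [Nonempty X] [Finite κ] (hL : IsRSS q L)
    (hβ : 0 ≤ β) (r : κ → ℕ) : AEStronglyMeasurable (structureLog β f r) L := by
  refine (Real.measurable_log.comp_aemeasurable ?_).aestronglyMeasurable
  refine aemeasurable_of_tendsto_metrizable_ae atTop
    (f := fun (s : Finset (ℕ × X)) (p : SpinStruct q) ↦ ∑ y ∈ s,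
      p.1 y.1 * (1 : X → ℝ) y.2 * Real.exp (-β * f (p.2 y.1 ∘ r) y.2)) (fun s ↦ ?_) ?_
  · refine (Finset.measurable_sum s fun y _ ↦ ?_).aemeasurable
    have hspins : Measurable fun p : SpinStruct q ↦ p.2 y.1 ∘ r :=
      measurable_pi_lambda _ fun k ↦ measurable_spin y.1 (r k)
    have henergy : Measurable fun p : SpinStruct q ↦ (f (p.2 y.1 ∘ r) y.2 : ℝ) :=
      (measurable_of_countable fun τ : κ → Fin q ↦ (f τ y.2 : ℝ)).comp hspins
    exact ((measurable_weight y.1).mul_const _).mul (henergy.const_mul (-β)).exp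
  · filter_upwards [hL.ae_isWeight] with p hp
    exact ((hp.prod isWeight_one).summable_mul_exp hβ _).hasSum

variable [Fintype X]

lemma ae_abs_structureLog_le [Nonempty X] (hL : IsRSS q L) (hβ : 0 ≤ β) {n : ℕ}
    (hf : ∀ τ x, f τ x ≤ n) (r : κ → ℕ) :
    ∀ᵐ p ∂L, |structureLog β f r p| ≤ (Real.log (Fintype.card X) + β) * (1 + n) := by
  filter_upwards [hL.ae_isWeight, hL.ae_nonneg_and_hasSum] with p hp hp1
  have hfree : logPartition (fun y : ℕ × X ↦ p.1 y.1 * (1 : X → ℝ) y.2) β 0 =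
      Real.log (Fintype.card X) := by
    simpa [logPartition, partitionFunction, tsum_fintype, hp1.2.tsum_eq] using
      hp.logPartition_prod (isWeight_one (Ω := X)) hβ 0 0
  have hbound := (hp.prod (isWeight_one (Ω := X))).abs_logPartition_le hβ
    (h := fun y ↦ f (p.2 y.1 ∘ r) y.2) fun y ↦ hf _ _
  rwa [hfree, abs_of_nonneg (Real.log_natCast_nonneg _)] at hbound

lemma isExchangeable_structureLog [Nonempty X] [Finite κ] (hL : IsRSS q L) (hβ : 0 ≤ β) {n : ℕ}
    (hf : ∀ τ x, f τ x ≤ n) :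
    IsExchangeable L ((Real.log (Fintype.card X) + β) * (1 + n)) (structureLog β f) where
  aestronglyMeasurable := hL.aestronglyMeasurable_structureLog hβ
  ae_abs_le := hL.ae_abs_structureLog_le hβ hf
  integral_eq r r' hr hr' := by
    obtain ⟨π, hπ, hπr⟩ := exists_perm_finite_extending_pair hr hr'
    have hmap := hL.2.2 π hπ
    obtain rfl : π ∘ r = r' := funext hπr
    conv_lhs => rw [← hmap]
    rw [integral_map (measurable_relabel_sites π).aemeasurable
      (hmap.symm ▸ hL.aestronglyMeasurable_structureLog hβ r)]
    rfl

end IsRSS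

lemma integral_expect {ι : Type*} [Fintype ι] {α : Type*} [MeasurableSpace α]
    {μ : Measure α} {g : ι → α → ℝ} (hg : ∀ i, Integrable (g i) μ) :
    ∫ x, 𝔼 i, g i x ∂μ = 𝔼 i, ∫ x, g i x ∂μ := by
  simp only [Fintype.expect_eq_sum_div_card]
  rw [integral_div, integral_finsetSum _ fun i _ ↦ hg i]

namespace IsExchangeable

variable {κ : Type*} {C : ℝ} {F : (κ → ℕ) → SpinStruct q → ℝ}

lemma integrable [IsProbabilityMeasure L] (hF : IsExchangeable L C F) (r : κ → ℕ) :
    Integrable (F r) L :=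
  .of_bound (hF.aestronglyMeasurable r) C (hF.ae_abs_le r)

lemma abs_integral_le [IsProbabilityMeasure L] (hF : IsExchangeable L C F) (r : κ → ℕ) :
    |∫ p, F r p ∂L| ≤ C := by
  simpa using norm_integral_le_of_norm_le_const (f := F r) (hF.ae_abs_le r)

lemma expect {ι : Type*} [Fintype ι] [Nonempty ι] [IsProbabilityMeasure L]
    {F : ι → (κ → ℕ) → SpinStruct q → ℝ} (hF : ∀ i, IsExchangeable L C (F i)) :
    IsExchangeable L C fun r p ↦ 𝔼 i, F i r p where
  aestronglyMeasurable r := by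
    simp only [Fintype.expect_eq_sum_div_card, div_eq_mul_inv]
    exact (Finset.aestronglyMeasurable_fun_sum _ fun i _ ↦
      (hF i).aestronglyMeasurable r).mul_const _
  ae_abs_le r := by
    filter_upwards [ae_all_iff.2 fun i ↦ (hF i).ae_abs_le r] with p hp
      using abs_expect_le_of_forall_abs_le hp
  integral_eq r r' hr hr' := by
    rw [integral_expect fun i ↦ (hF i).integrable r, integral_expect fun i ↦ (hF i).integrable r']
    exact Finset.expect_congr rfl fun i _ ↦ (hF i).integral_eq hr hr'

end IsExchangeable

end RandomSpinStructures

section DistinctSites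

variable {κ : Type*} [Fintype κ] [DecidableEq κ]

lemma expect_injective (R : ℕ) :
    (𝔼 r : κ → Fin R, (open Classical in if r.Injective then 1 else 0) : ℝ) =
      R.descFactorial (Fintype.card κ) / R ^ Fintype.card κ := by
  classical
  rw [Fintype.expect_eq_sum_div_card, Finset.sum_boole, ← Fintype.card_subtype,
    Fintype.card_congr (Equiv.subtypeInjectiveEquivEmbedding κ (Fin R)),
    Fintype.card_embedding_eq]
  simp

lemma tendsto_expect_injective :
    Tendsto (fun R : ℕ ↦
      (𝔼 r : κ → Fin R, (open Classical in if r.Injective then 1 else 0) : ℝ)) atTop (𝓝 1) := by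
  simp only [expect_injective]
  refine (Asymptotics.isEquivalent_iff_tendsto_one ?_).1 (isEquivalent_descFactorial _)
  filter_upwards [eventually_gt_atTop 0] with R hR
  positivity

lemma tendsto_expect_of_forall_injective {ψ : (κ → ℕ) → ℝ} {a C : ℝ} (hC : ∀ r, |ψ r| ≤ C)
    (ha : ∀ r, r.Injective → ψ r = a) :
    Tendsto (fun R : ℕ ↦ 𝔼 r : κ → Fin R, ψ fun k ↦ r k) atTop (𝓝 a) := by
  classical
  have hlim : Tendsto (fun R : ℕ ↦ (C + |a|) *
      (1 - (𝔼 r : κ → Fin R, if r.Injective then 1 else 0 : ℝ))) atTop (𝓝 0) := by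
    simpa using (tendsto_expect_injective.const_sub 1).const_mul (C + |a|)
  refine tendsto_iff_norm_sub_tendsto_zero.2 (squeeze_zero' (.of_forall fun _ ↦ norm_nonneg _) ?_
    hlim)
  filter_upwards [eventually_gt_atTop 0] with R hR
  have : NeZero R := ⟨hR.ne'⟩
  have hpoint (r : κ → Fin R) :
      |ψ (fun k ↦ r k) - a| ≤ (C + |a|) * (1 - if r.Injective then 1 else 0) := by
    split_ifs with hr
    · have : ψ (fun k ↦ r k) = a := ha _ (Fin.val_injective.comp hr)
      simp [this]
    · simpa using (abs_sub _ _).trans (add_le_add_left (hC _) _)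
  calc ‖(𝔼 r : κ → Fin R, ψ fun k ↦ r k) - a‖
      = |𝔼 r : κ → Fin R, (ψ (fun k ↦ r k) - a)| := by
        rw [Finset.expect_sub_distrib, Fintype.expect_const, Real.norm_eq_abs]
    _ ≤ 𝔼 r : κ → Fin R, |ψ (fun k ↦ r k) - a| := Finset.abs_expect_le _ _
    _ ≤ 𝔼 r : κ → Fin R, (C + |a|) * (1 - if r.Injective then 1 else 0) :=
        Finset.expect_le_expect fun r _ ↦ hpoint r
    _ = _ := by rw [← Finset.mul_expect, Finset.expect_sub_distrib, Fintype.expect_const]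

end DistinctSites

namespace IsExchangeable

variable {q : ℕ} {L : Measure (SpinStruct q)} {κ : ℕ → Type*} [∀ n, Fintype (κ n)]
  [∀ n, DecidableEq (κ n)] {F : ∀ n, (κ n → ℕ) → SpinStruct q → ℝ} {C c : ℝ}

lemma ae_abs_expect_le (hF : ∀ n : ℕ, IsExchangeable L (C * (1 + n)) (F n)) (R : ℕ) [NeZero R]
    (n : ℕ) :
    ∀ᵐ p ∂L, |𝔼 r : κ n → Fin R, F n (fun k ↦ r k) p| ≤ C * (1 + n) := by
  filter_upwards [ae_all_iff.2 fun r : κ n → Fin R ↦ (hF n).ae_abs_le fun k ↦ r k] with p hp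
    using abs_expect_le_of_forall_abs_le hp

variable [IsProbabilityMeasure L]

lemma aestronglyMeasurable_expect (hF : ∀ n : ℕ, IsExchangeable L (C * (1 + n)) (F n)) (R n : ℕ) :
    AEStronglyMeasurable (fun p ↦ 𝔼 r : κ n → Fin R, F n (fun k ↦ r k) p) L := by
  simp only [Fintype.expect_eq_sum_div_card]
  exact ((integrable_finsetSum _ fun r _ ↦ (hF n).integrable _).div_const _).aestronglyMeasurable

lemma integrable_poissonMean_expect (hF : ∀ n : ℕ, IsExchangeable L (C * (1 + n)) (F n))
    (hc : 0 ≤ c) (R : ℕ) [NeZero R] :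
    Integrable (fun p ↦ poissonMean c fun n ↦ 𝔼 r : κ n → Fin R, F n (fun k ↦ r k) p) L :=
  integrable_poissonMean hc (aestronglyMeasurable_expect hF R) (ae_abs_expect_le hF R)

lemma integral_poissonMean_expect (hF : ∀ n : ℕ, IsExchangeable L (C * (1 + n)) (F n)) (hc : 0 ≤ c)
    (R : ℕ) [NeZero R] :
    ∫ p, poissonMean c (fun n ↦ 𝔼 r : κ n → Fin R, F n (fun k ↦ r k) p) ∂L =
      poissonMean c fun n ↦ 𝔼 r : κ n → Fin R, ∫ p, F n (fun k ↦ r k) p ∂L := by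
  rw [integral_poissonMean hc (aestronglyMeasurable_expect hF R) (ae_abs_expect_le hF R)]
  exact congrArg _ (funext fun n ↦ integral_expect fun r ↦ (hF n).integrable _)

lemma tendsto_integral_poissonMean (hF : ∀ n : ℕ, IsExchangeable L (C * (1 + n)) (F n))
    (hc : 0 ≤ c) {r₀ : ∀ n, κ n → ℕ} (hr₀ : ∀ n, (r₀ n).Injective) :
    Tendsto (fun R : ℕ ↦
        ∫ p, poissonMean c (fun n ↦ 𝔼 r : κ n → Fin R, F n (fun k ↦ r k) p) ∂L) atTop
      (𝓝 (poissonMean c fun n ↦ ∫ p, F n (r₀ n) p ∂L)) := by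
  have hlim : Tendsto (fun R : ℕ ↦
        poissonMean c fun n ↦ 𝔼 r : κ n → Fin R, ∫ p, F n (fun k ↦ r k) p ∂L) atTop
      (𝓝 (poissonMean c fun n ↦ ∫ p, F n (r₀ n) p ∂L)) := by
    refine tendsto_poissonMean (C := C) hc ?_ fun n ↦
      tendsto_expect_of_forall_injective (ψ := fun r ↦ ∫ p, F n r p ∂L)
        (fun r ↦ (hF n).abs_integral_le r) fun r hr ↦ (hF n).integral_eq hr (hr₀ n)
    filter_upwards [eventually_gt_atTop 0] with R hR n
    have : NeZero R := ⟨hR.ne'⟩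
    exact abs_expect_le_of_forall_abs_le fun r ↦ (hF n).abs_integral_le _
  refine hlim.congr' ?_
  filter_upwards [eventually_gt_atTop 0] with R hR
  have : NeZero R := ⟨hR.ne'⟩
  exact (integral_poissonMean_expect hF hc R).symm

end IsExchangeable

section CavityEnergies

variable {S V ι : Type*} [DecidableEq S] [Fintype ι]

/-- The energy of the bonds joining the spins `τ i` of a reservoir to the sites `I i` of a
system. -/
def crossEnergy (I : ι → V) (τ : ι → S) (σ : V → S) : ℕ := ∑ i, if τ i = σ (I i) then 1 else 0

/-- The energy of the bonds joining the spins of a reservoir in pairs. -/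
def pairEnergy (τ : ι ⊕ ι → S) : ℕ := ∑ i, if τ (.inl i) = τ (.inr i) then 1 else 0

lemma sum_ite_one_zero_le_card (P : ι → Prop) [DecidablePred P] :
    ∑ i, (if P i then 1 else 0) ≤ Fintype.card ι :=
  (Finset.sum_boole P _).trans_le (Finset.card_le_univ _)

lemma crossEnergy_le (I : ι → V) (τ : ι → S) (σ : V → S) : crossEnergy I τ σ ≤ Fintype.card ι :=
  sum_ite_one_zero_le_card _

lemma pairEnergy_le (τ : ι ⊕ ι → S) : pairEnergy τ ≤ Fintype.card ι :=
  sum_ite_one_zero_le_card _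

variable {Ω A : Type*} [Fintype A]

lemma sprinkle_bond_eq_expect_crossEnergy [Fintype V] (s : A → Ω → S) (t : V → Ω → S)
    (Φ : (Ω → ℕ) → ℝ) (n : ℕ) :
    sprinkle (bond s t) n Φ 0 = 𝔼 r : Fin n → A, 𝔼 I : Fin n → V,
      Φ fun ω ↦ crossEnergy I (fun i ↦ s (r i) ω) fun v ↦ t v ω := by
  rw [sprinkle, expect_arrow_prod]
  refine Finset.expect_congr rfl fun r _ ↦ Finset.expect_congr rfl fun I _ ↦ congrArg Φ ?_
  funext ω
  simp [bond, crossEnergy]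

lemma sprinkle_bond_eq_expect_pairEnergy (s : A → Ω → S) (Φ : (Ω → ℕ) → ℝ) (n : ℕ) :
    sprinkle (bond s s) n Φ 0 =
      𝔼 r : Fin n ⊕ Fin n → A, Φ fun ω ↦ pairEnergy fun i ↦ s (r i) ω := by
  rw [sprinkle, Fintype.expect_equiv ((Equiv.arrowProdEquivProdArrow _ _ _).trans
    (Equiv.sumArrowEquivProdArrow _ _ _).symm)]
  refine fun e ↦ congrArg Φ ?_
  funext ω
  simp [bond, pairEnergy]

end CavityEnergies

section CavityFunctionals

variable {q N : ℕ} {L : Measure (SpinStruct q)} {β c : ℝ}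

lemma IsRSS.isExchangeable_crossEnergy [NeZero N] [NeZero q] (hL : IsRSS q L) (hβ : 0 ≤ β)
    (n : ℕ) :
    IsExchangeable L ((Real.log (Fintype.card (Fin N → Fin q)) + β) * (1 + n)) fun r p ↦
      𝔼 I : Fin n → Fin N, structureLog β (crossEnergy I) r p := by
  have := hL.1
  refine IsExchangeable.expect fun I ↦ hL.isExchangeable_structureLog hβ fun τ σ ↦ ?_
  simpa using crossEnergy_le I τ σ

lemma IsRSS.isExchangeable_pairEnergy (hL : IsRSS q L) (hβ : 0 ≤ β) (n : ℕ) :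
    IsExchangeable L ((Real.log (Fintype.card Unit) + β) * (1 + n))
      (structureLog β fun (τ : Fin n ⊕ Fin n → Fin q) (_ : Unit) ↦ pairEnergy τ) :=
  hL.isExchangeable_structureLog hβ fun τ _ ↦ by simpa using pairEnergy_le τ

/-- The sites `2k` and `2k + 1` entering the self-energy term `G2`. -/
def pairedSites (n : ℕ) : Fin n ⊕ Fin n → ℕ := Sum.elim (fun k ↦ 2 * k) fun k ↦ 2 * k + 1

lemma pairedSites_injective (n : ℕ) : (pairedSites n).Injective := by
  rintro (k | k) (l | l) h <;> simp only [pairedSites, Sum.elim_inl, Sum.elim_inr] at h <;>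
    first
    | omega
    | exact congrArg _ (Fin.ext (by omega))

lemma cast_pairEnergy_comp_pairedSites {S : Type*} [DecidableEq S] (τ : ℕ → S) (n : ℕ) :
    (pairEnergy (τ ∘ pairedSites n) : ℝ) =
      ∑ k : Fin n, if τ (2 * k) = τ (2 * k + 1) then (1 : ℝ) else 0 := by
  simp only [pairEnergy, Nat.cast_sum, Nat.cast_ite, Nat.cast_one, Nat.cast_zero]
  rfl

lemma structureLog_eq_log_tsum_sum {κ X : Type*} [Fintype X] [Nonempty X] (hβ : 0 ≤ β)
    {p : SpinStruct q} (hp : IsWeight p.1) (f : (κ → Fin q) → X → ℕ) (r : κ → ℕ) :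
    structureLog β f r p =
      Real.log (∑' α, p.1 α * ∑ x, Real.exp (-β * f (p.2 α ∘ r) x)) := by
  have hsum := (hp.prod (isWeight_one (Ω := X))).summable_mul_exp hβ fun y ↦ f (p.2 y.1 ∘ r) y.2
  rw [structureLog, logPartition, partitionFunction, hsum.tsum_prod]
  simp [tsum_fintype, Finset.mul_sum]

lemma natCast_mul_G1 [NeZero N] [NeZero q] (hL : IsRSS q L) (hβ : 0 ≤ β) (hc : 0 ≤ c) :
    N * G1 q N β c L = poissonMean (c * N) fun n ↦
      ∫ p, 𝔼 I : Fin n → Fin N, structureLog β (crossEnergy I) Fin.val p ∂L := by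
  have := hL.1
  rw [← integral_poissonMean (by positivity)
    (fun n ↦ (hL.isExchangeable_crossEnergy hβ n).aestronglyMeasurable Fin.val)
    (fun n ↦ (hL.isExchangeable_crossEnergy hβ n).ae_abs_le Fin.val), G1, ← integral_const_mul]
  refine integral_congr_ae ?_
  filter_upwards [hL.ae_isWeight] with p hp
  rw [poissonMean, ← tsum_mul_left]
  refine tsum_congr fun n ↦ ?_
  have hN : (N : ℝ) ≠ 0 := NeZero.ne _
  rw [Fintype.expect_eq_sum_div_card, ← Finset.mul_sum]
  simp only [structureLog_eq_log_tsum_sum hβ hp, crossEnergy, Function.comp_apply, Nat.cast_sum,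
    Nat.cast_ite, Nat.cast_one, Nat.cast_zero, Fintype.card_fun, Fintype.card_fin, Nat.cast_pow]
  field_simp

lemma natCast_mul_G2 [NeZero N] (hL : IsRSS q L) (hβ : 0 ≤ β) (hc : 0 ≤ c) :
    N * G2 q N β c L = poissonMean (c * N / 2) fun n ↦
      ∫ p, structureLog β (fun τ (_ : Unit) ↦ pairEnergy τ) (pairedSites n) p ∂L := by
  have := hL.1
  rw [← integral_poissonMean (by positivity)
    (fun n ↦ (hL.isExchangeable_pairEnergy hβ n).aestronglyMeasurable (pairedSites n))
    (fun n ↦ (hL.isExchangeable_pairEnergy hβ n).ae_abs_le (pairedSites n)), G2,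
    ← integral_const_mul]
  refine integral_congr_ae ?_
  filter_upwards [hL.ae_isWeight] with p hp
  rw [poissonMean, ← tsum_mul_left]
  refine tsum_congr fun n ↦ ?_
  have hN : (N : ℝ) ≠ 0 := NeZero.ne _
  simp only [structureLog_eq_log_tsum_sum hβ hp, cast_pairEnergy_comp_pairedSites,
    Finset.univ_unique, Finset.sum_singleton]
  field_simp

end CavityFunctionals

section CavityUpperBound

variable {Ω Ω' S A B : Type*} [DecidableEq S] [Fintype A] [Fintype B] [Nonempty A] [Nonempty B]
  {w : Ω → ℝ} {w' : Ω' → ℝ} {β : ℝ}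

lemma IsWeight.poissonMean_sprinkle_bond_add_le (hw : IsWeight w) (hw' : IsWeight w')
    (hβ : 0 ≤ β) (s : A → Ω → S) (t : B → Ω' → S) {Λ : ℝ} (hΛ : 0 ≤ Λ) :
    poissonMean (Λ / 2) (fun j ↦ sprinkle (bond s s) j (logPartition w β) 0) +
        poissonMean (Λ / 2) (fun l ↦ sprinkle (bond t t) l (logPartition w' β) 0) ≤
      poissonMean Λ fun n ↦ sprinkle (bond (fun a (x : Ω × Ω') ↦ s a x.1) fun b x ↦ t b x.2) n
        (logPartition (fun x ↦ w x.1 * w' x.2) β) 0 := by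
  have hprod := hw.prod hw'
  let s' (a : A) (x : Ω × Ω') : S := s a x.1
  let t' (b : B) (x : Ω × Ω') : S := t b x.2
  have hinterp := poissonMean_sprinkle_le (p := 1 / 2) (ε := 0) hΛ
    (hprod.hasBoundedIncrements_logPartition hβ (bond_le_one s' s'))
    (hprod.hasBoundedIncrements_logPartition hβ (bond_le_one t' t'))
    (hprod.hasBoundedIncrements_logPartition hβ (bond_le_one s' t')) (by norm_num) (by norm_num)
    (fun h ↦ (hprod.half_expect_bond_add_half_expect_bond_le hβ s' t' h).trans_eq
      (add_zero _).symm) 0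
  have hsplit (j l : ℕ) :=
    sprinkle_sprinkle_eq_add (LinearMap.funLeft ℕ ℕ (Prod.fst : Ω × Ω' → Ω))
      (LinearMap.funLeft ℕ ℕ (Prod.snd : Ω × Ω' → Ω')) (bond s s) (bond t t)
      (fun h h' ↦ hw.logPartition_prod hw' hβ h h') j l
  have hs := (hw.hasBoundedIncrements_logPartition hβ (bond_le_one s s)).hasLinearGrowth_sprinkle 0
  have ht := (hw'.hasBoundedIncrements_logPartition hβ (bond_le_one t t)).hasLinearGrowth_sprinkle 0
  rw [mul_zero, add_zero, show 1 / 2 * Λ = Λ / 2 by ring, show (1 - 1 / 2) * Λ = Λ / 2 by ring]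
    at hinterp
  refine Eq.trans_le ?_ hinterp
  have hΛ2 : 0 ≤ Λ / 2 := by positivity
  calc _ = poissonMean (Λ / 2) fun j ↦ poissonMean (Λ / 2) fun l ↦
          sprinkle (bond s s) j (logPartition w β) 0 +
            sprinkle (bond t t) l (logPartition w' β) 0 := by
        simp only [poissonMean_add hΛ2 (.const _) ht, poissonMean_add hΛ2 hs (.const _),
          poissonMean_const]
    _ = _ := by simp only [← hsplit]; rfl

end CavityUpperBound

section PottsUpperBound

variable {q N : ℕ} [NeZero q] [NeZero N] {β c : ℝ}

lemma potts_p_add_pairEnergy_le (hβ : 0 ≤ β) (hc : 0 ≤ c) {p : SpinStruct q} (hp : IsWeight p.1)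
    (R : ℕ) [NeZero R] :
    N * potts.p q N β c + poissonMean (c * N / 2) (fun n ↦ 𝔼 r : Fin n ⊕ Fin n → Fin R,
        structureLog β (fun τ (_ : Unit) ↦ pairEnergy τ) (fun k ↦ r k) p) ≤
      poissonMean (c * N) fun n ↦ 𝔼 r : Fin n → Fin R, 𝔼 I : Fin n → Fin N,
        structureLog β (crossEnergy I) (fun k ↦ r k) p := by
  have hbonds := hp.poissonMean_sprinkle_bond_add_le (isWeight_one (Ω := Fin N → Fin q)) hβ
    (fun (i : Fin R) α ↦ p.2 α i) Function.eval (show 0 ≤ c * N by positivity)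
  rw [← natCast_mul_potts_p q hβ hc, add_comm] at hbonds
  simp only [sprinkle_bond_eq_expect_pairEnergy _ (logPartition p.1 β),
    sprinkle_bond_eq_expect_crossEnergy] at hbonds
  simp only [structureLog_unit]
  exact hbonds

lemma IsRSS.potts_p_le_G1_sub_G2 {L : Measure (SpinStruct q)} (hL : IsRSS q L) (hβ : 0 ≤ β)
    (hc : 0 ≤ c) : potts.p q N β c ≤ G1 q N β c L - G2 q N β c L := by
  have := hL.1
  have hpair := hL.isExchangeable_pairEnergy hβ
  have hcross := hL.isExchangeable_crossEnergy hβ (N := N)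
  have hcN : 0 ≤ c * N := by positivity
  have hcN2 : 0 ≤ c * N / 2 := by positivity
  have hN : (0 : ℝ) < N := Nat.cast_pos.2 (NeZero.pos N)
  suffices N * potts.p q N β c + N * G2 q N β c L ≤ N * G1 q N β c L from
    le_of_mul_le_mul_left (by linarith) hN
  rw [natCast_mul_G1 hL hβ hc, natCast_mul_G2 hL hβ hc]
  refine le_of_tendsto_of_tendsto
    ((IsExchangeable.tendsto_integral_poissonMean hpair hcN2 pairedSites_injective).const_add _)
    (IsExchangeable.tendsto_integral_poissonMean hcross hcN fun _ ↦ Fin.val_injective) ?_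
  filter_upwards [eventually_gt_atTop 0] with R hR
  have : NeZero R := ⟨hR.ne'⟩
  have hpairInt := IsExchangeable.integrable_poissonMean_expect hpair hcN2 R
  have hcrossInt := IsExchangeable.integrable_poissonMean_expect hcross hcN R
  have hmono := integral_mono_ae ((integrable_const (N * potts.p q N β c)).add hpairInt) hcrossInt
    (hL.ae_isWeight.mono fun p hp ↦ potts_p_add_pairEnergy_le hβ hc hp R)
  simpa only [Pi.add_apply, integral_add (integrable_const (N * potts.p q N β c)) hpairInt,
    integral_const, probReal_univ, one_smul] using hmono

end PottsUpperBound

section UniformSites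

variable (A : Type*) [MeasurableSpace A] [MeasurableSingletonClass A]

/-- The law of a sequence of independent, uniformly distributed sites of the finite set `A`. -/
noncomputable def uniformSites : Measure (ℕ → A) :=
  Measure.infinitePi fun _ ↦ ProbabilityTheory.uniformOn Set.univ

variable [Finite A] [Nonempty A]

instance : IsProbabilityMeasure (ProbabilityTheory.uniformOn (Set.univ : Set A)) :=
  ProbabilityTheory.isProbabilityMeasure_uniformOn Set.finite_univ Set.univ_nonempty

instance : IsProbabilityMeasure (uniformSites A) :=
  inferInstanceAs (IsProbabilityMeasure (Measure.infinitePi _))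

variable {A} {κ : Type*} {r : κ → ℕ}

lemma map_comp_uniformSites (hr : r.Injective) :
    (uniformSites A).map (fun i ↦ i ∘ r) =
      Measure.infinitePi fun _ : κ ↦ ProbabilityTheory.uniformOn Set.univ :=
  Measure.map_infinitePi_infinitePi_of_inj hr

lemma integral_uniformOn_univ {X : Type*} [Fintype X] [Nonempty X] [MeasurableSpace X]
    [MeasurableSingletonClass X] (g : X → ℝ) :
    ∫ x, g x ∂ProbabilityTheory.uniformOn (Set.univ : Set X) = 𝔼 x, g x := by
  rw [integral_fintype .of_finite, Fintype.expect_eq_sum_div_card, Finset.sum_div]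
  refine Finset.sum_congr rfl fun x _ ↦ ?_
  simp [measureReal_def, ProbabilityTheory.uniformOn_univ, div_eq_inv_mul]

lemma integral_comp_uniformSites {A : Type*} [Fintype A] [Nonempty A] [MeasurableSpace A]
    [MeasurableSingletonClass A] [Fintype κ] [DecidableEq κ] (hr : r.Injective)
    (g : (κ → A) → ℝ) :
    ∫ i, g (i ∘ r) ∂uniformSites A = 𝔼 x, g x := by
  have hmeas : Measurable fun i : ℕ → A ↦ i ∘ r :=
    measurable_pi_lambda _ fun k ↦ measurable_pi_apply (r k)
  rw [← integral_map hmeas.aemeasurable (measurable_of_finite g).aestronglyMeasurable,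
    map_comp_uniformSites hr, Measure.infinitePi_eq_pi, ← ProbabilityTheory.uniformOn_pi,
    Set.pi_univ, integral_uniformOn_univ]

end UniformSites

section Reservoir

lemma IsWeight.sum_pos {Ω : Type*} [Fintype Ω] {w : Ω → ℝ} (hw : IsWeight w) : 0 < ∑ ω, w ω := by
  simpa only [tsum_fintype] using hw.tsum_pos

lemma exists_antitone_enumeration {T : Type*} [Fintype T] {w : T → ℝ} (hw : IsWeight w) :
    ∃ (ξ : ℕ → ℝ) (t : ℕ → T), ((∀ n, 0 ≤ ξ n) ∧ Antitone ξ ∧ HasSum ξ 1) ∧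
      ∀ g : T → ℝ, ∑' α, ξ α * g (t α) = (∑ ω, w ω * g ω) / ∑ ω, w ω := by
  have hZ := hw.sum_pos
  have : Nonempty T := Finset.univ_nonempty_iff.1 (Finset.nonempty_of_sum_ne_zero hZ.ne')
  let e := (Fintype.equivFin T).symm
  let φ := (Tuple.sort fun k ↦ -w (e k)).trans e
  have hφ : Antitone (w ∘ φ) := fun a b hab ↦
    neg_le_neg_iff.1 (Tuple.monotone_sort (fun k ↦ -w (e k)) hab)
  let ξ (k : ℕ) : ℝ := if h : k < Fintype.card T then w (φ ⟨k, h⟩) / ∑ ω, w ω else 0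
  let t (k : ℕ) : T := if h : k < Fintype.card T then φ ⟨k, h⟩ else Classical.arbitrary T
  have hξ (k : ℕ) : 0 ≤ ξ k := by
    unfold ξ
    split_ifs
    exacts [div_nonneg (hw.nonneg _) hZ.le, le_rfl]
  have hsum (g : T → ℝ) : HasSum (fun α ↦ ξ α * g (t α)) ((∑ ω, w ω * g ω) / ∑ ω, w ω) := by
    have hrange : (∑ ω, w ω * g ω) / ∑ ω, w ω =
        ∑ k ∈ Finset.range (Fintype.card T), ξ k * g (t k) := by
      rw [← Fin.sum_univ_eq_sum_range fun k ↦ ξ k * g (t k), ← φ.sum_comp fun ω ↦ w ω * g ω,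
        Finset.sum_div]
      exact Finset.sum_congr rfl fun k _ ↦ by simp [ξ, t, div_mul_eq_mul_div]
    rw [hrange]
    exact hasSum_sum_of_ne_finset_zero fun k hk ↦ by simp [ξ, Finset.mem_range.not.1 hk]
  refine ⟨ξ, t, ⟨hξ, fun a b hab ↦ ?_, ?_⟩, fun g ↦ (hsum g).tsum_eq⟩
  · by_cases hb : b < Fintype.card T
    · simp only [ξ, hb, hab.trans_lt hb, dif_pos]
      exact div_le_div_of_nonneg_right (hφ hab) hZ.le
    · simpa only [ξ, hb, dif_neg, not_false_eq_true] using hξ a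
  · simpa [hZ.ne'] using hsum 1

variable {q : ℕ} {A : Type*} {ξ : ℕ → ℝ} {t : ℕ → A → Fin q} {w : (A → Fin q) → ℝ} {β : ℝ}

lemma structureLog_eq_logPartition_sub [Fintype A] [DecidableEq A] {κ X : Type*} [Finite X]
    [Nonempty X] (hw : IsWeight w) (hβ : 0 ≤ β) (hξ : IsWeight ξ)
    (ht : ∀ g : (A → Fin q) → ℝ, ∑' α, ξ α * g (t α) = (∑ ω, w ω * g ω) / ∑ ω, w ω)
    (f : (κ → Fin q) → X → ℕ) (r : κ → ℕ) (i : ℕ → A) :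
    structureLog β f r (ξ, fun α ↦ t α ∘ i) =
      logPartition (fun y : (A → Fin q) × X ↦ w y.1 * (1 : X → ℝ) y.2) β
        (fun y ↦ f (y.1 ∘ i ∘ r) y.2) - Real.log (∑ ω, w ω) := by
  cases nonempty_fintype X
  have hZ := hw.sum_pos
  have hsum : partitionFunction (fun y : (A → Fin q) × X ↦ w y.1 * (1 : X → ℝ) y.2) β
      (fun y ↦ f (y.1 ∘ i ∘ r) y.2) =
        ∑ ω, w ω * ∑ x, Real.exp (-β * f (ω ∘ i ∘ r) x) := by
    simp [partitionFunction, tsum_fintype, Fintype.sum_prod_type, Finset.mul_sum]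
  have hpos := (hw.prod (isWeight_one (Ω := X))).partitionFunction_pos hβ
    fun y ↦ f (y.1 ∘ i ∘ r) y.2
  rw [structureLog_eq_log_tsum_sum hβ hξ, logPartition, ← Real.log_div hpos.ne' hZ.ne', hsum]
  exact congrArg Real.log (ht fun ω ↦ ∑ x, Real.exp (-β * f (ω ∘ i ∘ r) x))

variable [MeasurableSpace A] [MeasurableSingletonClass A]

/-- The random spin structure whose replicas are the configurations `t α` of a finite system, with
weights `ξ α`, read off at independent uniform sites of the system. -/
noncomputable def reservoir (ξ : ℕ → ℝ) (t : ℕ → A → Fin q) : Measure (SpinStruct q) :=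
  (uniformSites A).map fun i ↦ (ξ, fun α ↦ t α ∘ i)

lemma measurable_reservoir [Finite A] (ξ : ℕ → ℝ) (t : ℕ → A → Fin q) :
    Measurable fun i : ℕ → A ↦ ((ξ, fun α ↦ t α ∘ i) : SpinStruct q) :=
  measurable_const.prodMk <| measurable_pi_lambda _ fun α ↦ measurable_pi_lambda _ fun k ↦
    (measurable_of_finite (t α)).comp (measurable_pi_apply k)

variable [Nonempty A]

lemma isRSS_reservoir [Finite A] (hξ : (∀ n, 0 ≤ ξ n) ∧ Antitone ξ ∧ HasSum ξ 1)
    (t : ℕ → A → Fin q) :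
    IsRSS q (reservoir ξ t) := by
  have hmeas := measurable_reservoir ξ t
  refine ⟨Measure.isProbabilityMeasure_map hmeas.aemeasurable, ?_, fun π _ ↦ ?_⟩
  · rw [reservoir, Measure.map_apply hmeas measurableSet_nonneg_antitone_hasSum_one]
    simp [hξ]
  · have hsites : Measurable fun i : ℕ → A ↦ i ∘ π :=
      measurable_pi_lambda _ fun k ↦ measurable_pi_apply (π k)
    have hinv : (uniformSites A).map (fun i ↦ i ∘ π) = uniformSites A :=
      map_comp_uniformSites π.injective
    conv_rhs => rw [reservoir, ← hinv, Measure.map_map hmeas hsites]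
    rw [reservoir, Measure.map_map (measurable_relabel_sites π) hmeas]
    rfl

lemma integral_structureLog_reservoir [Fintype A] [DecidableEq A] {κ X : Type*} [Finite X]
    [Nonempty X] [Fintype κ] [DecidableEq κ] (hw : IsWeight w) (hβ : 0 ≤ β)
    (hξ : (∀ n, 0 ≤ ξ n) ∧ Antitone ξ ∧ HasSum ξ 1)
    (ht : ∀ g : (A → Fin q) → ℝ, ∑' α, ξ α * g (t α) = (∑ ω, w ω * g ω) / ∑ ω, w ω)
    (f : (κ → Fin q) → X → ℕ) {r : κ → ℕ} (hr : r.Injective) :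
    ∫ p, structureLog β f r p ∂reservoir ξ t =
      (𝔼 x : κ → A, logPartition (fun y : (A → Fin q) × X ↦ w y.1 * (1 : X → ℝ) y.2) β
        fun y ↦ f (y.1 ∘ x) y.2) - Real.log (∑ ω, w ω) := by
  have hξw : IsWeight ξ := ⟨hξ.1, hξ.2.2.summable, hξ.2.2.tsum_eq ▸ one_pos⟩
  rw [reservoir, integral_map (measurable_reservoir ξ t).aemeasurable
    ((isRSS_reservoir hξ t).aestronglyMeasurable_structureLog hβ r)]
  simp only [structureLog_eq_logPartition_sub hw hβ hξw ht]
  rw [integral_comp_uniformSites hr fun x ↦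
    logPartition (fun y : (A → Fin q) × X ↦ w y.1 * (1 : X → ℝ) y.2) β
      (fun y ↦ f (y.1 ∘ x) y.2) - Real.log (∑ ω, w ω), Finset.expect_sub_distrib,
    Fintype.expect_const]

end Reservoir

section GibbsReservoir

/-- The spin at the site `a` of the first of two systems. -/
def fstSpin {A B S : Type*} (a : A) (x : (A → S) × (B → S)) : S := x.1 a

/-- The spin at the site `b` of the second of two systems. -/
def sndSpin {A B S : Type*} (b : B) (x : (A → S) × (B → S)) : S := x.2 b

variable {q M N : ℕ} [NeZero M] {β c : ℝ} {ξ : ℕ → ℝ}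
  {t : ℕ → Fin M → Fin q} {w : (Fin M → Fin q) → ℝ}

lemma integral_crossEnergy_reservoir [NeZero q] (hw : IsWeight w) (hβ : 0 ≤ β)
    (hξ : (∀ n, 0 ≤ ξ n) ∧ Antitone ξ ∧ HasSum ξ 1)
    (ht : ∀ g : (Fin M → Fin q) → ℝ, ∑' α, ξ α * g (t α) = (∑ ω, w ω * g ω) / ∑ ω, w ω)
    [NeZero N] (n : ℕ) :
    ∫ p, 𝔼 I : Fin n → Fin N, structureLog β (crossEnergy I) Fin.val p ∂reservoir ξ t =
      sprinkle (bond fstSpin sndSpin) n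
        (logPartition (fun x ↦ w x.1 * (1 : (Fin N → Fin q) → ℝ) x.2) β) 0 -
      Real.log (∑ ω, w ω) := by
  have hL := isRSS_reservoir hξ t
  have := hL.1
  rw [integral_expect fun I ↦ (hL.isExchangeable_structureLog hβ (n := n) fun τ σ ↦ by
    simpa using crossEnergy_le I τ σ).integrable _]
  simp only [integral_structureLog_reservoir hw hβ hξ ht _ Fin.val_injective]
  rw [Finset.expect_sub_distrib, Fintype.expect_const, Finset.expect_comm,
    sprinkle_bond_eq_expect_crossEnergy]
  rfl

lemma integral_pairEnergy_reservoir (hw : IsWeight w) (hβ : 0 ≤ β)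
    (hξ : (∀ n, 0 ≤ ξ n) ∧ Antitone ξ ∧ HasSum ξ 1)
    (ht : ∀ g : (Fin M → Fin q) → ℝ, ∑' α, ξ α * g (t α) = (∑ ω, w ω * g ω) / ∑ ω, w ω) (n : ℕ) :
    ∫ p, structureLog β (fun τ (_ : Unit) ↦ pairEnergy τ) (pairedSites n) p ∂reservoir ξ t =
      sprinkle (bond Function.eval Function.eval) n (logPartition w β) 0 -
      Real.log (∑ ω, w ω) := by
  rw [integral_structureLog_reservoir hw hβ hξ ht _ (pairedSites_injective n),
    sprinkle_bond_eq_expect_pairEnergy]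
  congr 1
  exact Finset.expect_congr rfl fun r _ ↦ logPartition_prod_unit w β fun ω ↦ pairEnergy (ω ∘ r)

variable [NeZero q] [NeZero N]

lemma exists_isRSS_natCast_mul_G1_sub_G2_eq (hw : IsWeight w) (hβ : 0 ≤ β) (hc : 0 ≤ c) :
    ∃ L, IsRSS q L ∧ N * (G1 q N β c L - G2 q N β c L) =
      poissonMean (c * N) (fun n ↦ sprinkle (bond fstSpin sndSpin) n
        (logPartition (fun x ↦ w x.1 * (1 : (Fin N → Fin q) → ℝ) x.2) β) 0) -
      poissonMean (c * N / 2) fun n ↦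
        sprinkle (bond Function.eval Function.eval) n (logPartition w β) 0 := by
  obtain ⟨ξ, t, hξ, ht⟩ := exists_antitone_enumeration hw
  have hL := isRSS_reservoir hξ t
  have hcross := (hw.prod (isWeight_one (Ω := Fin N → Fin q))).hasBoundedIncrements_logPartition hβ
    (bond_le_one fstSpin sndSpin)
  have hpair := hw.hasBoundedIncrements_logPartition hβ (bond_le_one Function.eval Function.eval)
  refine ⟨_, hL, ?_⟩
  rw [mul_sub, natCast_mul_G1 hL hβ hc, natCast_mul_G2 hL hβ hc,
    funext (integral_crossEnergy_reservoir hw hβ hξ ht),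
    funext (integral_pairEnergy_reservoir hw hβ hξ ht),
    poissonMean_sub (by positivity) (hcross.hasLinearGrowth_sprinkle 0) (.const _),
    poissonMean_sub (by positivity) (hpair.hasLinearGrowth_sprinkle 0) (.const _),
    poissonMean_const, poissonMean_const, sub_sub_sub_cancel_right]

-- The reservoir is the Gibbs state at energy `h` of a system of `M` sites.
lemma exists_isRSS_natCast_mul_G1_sub_G2_eq_of_energy (hβ : 0 ≤ β) (hc : 0 ≤ c)
    (h : (Fin M → Fin q) → ℕ) :
    ∃ L, IsRSS q L ∧ N * (G1 q N β c L - G2 q N β c L) =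
      poissonMean (c * N) (fun n ↦ sprinkle (bond fstSpin sndSpin) n
        (logPartition (1 : (Fin M → Fin q) × (Fin N → Fin q) → ℝ) β) (h ∘ Prod.fst)) -
      poissonMean (c * N / 2) fun n ↦
        sprinkle (bond Function.eval Function.eval) n (logPartition 1 β) h := by
  obtain ⟨L, hL, hG⟩ := exists_isRSS_natCast_mul_G1_sub_G2_eq (N := N) (c := c)
    (isWeight_one.mul_exp hβ h) hβ hc
  have hfst : (fun x : (Fin M → Fin q) × (Fin N → Fin q) ↦ (1 : (Fin M → Fin q) → ℝ) x.1 *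
      Real.exp (-β * h x.1) * (1 : (Fin N → Fin q) → ℝ) x.2) =
        fun x ↦ (1 : (Fin M → Fin q) × (Fin N → Fin q) → ℝ) x *
          Real.exp (-β * (h ∘ Prod.fst) x) := by simp
  refine ⟨L, hL, hG.trans ?_⟩
  simp only [hfst, sprinkle, zero_add, logPartition_mul_exp]

lemma sprinkle_fstSpin {A B S : Type*} [Fintype A] [DecidableEq S] (j : ℕ)
    (Φ : ((A → S) × (B → S) → ℕ) → ℝ) :
    sprinkle (bond fstSpin fstSpin) j Φ 0 =
      sprinkle (bond Function.eval Function.eval) j (fun h : (A → S) → ℕ ↦ Φ (h ∘ Prod.fst)) 0 :=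
  sprinkle_map (LinearMap.funLeft ℕ ℕ Prod.fst) (bond Function.eval Function.eval) j Φ 0

lemma add_poissonMean_sprinkle_le_of_le_G1_sub_G2 (hβ : 0 ≤ β) (hc : 0 ≤ c) {a : ℝ}
    (ha : ∀ L, IsRSS q L → a ≤ G1 q N β c L - G2 q N β c L) (j : ℕ) :
    N * a + poissonMean (c * N / 2) (fun n ↦
        sprinkle (bond Function.eval Function.eval : Fin M × Fin M → (Fin M → Fin q) → ℕ) (j + n)
          (logPartition 1 β) 0) ≤
      poissonMean (c * N) fun n ↦ sprinkle (bond fstSpin fstSpin) j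
        (sprinkle (bond fstSpin sndSpin) n
          (logPartition (1 : (Fin M → Fin q) × (Fin N → Fin q) → ℝ) β)) 0 := by
  have hcross := isWeight_one.hasBoundedIncrements_logPartition hβ
    (bond_le_one (fstSpin (A := Fin M) (B := Fin N) (S := Fin q)) sndSpin)
  have hpair := isWeight_one.hasBoundedIncrements_logPartition hβ
    (bond_le_one (Function.eval : Fin M → (Fin M → Fin q) → Fin q) Function.eval)
  have henergy (h : (Fin M → Fin q) → ℕ) :
      poissonMean (c * N / 2) (fun n ↦
          sprinkle (bond Function.eval Function.eval) n (logPartition 1 β) h) + N * a ≤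
        poissonMean (c * N) fun n ↦ sprinkle (bond fstSpin sndSpin) n
          (logPartition (1 : (Fin M → Fin q) × (Fin N → Fin q) → ℝ) β) (h ∘ Prod.fst) := by
    obtain ⟨L, hL, hG⟩ := exists_isRSS_natCast_mul_G1_sub_G2_eq_of_energy (N := N) hβ hc h
    linarith [mul_le_mul_of_nonneg_left (ha L hL) N.cast_nonneg]
  have hmean := sprinkle_mono (bond Function.eval Function.eval) j henergy 0
  rw [sprinkle_add_const, sprinkle_poissonMean (by positivity) hpair.hasLinearGrowth_sprinkle,
    sprinkle_poissonMean (by positivity) fun h ↦ hcross.hasLinearGrowth_sprinkle _] at hmean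
  simpa only [add_comm, sprinkle_add, sprinkle_fstSpin] using hmean

end GibbsReservoir

section CavityLowerBound

variable {q M N : ℕ} [NeZero q] [NeZero N] {β c : ℝ}

lemma natCast_add_mul_potts_p (hβ : 0 ≤ β) (hc : 0 ≤ c) :
    (M + N) * potts.p q (M + N) β c = poissonMean (c * (M + N) / 2) fun n ↦
      sprinkle (bond (Sum.elim fstSpin sndSpin) (Sum.elim fstSpin sndSpin)) n
        (logPartition (1 : (Fin M → Fin q) × (Fin N → Fin q) → ℝ) β) 0 := by
  have hspin (v : Fin M ⊕ Fin N) (x : (Fin M → Fin q) × (Fin N → Fin q)) :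
      Sum.elim fstSpin sndSpin v x = Fin.appendEquiv M N x (finSumFinEquiv v) := by
    cases v <;> simp [fstSpin, sndSpin]
  have hp := natCast_mul_potts_p (N := M + N) q hβ hc
  rw [Nat.cast_add] at hp
  simp only [hp, sprinkle_bond_equiv finSumFinEquiv (Fin.appendEquiv M N) hspin]

variable [NeZero M]

lemma potts_p_add_le_potts_p_add (hβ : 0 ≤ β) (hc : 0 ≤ c) (hNM : N ≤ M) {a : ℝ}
    (ha : ∀ L, IsRSS q L → a ≤ G1 q N β c L - G2 q N β c L) :
    M * potts.p q M β c + N * a ≤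
      (M + N) * potts.p q (M + N) β c + 2 * β * c * (N ^ 2 / (M + N)) := by
  have hNM' : (0 : ℝ) ≤ M - N := sub_nonneg.2 (Nat.cast_le.2 hNM)
  have hcMN : 0 ≤ c * (M - N) / 2 := by positivity
  have hpair := (isWeight_one.hasBoundedIncrements_logPartition hβ (bond_le_one
    (Function.eval : Fin M → (Fin M → Fin q) → Fin q) Function.eval)).hasLinearGrowth_sprinkle 0
  have hbonds := isWeight_one.hasBoundedIncrements_logPartition
    (Ω := (Fin M → Fin q) × (Fin N → Fin q)) hβ (bond_le_one fstSpin fstSpin)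
  have hcross := isWeight_one.hasBoundedIncrements_logPartition
    (Ω := (Fin M → Fin q) × (Fin N → Fin q)) hβ (bond_le_one fstSpin sndSpin)
  have hpairMean := hpair.comp_add.hasLinearGrowth_poissonMean (s := c * N / 2) (by positivity)
  have hmean := poissonMean_mono hcMN ((HasLinearGrowth.const (N * a)).add hpairMean)
    ((hbonds.hasLinearGrowth₂_sprinkle hcross 0).hasLinearGrowth_poissonMean (by positivity))
    (add_poissonMean_sprinkle_le_of_le_G1_sub_G2 hβ hc ha)
  rw [poissonMean_add hcMN (.const _) hpairMean, poissonMean_const,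
    poissonMean_poissonMean_comp_add hcMN (by positivity) hpair,
    show c * (M - N) / 2 + c * N / 2 = c * M / 2 by ring, ← natCast_mul_potts_p q hβ hc,
    add_comm] at hmean
  rw [natCast_add_mul_potts_p hβ hc]
  exact hmean.trans (isWeight_one.poissonMean_sprinkle_bond_le hβ hc fstSpin sndSpin
    (by simp) (by simp) (Nat.cast_le.2 hNM))

end CavityLowerBound

section AlmostSuperadditive

variable {x g : ℕ → ℝ} {s K B ε : ℝ} {M₁ N : ℕ}

lemma exists_mul_sub_le_mul (hN : 0 < N)
    (hx : ∀ M ≥ M₁, M * x M + N * s ≤ (M + N) * x (M + N)) :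
    ∃ C, ∀ m ≥ M₁, m * s - C ≤ m * x m := by
  refine ⟨∑ r ∈ Finset.range (M₁ + N), |r * s - r * x r|, fun m ↦ ?_⟩
  induction m using Nat.strong_induction_on with
  | _ m ih =>
    intro hm
    rcases lt_or_ge m (M₁ + N) with hlt | hge
    · have hterm := Finset.single_le_sum (f := fun r : ℕ ↦ |r * s - r * x r|)
        (fun _ _ ↦ abs_nonneg _) (Finset.mem_range.2 hlt)
      linarith [le_abs_self (m * s - m * x m)]
    · obtain ⟨M, rfl⟩ : ∃ M, m = M + N := ⟨m - N, by omega⟩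
      have hM := ih M (by omega) (by omega)
      have hstep := hx M (by omega)
      push_cast
      linarith

lemma eventually_sub_le_of_mul_add_mul_le (hN : 0 < N)
    (hx : ∀ M ≥ M₁, M * x M + N * s ≤ (M + N) * x (M + N)) (hε : 0 < ε) :
    ∀ᶠ m in atTop, s - ε ≤ x m := by
  obtain ⟨C, hC⟩ := exists_mul_sub_le_mul hN hx
  filter_upwards [eventually_ge_atTop M₁, eventually_gt_atTop 0,
    tendsto_natCast_atTop_atTop.eventually_ge_atTop (C / ε)] with m hm hm0 hCm
  rw [div_le_iff₀ hε] at hCm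
  exact le_of_mul_le_mul_left (by linarith [hC m hm]) (Nat.cast_pos.2 hm0 : (0 : ℝ) < m)

lemma eventually_sub_le_of_almost_superadditive (hN : 0 < N)
    (hgx : ∀ M ≥ N, M * x M + N * s ≤ (M + N) * x (M + N) + K * (N ^ 2 / (M + N)))
    (hε : 0 < ε) : ∀ᶠ m in atTop, s - ε ≤ x m := by
  obtain ⟨M₁, hM₁⟩ := exists_nat_ge (K * N / (ε / 2))
  have herror (M : ℕ) (hM : max N M₁ ≤ M) : K * (N ^ 2 / (M + N)) ≤ N * (ε / 2) := by
    have hKM : K * N / (ε / 2) ≤ M + N :=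
      (hM₁.trans (Nat.cast_le.2 (le_of_max_le_right hM))).trans (by simp)
    rw [div_le_iff₀ (by positivity)] at hKM
    rw [mul_div_assoc', div_le_iff₀ (by positivity)]
    linarith [mul_le_mul_of_nonneg_left hKM N.cast_nonneg]
  have hstep (M : ℕ) (hM : M ≥ max N M₁) : M * x M + N * (s - ε / 2) ≤ (M + N) * x (M + N) := by
    linarith [hgx M (le_of_max_le_left hM), herror M hM]
  filter_upwards [eventually_sub_le_of_mul_add_mul_le hN hstep (half_pos hε)] with m hm
  linarith

lemma exists_tendsto_of_almost_superadditive (hB : ∀ N > 0, x N ≤ B)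
    (hxg : ∀ N > 0, x N ≤ g N)
    (hgx : ∀ N > 0, ∀ M ≥ N,
      M * x M + N * g N ≤ (M + N) * x (M + N) + K * (N ^ 2 / (M + N))) :
    ∃ P, Tendsto x atTop (𝓝 P) ∧ Tendsto g atTop (𝓝 P) := by
  have hlower (N : ℕ) (hN : 0 < N) (ε : ℝ) (hε : 0 < ε) : ∀ᶠ m in atTop, g N - ε ≤ x m :=
    eventually_sub_le_of_almost_superadditive hN (hgx N hN) hε
  have hx_le (N : ℕ) (hN : 0 < N) : x N ≤ sSup (x '' Set.Ioi 0) :=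
    le_csSup ⟨B, Set.forall_mem_image.2 hB⟩ ⟨N, hN, rfl⟩
  have hg_le (N : ℕ) (hN : 0 < N) : g N ≤ sSup (x '' Set.Ioi 0) := by
    refine le_of_forall_pos_le_add fun ε hε ↦ ?_
    obtain ⟨m, hm, hm0⟩ := ((hlower N hN ε hε).and (eventually_gt_atTop 0)).exists
    linarith [hx_le m hm0]
  have hx : Tendsto x atTop (𝓝 (sSup (x '' Set.Ioi 0))) := by
    refine tendsto_order.2 ⟨fun a ha ↦ ?_, fun a ha ↦ ?_⟩
    · obtain ⟨_, ⟨N, hN, rfl⟩, haN⟩ :=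
        exists_lt_of_lt_csSup (Set.Nonempty.image x Set.nonempty_Ioi) ha
      filter_upwards [hlower N hN ((x N - a) / 2) (by linarith)] with m hm
      linarith [hxg N hN]
    · filter_upwards [eventually_gt_atTop 0] with m hm using (hx_le m hm).trans_lt ha
  refine ⟨_, hx, tendsto_of_tendsto_of_tendsto_of_le_of_le' hx tendsto_const_nhds ?_ ?_⟩
  · filter_upwards [eventually_gt_atTop 0] with N hN using hxg N hN
  · filter_upwards [eventually_gt_atTop 0] with N hN using hg_le N hN

end AlmostSuperadditive

section VariationalPrinciple

variable {q : ℕ} [NeZero q]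

lemma nonempty_isRSS : Nonempty {L : Measure (SpinStruct q) // IsRSS q L} :=
  have ⟨_, t, hξ, _⟩ := exists_antitone_enumeration (isWeight_one (Ω := Fin 1 → Fin q))
  ⟨⟨_, isRSS_reservoir hξ t⟩⟩

lemma bddBelow_range_G1_sub_G2 {N : ℕ} [NeZero N] {β c : ℝ} (hβ : 0 ≤ β) (hc : 0 ≤ c) :
    BddBelow (Set.range fun L : {L : Measure (SpinStruct q) // IsRSS q L} ↦
      G1 q N β c L.1 - G2 q N β c L.1) :=
  ⟨potts.p q N β c, Set.forall_mem_range.2 fun L ↦ L.2.potts_p_le_G1_sub_G2 hβ hc⟩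

end VariationalPrinciple

/-- the extended variational principle: `lim_N p_N(β,c)` exists and
equals `lim_N inf_{𝓛 ∈ 𝒮} (G_N^{(1)} - G_N^{(2)})`, the latter limit existing as
well. -/
theorem statement8 (q : ℕ) (hq : 2 ≤ q) (β c : ℝ) (hβ : 0 ≤ β) (hc : 0 ≤ c) :
    ∃ P : ℝ,
      Filter.Tendsto (fun N => potts.p q N β c) Filter.atTop (nhds P) ∧
      Filter.Tendsto (fun N =>
          ⨅ L : {L : Measure (SpinStruct q) // IsRSS q L},
            (G1 q N β c L.1 - G2 q N β c L.1))
        Filter.atTop (nhds P) := by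
  have : NeZero q := ⟨by omega⟩
  have := nonempty_isRSS (q := q)
  refine exists_tendsto_of_almost_superadditive (K := 2 * β * c) (B := Real.log q)
    (fun N hN ↦ ?_) (fun N hN ↦ ?_) fun N hN M hM ↦ ?_
  all_goals have : NeZero N := ⟨hN.ne'⟩
  · exact potts_p_le_log q hβ hc
  · exact le_ciInf fun L ↦ L.2.potts_p_le_G1_sub_G2 hβ hc
  · have : NeZero M := ⟨(hN.trans_le hM).ne'⟩
    exact potts_p_add_le_potts_p_add hβ hc hM fun L hL ↦
      ciInf_le (bddBelow_range_G1_sub_G2 hβ hc) (⟨L, hL⟩ : {L // IsRSS q L})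
end
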